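/- arXiv:1905.07983 — 5 statements merged into one kernel-verified Lean document; each statement's English description precedes it below -/
import Mathlib

section
/- Let N ≥ 1, a ≥ 0, b > 0, and set α = a+b−1 and β = b−1. For each κ > 0 let X̃_κ be a random vector with distribution μ̃_κ (the trigonometric β-Jacobi ensemble), let z_1 < ... < z_N be the ordered zeros of the Jacobi polynomial P_N^{(α,β)}, and let t* = ((1/2)arccos(z_1), ..., (1/2)arccos(z_N)). Then the N×N matrix S̃ with entries s̃_{j,j} = 4Σ_{l≠j}(1−z_j²)/(z_j−z_l)² + 2(a+b)(1+z_j)/(1−z_j) + 2b(1−z_j)/(1+z_j) and s̃_{i,j} = −4√((1−z_i²)(1−z_j²))/(z_i−z_j)² for i ≠ j is positive definite, and √κ·(X̃_κ − t*) converges in distribution as κ → ∞ to the centered N-dimensional normal distribution with covariance matrix S̃^{−1}. -/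
open MeasureTheory Filter Real Finset Topology

lemma jw_integrable (α β : ℝ) (hα : -1 < α) (hβ : -1 < β) (Q : Polynomial ℝ) :
    IntegrableOn (fun x : ℝ => Q.eval x * (1 - x) ^ α * (1 + x) ^ β) (Set.Ioo (-1 : ℝ) 1) := by
  have h1 : IntegrableOn (fun x : ℝ => (1 + x) ^ β) (Set.Ioo (-1 : ℝ) 1) := by
    have h := (intervalIntegral.intervalIntegrable_rpow' (a := 0) (b := 2) hβ).comp_add_left 1
    norm_num at h
    exact (intervalIntegrable_iff_integrableOn_Ioo_of_le (by norm_num)).1 h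
  have h2 : IntegrableOn (fun x : ℝ => (1 - x) ^ α) (Set.Ioo (-1 : ℝ) 1) := by
    have h := (intervalIntegral.intervalIntegrable_rpow' (a := 0) (b := 2) hα).comp_sub_left 1
    norm_num at h
    exact (intervalIntegrable_iff_integrableOn_Ioo_of_le (by norm_num)).1 h.symm
  obtain ⟨M, hM⟩ := (isCompact_Icc (a := (-1 : ℝ)) (b := 1)).exists_bound_of_continuousOn
    (f := fun x => Q.eval x) Q.continuous.continuousOn
  have hM0 : 0 ≤ M := (norm_nonneg _).trans (hM 0 (by norm_num))
  have aux : ∀ (γ y : ℝ), 1 ≤ y → y ≤ 2 → y ^ γ ≤ 1 + 2 ^ γ := by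
    intro γ y hy1 hy2
    rcases le_total 0 γ with h | h
    · have := Real.rpow_le_rpow (by linarith) hy2 h
      linarith
    · have := Real.rpow_le_one_of_one_le_of_nonpos hy1 h
      have := Real.rpow_nonneg (show (0:ℝ) ≤ 2 by norm_num) γ
      linarith
  refine Integrable.mono' (g := fun x => M * ((1 + 2 ^ α + 2 ^ β) * ((1 + x) ^ β + (1 - x) ^ α)))
    (((h1.add h2).const_mul _).const_mul _) ?_ ?_
  · apply Measurable.aestronglyMeasurable
    have := Q.continuous.measurable
    fun_prop
  · refine (ae_restrict_iff' measurableSet_Ioo).2 (Eventually.of_forall fun x hx => ?_)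
    have hx1 := hx.1
    have hx2 := hx.2
    have p1 : 0 ≤ (1 - x) ^ α := Real.rpow_nonneg (by linarith) _
    have p2 : 0 ≤ (1 + x) ^ β := Real.rpow_nonneg (by linarith) _
    have q1 : (0:ℝ) ≤ 2 ^ α := Real.rpow_nonneg (by norm_num) _
    have q2 : (0:ℝ) ≤ 2 ^ β := Real.rpow_nonneg (by norm_num) _
    rw [mul_assoc, norm_mul, Real.norm_of_nonneg (mul_nonneg p1 p2)]
    refine mul_le_mul (hM x ⟨hx1.le, hx2.le⟩) ?_ (mul_nonneg p1 p2) hM0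
    rcases le_total x 0 with h | h
    · have := aux α (1 - x) (by linarith) (by linarith)
      nlinarith [mul_le_mul_of_nonneg_right this p2, mul_nonneg q2 p2, mul_nonneg q1 p1,
        mul_nonneg q2 p1]
    · have := aux β (1 + x) (by linarith) (by linarith)
      nlinarith [mul_le_mul_of_nonneg_left this p1, mul_nonneg q1 p2, mul_nonneg q1 p1,
        mul_nonneg q2 p2]

lemma jw_sq_pos (α β : ℝ) (hα : -1 < α) (hβ : -1 < β) (Q : Polynomial ℝ) (hQ : Q ≠ 0) :
    0 < ∫ x in Set.Ioo (-1 : ℝ) 1, (Q * Q).eval x * (1 - x) ^ α * (1 + x) ^ β := by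
  have hsub : Set.Ioo (-1 : ℝ) 1 \ (Q.roots.toFinset : Set ℝ) ⊆
      Function.support (fun x : ℝ => (Q * Q).eval x * (1 - x) ^ α * (1 + x) ^ β) ∩ Set.Ioo (-1) 1 := by
    intro x hx
    refine ⟨?_, hx.1⟩
    have h0 : Q.eval x ≠ 0 := by
      intro h
      exact hx.2 (by simp [hQ, h])
    have h1 : 0 < (1 - x) ^ α := Real.rpow_pos_of_pos (by linarith [hx.1.2]) _
    have h2 : 0 < (1 + x) ^ β := Real.rpow_pos_of_pos (by linarith [hx.1.1]) _
    simp only [Function.mem_support, Polynomial.eval_mul]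
    positivity
  rw [setIntegral_pos_iff_support_of_nonneg_ae]
  · refine lt_of_lt_of_le ?_ (measure_mono hsub)
    rw [measure_sdiff_null (Set.Finite.measure_zero (Finset.finite_toSet _) _)]
    simp
  · refine (ae_restrict_iff' measurableSet_Ioo).2 (Eventually.of_forall fun x hx => ?_)
    have h1 : 0 ≤ (1 - x) ^ α := Real.rpow_nonneg (by linarith [hx.2]) _
    have h2 : 0 ≤ (1 + x) ^ β := Real.rpow_nonneg (by linarith [hx.1]) _
    simp only [Polynomial.eval_mul, Pi.zero_apply]
    have := mul_self_nonneg (Q.eval x)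
    positivity
  · exact jw_integrable α β hα hβ _

open Polynomial in
lemma jw_ibp (α β : ℝ) (hα : -1 < α) (hβ : -1 < β) (Q : Polynomial ℝ) :
    ∫ x in Set.Ioo (-1 : ℝ) 1, (Q * (2 * derivative Q * (1 - X ^ 2) +
      Q * (C (β + 1) * (1 - X) - C (α + 1) * (1 + X)))).eval x * (1 - x) ^ α * (1 + x) ^ β = 0 := by
  rw [← integral_Ioc_eq_integral_Ioo, ← intervalIntegral.integral_of_le (by norm_num)]
  rw [intervalIntegral.integral_eq_sub_of_hasDerivAt_of_le (by norm_num)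
    (f := fun x => Q.eval x ^ 2 * ((1 - x) ^ (α + 1) * (1 + x) ^ (β + 1)))]
  · have h1 : α + 1 ≠ 0 := by linarith
    have h2 : β + 1 ≠ 0 := by linarith
    simp [Real.zero_rpow h1, Real.zero_rpow h2]
  · apply Continuous.continuousOn
    have := Q.continuous
    have hc1 : Continuous fun x : ℝ => (1 - x) ^ (α + 1) :=
      (continuous_const.sub continuous_id).rpow_const fun x => Or.inr (by linarith)
    have hc2 : Continuous fun x : ℝ => (1 + x) ^ (β + 1) :=
      (continuous_const.add continuous_id).rpow_const fun x => Or.inr (by linarith)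
    fun_prop
  · intro x hx
    have p1 : 0 < 1 - x := by linarith [hx.2]
    have p2 : 0 < 1 + x := by linarith [hx.1]
    have d1 : HasDerivAt (fun x : ℝ => (1 - x) ^ (α + 1)) (-1 * (α + 1) * (1 - x) ^ (α + 1 - 1)) x :=
      ((hasDerivAt_id x).const_sub 1).rpow_const (Or.inl p1.ne')
    have d2 : HasDerivAt (fun x : ℝ => (1 + x) ^ (β + 1)) (1 * (β + 1) * (1 + x) ^ (β + 1 - 1)) x :=
      ((hasDerivAt_id x).const_add 1).rpow_const (Or.inl p2.ne')
    have := ((Q.hasDerivAt x).pow 2).mul (d1.mul d2)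
    refine this.congr_deriv ?_
    have e1 : (1 - x) ^ (α + 1) = (1 - x) ^ α * (1 - x) := Real.rpow_add_one p1.ne' _
    have e2 : (1 + x) ^ (β + 1) = (1 + x) ^ β * (1 + x) := Real.rpow_add_one p2.ne' _
    simp [e1, e2]
    ring
  · exact (intervalIntegrable_iff_integrableOn_Ioo_of_le (by norm_num)).2
      (jw_integrable α β hα hβ _)

open Polynomial in
lemma jacobi_stieltjes (N : ℕ) (a b : ℝ) (ha : 0 ≤ a) (hb : 0 < b) (hN : 1 ≤ N)
    (α β : ℝ) (hα : α = a + b - 1) (hβ : β = b - 1)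
    (P : Polynomial ℝ) (hPdeg : P.natDegree = N)
    (hPorth : ∀ Q : Polynomial ℝ, Q.natDegree < N →
      ∫ x in Set.Ioo (-1 : ℝ) 1,
        P.eval x * Q.eval x * (1 - x) ^ α * (1 + x) ^ β = 0)
    (z : Fin N → ℝ) (hzmono : StrictMono z)
    (hzroot : ∀ i, P.eval (z i) = 0) (i : Fin N) :
    2 * (1 - z i ^ 2) * ∑ j ∈ Finset.univ.erase i, 1 / (z i - z j) =
      (a + b) * (1 + z i) - b * (1 - z i) := by
  have hα1 : -1 < α := by linarith
  have hβ1 : -1 < β := by linarith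
  have hP0 : P ≠ 0 := by rintro rfl; simp at hPdeg; omega
  have hc0 : P.leadingCoeff ≠ 0 := by simpa using hP0
  have hPf : P = C P.leadingCoeff * ∏ j, (X - C (z j)) := by
    apply eq_leadingCoeff_mul_of_monic_of_dvd_of_natDegree_le
    · exact monic_prod_of_monic _ _ fun j _ => monic_X_sub_C _
    · apply Finset.prod_dvd_of_coprime
      · exact (pairwise_coprime_X_sub_C hzmono.injective).set_pairwise _
      · intro j _
        exact dvd_iff_isRoot.2 (hzroot j)
    · rw [natDegree_prod_of_monic _ _ fun j _ => monic_X_sub_C _]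
      simp [hPdeg]
  set c := P.leadingCoeff with hc
  set Q : Polynomial ℝ := ∏ j ∈ univ.erase i, (X - C (z j)) with hQ
  have hQm : Q.Monic := monic_prod_of_monic _ _ fun j _ => monic_X_sub_C _
  have hQdeg : Q.natDegree = N - 1 := by
    rw [hQ, natDegree_prod_of_monic _ _ fun j _ => monic_X_sub_C _]
    simp
  have hPQ : P = C c * ((X - C (z i)) * Q) := by
    rw [hQ, Finset.mul_prod_erase _ (fun j => X - C (z j)) (Finset.mem_univ i)]
    exact hPf
  set J : Polynomial ℝ → ℝ := fun R =>
    ∫ x in Set.Ioo (-1 : ℝ) 1, R.eval x * (1 - x) ^ α * (1 + x) ^ β with hJ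
  have hJadd : ∀ R T, J (R + T) = J R + J T := by
    intro R T
    simp only [hJ]
    rw [← integral_add (jw_integrable α β hα1 hβ1 R) (jw_integrable α β hα1 hβ1 T)]
    congr 1
    ext x
    simp
    ring
  have hJC : ∀ r R, J (C r * R) = r * J R := by
    intro r R
    simp only [hJ]
    rw [← integral_const_mul]
    congr 1
    ext x
    simp
    ring
  -- key
  have key : ∀ R : Polynomial ℝ, R.natDegree ≤ N → J (Q * R) = R.eval (z i) * J Q := by
    intro R hR
    have hdiv := modByMonic_add_div R (X - C (z i))
    rw [modByMonic_X_sub_C_eq_C_eval] at hdiv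
    have hd : (R /ₘ (X - C (z i))).natDegree < N := by
      rw [natDegree_divByMonic _ (monic_X_sub_C _)]
      simp
      omega
    have h0 := hPorth _ hd
    have h1 : J (P * (R /ₘ (X - C (z i)))) = 0 := by
      simpa [hJ] using h0
    have h2 : P * (R /ₘ (X - C (z i))) = C c * (Q * ((X - C (z i)) * (R /ₘ (X - C (z i))))) := by
      conv_lhs => rw [hPQ]
      ring
    rw [h2, hJC] at h1
    have h3 : J (Q * ((X - C (z i)) * (R /ₘ (X - C (z i))))) = 0 := by
      simpa [hc0] using h1
    conv_lhs => rw [← hdiv, mul_add, hJadd, h3, mul_comm, hJC, add_zero]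
  have hpos : 0 < J (Q * Q) := jw_sq_pos α β hα1 hβ1 Q hQm.ne_zero
  have hne : J Q ≠ 0 := by
    intro h
    rw [key Q (by omega), h] at hpos
    simp at hpos
  have hibp := jw_ibp α β hα1 hβ1 Q
  change J _ = 0 at hibp
  rw [key] at hibp
  · have h := (mul_eq_zero.1 hibp).resolve_right hne
    have hder : (derivative Q).eval (z i) = Q.eval (z i) * ∑ j ∈ univ.erase i, 1 / (z i - z j) := by
      rw [hQ, Polynomial.derivative_prod_finset, eval_finsetSum, Finset.mul_sum]
      refine Finset.sum_congr rfl fun j hj => ?_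
      have hji : z i - z j ≠ 0 := by
        rw [sub_ne_zero]
        exact fun h => (Finset.ne_of_mem_erase hj) (hzmono.injective h).symm
      rw [← Finset.mul_prod_erase _ _ hj]
      simp
      field_simp
    have hQz : Q.eval (z i) ≠ 0 := by
      rw [hQ, eval_prod, Finset.prod_ne_zero_iff]
      intro j hj
      simp only [eval_sub, eval_X, eval_C]
      rw [sub_ne_zero]
      exact fun h => (Finset.ne_of_mem_erase hj) (hzmono.injective h).symm
    simp only [eval_add, eval_mul, eval_sub, eval_one, eval_pow, eval_X, eval_C, hder,
      eval_ofNat] at h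
    apply mul_left_cancel₀ hQz
    subst hα hβ
    linear_combination h
  · refine (natDegree_add_le _ _).trans (max_le ?_ ?_)
    · rcases Nat.lt_or_ge 1 N with hN1 | hN1
      · have t1 : (derivative Q).natDegree ≤ N - 2 :=
          (natDegree_derivative_le Q).trans (by omega)
        have t2 : (1 - X ^ 2 : ℝ[X]).natDegree ≤ 2 := by compute_degree
        have t3 : (2 * derivative Q).natDegree ≤ N - 2 := by
          have : (2 : ℝ[X]) = C 2 := (map_ofNat C 2).symm
          rw [this]
          exact (natDegree_C_mul_le _ _).trans t1
        exact natDegree_mul_le.trans (by omega)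
      · have : Q.natDegree = 0 := by omega
        rw [derivative_of_natDegree_zero this]
        simp
    · have t2 : (C (β + 1) * (1 - X) - C (α + 1) * (1 + X) : ℝ[X]).natDegree ≤ 1 := by
        compute_degree
      exact natDegree_mul_le.trans (by omega)

lemma hasDerivAt_logsin {u : ℝ} (hu : u ∈ Set.Ioo 0 π) :
    HasDerivAt (fun u => Real.log (Real.sin u)) (Real.cos u / Real.sin u) u :=
  (Real.hasDerivAt_sin u).log (Real.sin_pos_of_mem_Ioo hu).ne'

lemma hasDerivAt_cot' {u : ℝ} (hu : u ∈ Set.Ioo 0 π) :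
    HasDerivAt (fun u => Real.cos u / Real.sin u) (-(1 / Real.sin u ^ 2)) u := by
  have hs := (Real.sin_pos_of_mem_Ioo hu).ne'
  refine ((Real.hasDerivAt_cos u).div (Real.hasDerivAt_sin u) hs).congr_deriv ?_
  rw [← Real.sin_sq_add_cos_sq u]
  field_simp
  ring

lemma logsin_le {u v : ℝ} (hu : u ∈ Set.Ioo 0 π) (hv : v ∈ Set.Ioo 0 π) :
    Real.log (Real.sin v) ≤ Real.log (Real.sin u) + Real.cos u / Real.sin u * (v - u)
      - (v - u) ^ 2 / 2 := by
  have hd : ∀ x ∈ Set.Ioo 0 π, HasDerivAt (fun x => Real.log (Real.sin x) + x ^ 2 / 2)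
      (Real.cos x / Real.sin x + x) x := by
    intro x hx
    have := (hasDerivAt_logsin hx).add ((hasDerivAt_pow 2 x).div_const 2)
    refine this.congr_deriv ?_
    simp
  have hconc : ConcaveOn ℝ (Set.Ioo 0 π) (fun x => Real.log (Real.sin x) + x ^ 2 / 2) := by
    refine concaveOn_of_hasDerivWithinAt2_nonpos (convex_Ioo _ _)
      (f' := fun x => Real.cos x / Real.sin x + x) (f'' := fun x => -(1 / Real.sin x ^ 2) + 1) ?_ ?_ ?_ ?_
    · intro x hx
      exact (hd x hx).continuousAt.continuousWithinAt
    · intro x hx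
      rw [interior_Ioo] at hx
      exact (hd x hx).hasDerivWithinAt
    · intro x hx
      rw [interior_Ioo] at hx
      exact ((hasDerivAt_cot' hx).add (hasDerivAt_id x)).hasDerivWithinAt
    · intro x hx
      rw [interior_Ioo] at hx
      have hs := Real.sin_pos_of_mem_Ioo hx
      have : 1 ≤ 1 / Real.sin x ^ 2 := by
        rw [le_div_iff₀ (by positivity)]
        nlinarith [Real.sin_sq_add_cos_sq x, sq_nonneg (Real.cos x)]
      linarith
  rcases lt_trichotomy u v with h | h | h
  · have := hconc.slope_le_of_hasDerivAt hu hv h (hd u hu)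
    rw [slope_def_field, div_le_iff₀ (by linarith)] at this
    nlinarith
  · subst h; simp
  · have := hconc.le_slope_of_hasDerivAt hv hu h (hd u hu)
    rw [slope_def_field, le_div_iff₀ (by linarith)] at this
    nlinarith

lemma logsin_taylor {u : ℝ} (hu : u ∈ Set.Ioo 0 π) (s : ℝ) :
    Tendsto (fun κ : ℝ => κ * (Real.log (Real.sin (u + (√κ)⁻¹ * s)) - Real.log (Real.sin u)
      - Real.cos u / Real.sin u * ((√κ)⁻¹ * s))) atTop (𝓝 (-(s ^ 2 / Real.sin u ^ 2) / 2)) := by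
  have h1 : (fun x => (Real.log (Real.sin x)
      - Real.cos u / Real.sin u * (x - u) + (x - u) ^ 2 * (1 / Real.sin u ^ 2) / 2)
       - (Real.log (Real.sin u)
      - Real.cos u / Real.sin u * (u - u) + (u - u) ^ 2 * (1 / Real.sin u ^ 2) / 2))
      =o[𝓝[Set.Ioo 0 π] u] fun x => (x - u) ^ 2 := by
    refine Convex.isLittleO_pow_succ_real (n := 1) (convex_Ioo _ _) hu
      (f' := fun x => Real.cos x / Real.sin x - Real.cos u / Real.sin u + (x - u) * (1 / Real.sin u ^ 2))
      (f := fun x => (Real.log (Real.sin x)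
      - Real.cos u / Real.sin u * (x - u) + (x - u) ^ 2 * (1 / Real.sin u ^ 2) / 2)) ?_ ?_
    · intro x hx
      apply HasDerivAt.hasDerivWithinAt
      have := ((hasDerivAt_logsin hx).sub (((hasDerivAt_id x).sub_const u).const_mul
        (Real.cos u / Real.sin u))).add
        (((((hasDerivAt_id x).sub_const u).pow 2).mul_const (1 / Real.sin u ^ 2)).div_const 2)
      refine this.congr_deriv ?_
      simp
      ring
    · have := (hasDerivAt_cot' hu).isLittleO
      refine (this.mono nhdsWithin_le_nhds).congr ?_ ?_
      · intro x; simp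
      · intro x; simp
  rw [isOpen_Ioo.nhdsWithin_eq hu] at h1
  have ht : Tendsto (fun κ : ℝ => u + (√κ)⁻¹ * s) atTop (𝓝 u) := by
    have : Tendsto (fun κ : ℝ => (√κ)⁻¹) atTop (𝓝 0) :=
      tendsto_inv_atTop_zero.comp tendsto_sqrt_atTop
    simpa using (this.mul_const s).const_add u
  have h2 := h1.comp_tendsto ht
  have h3 : (fun κ : ℝ => κ * (Real.log (Real.sin (u + (√κ)⁻¹ * s)) - Real.log (Real.sin u)
      - Real.cos u / Real.sin u * ((√κ)⁻¹ * s)) - (-(s ^ 2 / Real.sin u ^ 2) / 2)) =o[atTop]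
      (fun _ => s ^ 2) := by
    have h4 := (Asymptotics.isBigO_refl (fun κ : ℝ => κ) atTop).mul_isLittleO h2
    refine h4.congr' ?_ ?_
    · filter_upwards [eventually_gt_atTop 0] with κ hκ
      have e : ((√κ)⁻¹) ^ 2 = κ⁻¹ := by rw [inv_pow, Real.sq_sqrt hκ.le]
      simp only [Function.comp, add_sub_cancel_left, mul_pow, e]
      field_simp
      ring
    · filter_upwards [eventually_gt_atTop 0] with κ hκ
      have e : ((√κ)⁻¹) ^ 2 = κ⁻¹ := by rw [inv_pow, Real.sq_sqrt hκ.le]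
      simp only [Function.comp, add_sub_cancel_left, mul_pow, e]
      field_simp
  have h5 := h3.trans_isBigO (Asymptotics.isBigO_const_const (s ^ 2) (one_ne_zero (α := ℝ)) _)
  have h6 := (Asymptotics.isLittleO_one_iff ℝ).1 h5
  exact tendsto_sub_nhds_zero_iff.1 h6

open scoped MatrixOrder in
lemma gauss_norm (N : ℕ) (S : Matrix (Fin N) (Fin N) ℝ) (hS : S.PosDef) :
    ∫ x : Fin N → ℝ, Real.exp (-(∑ i, ∑ j, x i * S i j * x j) / 2) =
      ((2 * π) ^ (-(N : ℝ) / 2) * Real.sqrt S.det)⁻¹ := by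
  obtain ⟨A, hA⟩ := CStarAlgebra.nonneg_iff_eq_star_mul_self.mp hS.posSemidef.nonneg
  have hdet : S.det = A.det ^ 2 := by
    rw [hA, Matrix.det_mul, Matrix.star_eq_conjTranspose, Matrix.det_conjTranspose]
    simp [sq]
  have hA0 : A.det ≠ 0 := by
    intro h
    have := hS.det_pos
    rw [hdet, h] at this
    simp at this
  have hq : ∀ x : Fin N → ℝ, ∑ i, ∑ j, x i * S i j * x j = ∑ k, (Matrix.toLin' A x k) ^ 2 := by
    intro x
    have h1 : ∑ i, ∑ j, x i * S i j * x j = x ⬝ᵥ (S.mulVec x) := by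
      simp [dotProduct, Matrix.mulVec, Finset.mul_sum, mul_assoc]
    rw [h1, hA, ← Matrix.mulVec_mulVec, Matrix.dotProduct_mulVec, Matrix.star_eq_conjTranspose,
      Matrix.conjTranspose_eq_transpose_of_trivial, Matrix.vecMul_transpose]
    simp [dotProduct, sq]
  simp_rw [hq]
  have hmap := Real.map_matrix_volume_pi_eq_smul_volume_pi hA0
  have hint : ∫ x : Fin N → ℝ, Real.exp (-(∑ k, (Matrix.toLin' A x k) ^ 2) / 2) =
      ∫ y : Fin N → ℝ, Real.exp (-(∑ k, (y k) ^ 2) / 2)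
        ∂(Measure.map (⇑(Matrix.toLin' A)) volume) := by
    rw [integral_map]
    · exact (LinearMap.continuous_of_finiteDimensional _).measurable.aemeasurable
    · apply Continuous.aestronglyMeasurable
      fun_prop
  rw [hint, hmap, integral_smul_measure]
  have hg : ∫ y : Fin N → ℝ, Real.exp (-(∑ k, (y k) ^ 2) / 2) = √(2 * π) ^ N := by
    have : ∀ y : Fin N → ℝ, Real.exp (-(∑ k, (y k) ^ 2) / 2) = ∏ k, Real.exp (-(1/2) * (y k) ^ 2) := by
      intro y
      rw [← Real.exp_sum, ← Finset.mul_sum]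
      congr 1
      ring
    simp_rw [this]
    rw [integral_fintype_prod_volume_eq_prod (fun _ y => Real.exp (-(1/2) * y ^ 2))]
    simp only [integral_gaussian]
    simp
    ring_nf
  rw [hg, hdet, Real.sqrt_sq_eq_abs, ENNReal.toReal_ofReal (abs_nonneg _), abs_inv, mul_inv]
  have : ((2 * π) ^ (-(N : ℝ) / 2))⁻¹ = √(2 * π) ^ N := by
    rw [← Real.rpow_neg (by positivity), Real.sqrt_eq_rpow, ← Real.rpow_natCast,
      ← Real.rpow_mul (by positivity)]
    congr 1
    ring
  rw [this, smul_eq_mul, mul_comm]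

noncomputable def jU (N : ℕ) (a b : ℝ) (t : Fin N → ℝ) : ℝ :=
  (∑ p ∈ Finset.univ.filter (fun p : Fin N × Fin N => p.1 < p.2),
    (Real.log 2 + Real.log (Real.sin (t p.1 + t p.2)) + Real.log (Real.sin (t p.1 - t p.2)))) +
  ∑ i, (a * Real.log (Real.sin (t i)) + b * Real.log (Real.sin (2 * t i)))

noncomputable def jw (N : ℕ) (a b κ : ℝ) (t : Fin N → ℝ) : ℝ :=
  (∏ p ∈ Finset.univ.filter (fun p : Fin N × Fin N => p.1 < p.2),
        (Real.cos (2 * t p.2) - Real.cos (2 * t p.1)) ^ κ) *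
      ∏ i, (Real.sin (t i) ^ (κ * a) * Real.sin (2 * t i) ^ (κ * b))

lemma sinsin (u v : ℝ) :
    Real.sin (u + v) * Real.sin (u - v) = (Real.cos (2 * v) - Real.cos (2 * u)) / 2 := by
  rw [Real.sin_add, Real.sin_sub, Real.cos_two_mul, Real.cos_two_mul]
  have h1 := Real.sin_sq_add_cos_sq u
  have h2 := Real.sin_sq_add_cos_sq v
  linear_combination (Real.cos v) ^ 2 * h1 - (Real.cos u) ^ 2 * h2

lemma jint_mem {N : ℕ} {t : Fin N → ℝ} (ht : StrictAnti t)
    (h : ∀ i, t i ∈ Set.Ioo 0 (π / 2)) :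
    (∀ i, t i ∈ Set.Ioo 0 π) ∧ (∀ i, 2 * t i ∈ Set.Ioo 0 π) ∧
    (∀ i j, t i + t j ∈ Set.Ioo 0 π) ∧ (∀ i j, i < j → t i - t j ∈ Set.Ioo 0 π) := by
  have hpi := Real.pi_pos
  refine ⟨fun i => ?_, fun i => ?_, fun i j => ?_, fun i j hij => ?_⟩
  · have := h i; constructor <;> linarith [this.1, this.2]
  · have := h i; constructor <;> linarith [this.1, this.2]
  · have := h i; have := h j; constructor <;> linarith [(h i).1, (h i).2, (h j).1, (h j).2]
  · have := ht hij; constructor <;> linarith [(h i).1, (h i).2, (h j).1, (h j).2]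

lemma jw_eq {N : ℕ} (a b κ : ℝ) {t : Fin N → ℝ} (ht : StrictAnti t)
    (h : ∀ i, t i ∈ Set.Ioo 0 (π / 2)) : jw N a b κ t = Real.exp (κ * jU N a b t) := by
  obtain ⟨h1, h2, h3, h4⟩ := jint_mem ht h
  rw [jw, jU, mul_add, Real.exp_add, Finset.mul_sum, Finset.mul_sum, Real.exp_sum, Real.exp_sum]
  congr 1
  · refine Finset.prod_congr rfl fun p hp => ?_
    have hp' := (Finset.mem_filter.1 hp).2
    have s1 := Real.sin_pos_of_mem_Ioo (h3 p.1 p.2)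
    have s2 := Real.sin_pos_of_mem_Ioo (h4 p.1 p.2 hp')
    have e : Real.cos (2 * t p.2) - Real.cos (2 * t p.1) =
        2 * Real.sin (t p.1 + t p.2) * Real.sin (t p.1 - t p.2) := by
      rw [mul_assoc, sinsin]; ring
    rw [e, Real.rpow_def_of_pos (by positivity), Real.log_mul (by positivity) (by positivity),
      Real.log_mul (by positivity) (by positivity), mul_comm]
  · refine Finset.prod_congr rfl fun i _ => ?_
    have s1 := Real.sin_pos_of_mem_Ioo (h1 i)
    have s2 := Real.sin_pos_of_mem_Ioo (h2 i)
    rw [Real.rpow_def_of_pos s1, Real.rpow_def_of_pos s2, ← Real.exp_add]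
    congr 1
    ring

lemma jw_zero {N : ℕ} (a b κ : ℝ) (hb : 0 < b) (hκ : 0 < κ) {t : Fin N → ℝ} (ht : Antitone t)
    (h : ∀ i, t i ∈ Set.Icc 0 (π / 2))
    (hn : ¬ (StrictAnti t ∧ ∀ i, t i ∈ Set.Ioo 0 (π / 2))) : jw N a b κ t = 0 := by
  by_cases hs : ∀ i, t i ∈ Set.Ioo 0 (π / 2)
  · have hna : ¬ StrictAnti t := fun h => hn ⟨h, hs⟩
    have : ∃ i j, i < j ∧ t i = t j := by
      by_contra hc
      push Not at hc
      exact hna fun i j hij => lt_of_le_of_ne (ht hij.le) (hc i j hij).symm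
    obtain ⟨i, j, hij, e⟩ := this
    rw [jw, Finset.prod_eq_zero (i := (i, j)), zero_mul]
    · simp [hij]
    · simp [e, Real.zero_rpow hκ.ne']
  · push Not at hs
    obtain ⟨i, hi⟩ := hs
    have hi' : t i = 0 ∨ t i = π / 2 := by
      by_contra hc
      push Not at hc
      exact hi ⟨lt_of_le_of_ne (h i).1 hc.1.symm, lt_of_le_of_ne (h i).2 hc.2⟩
    have hz : Real.sin (2 * t i) = 0 := by
      rcases hi' with e | e
      · simp [e]
      · rw [e, mul_div_cancel₀ _ (by norm_num)]; simp
    rw [jw, Finset.prod_eq_zero (s := Finset.univ) (i := i) (Finset.mem_univ _), mul_zero]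
    rw [hz, Real.zero_rpow (by positivity), mul_zero]

lemma sum_pairs {N : ℕ} (G : Fin N → Fin N → ℝ) :
    ∑ p ∈ Finset.univ.filter (fun p : Fin N × Fin N => p.1 < p.2), (G p.1 p.2 + G p.2 p.1) =
      ∑ i, ∑ j ∈ Finset.univ.erase i, G i j := by
  rw [Finset.sum_add_distrib]
  have h2 : ∑ p ∈ Finset.univ.filter (fun p : Fin N × Fin N => p.1 < p.2), G p.2 p.1 =
      ∑ p ∈ Finset.univ.filter (fun p : Fin N × Fin N => p.2 < p.1), G p.1 p.2 := by
    refine Finset.sum_nbij' Prod.swap Prod.swap ?_ ?_ ?_ ?_ ?_ <;> simp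
  have h3 : ∀ i : Fin N, ∑ j ∈ Finset.univ.erase i, G i j =
      ∑ j, ((if i < j then G i j else 0) + (if j < i then G i j else 0)) := by
    intro i
    rw [← Finset.add_sum_erase _ _ (Finset.mem_univ i)]
    simp only [lt_irrefl, if_false, add_zero, zero_add]
    refine Finset.sum_congr rfl fun j hj => ?_
    rcases lt_or_gt_of_ne (Finset.ne_of_mem_erase hj) with h | h
    · simp [h, h.not_gt]
    · simp [h, h.not_gt]
  rw [h2, Finset.sum_filter, Finset.sum_filter, Fintype.sum_prod_type, Fintype.sum_prod_type,
    ← Finset.sum_add_distrib]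
  refine Finset.sum_congr rfl fun i _ => ?_
  rw [h3, Finset.sum_add_distrib]

lemma pair_grad (u v x y : ℝ) (hA : Real.sin (u + v) ≠ 0) (hB : Real.sin (u - v) ≠ 0) :
    Real.cos (u + v) / Real.sin (u + v) * (x + y) + Real.cos (u - v) / Real.sin (u - v) * (x - y) =
      x * (2 * Real.sin (2 * u) / (Real.cos (2 * v) - Real.cos (2 * u))) +
      y * (2 * Real.sin (2 * v) / (Real.cos (2 * u) - Real.cos (2 * v))) := by
  have h := sinsin u v
  have e1 : Real.cos (2 * v) - Real.cos (2 * u) = 2 * (Real.sin (u + v) * Real.sin (u - v)) := by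
    rw [h]; ring
  have e2 : Real.cos (2 * u) - Real.cos (2 * v) = -(2 * (Real.sin (u + v) * Real.sin (u - v))) := by
    rw [h]; ring
  have e3 : Real.sin (2 * u) = Real.sin (u + v) * Real.cos (u - v) + Real.cos (u + v) * Real.sin (u - v) := by
    rw [← Real.sin_add]; congr 1; ring
  have e4 : Real.sin (2 * v) = Real.sin (u + v) * Real.cos (u - v) - Real.cos (u + v) * Real.sin (u - v) := by
    rw [← Real.sin_sub]; congr 1; ring
  rw [e1, e2, e3, e4]
  field_simp
  ring

lemma pair_quad (u v x y : ℝ) (hA : Real.sin (u + v) ≠ 0) (hB : Real.sin (u - v) ≠ 0) :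
    (x + y) ^ 2 / Real.sin (u + v) ^ 2 + (x - y) ^ 2 / Real.sin (u - v) ^ 2 =
      (x ^ 2 * (4 * (1 - Real.cos (2 * u) * Real.cos (2 * v)) / (Real.cos (2 * u) - Real.cos (2 * v)) ^ 2)
        - 4 * x * y * (Real.sin (2 * u) * Real.sin (2 * v)) / (Real.cos (2 * u) - Real.cos (2 * v)) ^ 2) +
      (y ^ 2 * (4 * (1 - Real.cos (2 * v) * Real.cos (2 * u)) / (Real.cos (2 * v) - Real.cos (2 * u)) ^ 2)
        - 4 * y * x * (Real.sin (2 * v) * Real.sin (2 * u)) / (Real.cos (2 * v) - Real.cos (2 * u)) ^ 2) := by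
  have h := sinsin u v
  have e1 : Real.cos (2 * v) - Real.cos (2 * u) = 2 * (Real.sin (u + v) * Real.sin (u - v)) := by
    rw [h]; ring
  have e2 : Real.cos (2 * u) - Real.cos (2 * v) = -(2 * (Real.sin (u + v) * Real.sin (u - v))) := by
    rw [h]; ring
  have e3 : Real.sin (2 * u) = Real.sin (u + v) * Real.cos (u - v) + Real.cos (u + v) * Real.sin (u - v) := by
    rw [← Real.sin_add]; congr 1; ring
  have e4 : Real.sin (2 * v) = Real.sin (u + v) * Real.cos (u - v) - Real.cos (u + v) * Real.sin (u - v) := by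
    rw [← Real.sin_sub]; congr 1; ring
  have e5 : Real.sin (2 * u) * Real.sin (2 * v) = Real.sin (u + v) ^ 2 - Real.sin (u - v) ^ 2 := by
    rw [e3, e4]
    have h1 := Real.sin_sq_add_cos_sq (u + v)
    have h2 := Real.sin_sq_add_cos_sq (u - v)
    linear_combination (Real.sin (u + v)) ^ 2 * h2 - (Real.sin (u - v)) ^ 2 * h1
  have e6 : Real.cos (2 * u) * Real.cos (2 * v) = 1 - Real.sin (u + v) ^ 2 - Real.sin (u - v) ^ 2 := by
    have c1 : Real.cos (2 * u) = Real.cos (u + v) * Real.cos (u - v) - Real.sin (u + v) * Real.sin (u - v) := by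
      rw [← Real.cos_add]; congr 1; ring
    have c2 : Real.cos (2 * v) = Real.cos (u + v) * Real.cos (u - v) + Real.sin (u + v) * Real.sin (u - v) := by
      rw [← Real.cos_sub]; congr 1; ring
    rw [c1, c2]
    have h1 := Real.sin_sq_add_cos_sq (u + v)
    have h2 := Real.sin_sq_add_cos_sq (u - v)
    linear_combination (Real.cos (u + v)) ^ 2 * h2 + (1 - (Real.sin (u - v)) ^ 2) * h1
  rw [mul_comm (Real.cos (2 * v)), mul_comm (Real.sin (2 * v)), e5, e6, e1, e2]
  field_simp
  ring

lemma j_grad {N : ℕ} (a b : ℝ) (τ : Fin N → ℝ) (hτ : StrictAnti τ)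
    (h : ∀ i, τ i ∈ Set.Ioo 0 (π / 2))
    (hSt : ∀ i, 2 * (1 - Real.cos (2 * τ i) ^ 2) *
      ∑ j ∈ Finset.univ.erase i, 1 / (Real.cos (2 * τ i) - Real.cos (2 * τ j)) =
      (a + b) * (1 + Real.cos (2 * τ i)) - b * (1 - Real.cos (2 * τ i))) (x : Fin N → ℝ) :
    (∑ p ∈ Finset.univ.filter (fun p : Fin N × Fin N => p.1 < p.2),
      (Real.cos (τ p.1 + τ p.2) / Real.sin (τ p.1 + τ p.2) * (x p.1 + x p.2) +
        Real.cos (τ p.1 - τ p.2) / Real.sin (τ p.1 - τ p.2) * (x p.1 - x p.2))) +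
    ∑ i, (a * (Real.cos (τ i) / Real.sin (τ i) * x i) +
      b * (Real.cos (2 * τ i) / Real.sin (2 * τ i) * (2 * x i))) = 0 := by
  obtain ⟨h1, h2, h3, h4⟩ := jint_mem hτ h
  have e : ∑ p ∈ Finset.univ.filter (fun p : Fin N × Fin N => p.1 < p.2),
      (Real.cos (τ p.1 + τ p.2) / Real.sin (τ p.1 + τ p.2) * (x p.1 + x p.2) +
        Real.cos (τ p.1 - τ p.2) / Real.sin (τ p.1 - τ p.2) * (x p.1 - x p.2)) =
      ∑ i, ∑ j ∈ Finset.univ.erase i,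
        x i * (2 * Real.sin (2 * τ i) / (Real.cos (2 * τ j) - Real.cos (2 * τ i))) := by
    rw [← sum_pairs]
    refine Finset.sum_congr rfl fun p hp => ?_
    exact pair_grad _ _ _ _ (Real.sin_pos_of_mem_Ioo (h3 _ _)).ne'
      (Real.sin_pos_of_mem_Ioo (h4 _ _ (Finset.mem_filter.1 hp).2)).ne'
  rw [e, ← Finset.sum_add_distrib]
  refine Finset.sum_eq_zero fun i _ => ?_
  have s1 := (Real.sin_pos_of_mem_Ioo (h1 i)).ne'
  have s2 := (Real.sin_pos_of_mem_Ioo (h2 i)).ne'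
  have c1 : Real.cos (τ i) / Real.sin (τ i) = (1 + Real.cos (2 * τ i)) / Real.sin (2 * τ i) := by
    rw [div_eq_div_iff s1 s2, Real.sin_two_mul, Real.cos_two_mul]
    ring
  have c2 : ∑ j ∈ Finset.univ.erase i,
        x i * (2 * Real.sin (2 * τ i) / (Real.cos (2 * τ j) - Real.cos (2 * τ i))) =
      - (x i * (2 * Real.sin (2 * τ i))) *
        ∑ j ∈ Finset.univ.erase i, 1 / (Real.cos (2 * τ i) - Real.cos (2 * τ j)) := by
    rw [Finset.mul_sum]
    refine Finset.sum_congr rfl fun j _ => ?_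
    rw [← neg_sub (Real.cos (2 * τ i)), div_neg]
    ring
  rw [c1, c2]
  have hs := Real.sin_sq (2 * τ i)
  have hS := hSt i
  rw [← hs] at hS
  generalize ∑ j ∈ Finset.univ.erase i, 1 / (Real.cos (2 * τ i) - Real.cos (2 * τ j)) = T at *
  field_simp
  linear_combination -(x i) * hS

lemma j_quad {N : ℕ} (a b : ℝ) (τ : Fin N → ℝ) (hτ : StrictAnti τ)
    (h : ∀ i, τ i ∈ Set.Ioo 0 (π / 2))
    (hSt : ∀ i, 2 * (1 - Real.cos (2 * τ i) ^ 2) *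
      ∑ j ∈ Finset.univ.erase i, 1 / (Real.cos (2 * τ i) - Real.cos (2 * τ j)) =
      (a + b) * (1 + Real.cos (2 * τ i)) - b * (1 - Real.cos (2 * τ i)))
    (z : Fin N → ℝ) (hz : ∀ i, z i = Real.cos (2 * τ i))
    (S : Matrix (Fin N) (Fin N) ℝ)
    (hS : S = Matrix.of fun i j =>
      if i = j then
        4 * (∑ l ∈ Finset.univ.erase j, (1 - z j ^ 2) / (z j - z l) ^ 2) +
          2 * (a + b) * ((1 + z j) / (1 - z j)) + 2 * b * ((1 - z j) / (1 + z j))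
      else -4 * Real.sqrt ((1 - z i ^ 2) * (1 - z j ^ 2)) / (z i - z j) ^ 2) (x : Fin N → ℝ) :
    (∑ p ∈ Finset.univ.filter (fun p : Fin N × Fin N => p.1 < p.2),
      ((x p.1 + x p.2) ^ 2 / Real.sin (τ p.1 + τ p.2) ^ 2 +
        (x p.1 - x p.2) ^ 2 / Real.sin (τ p.1 - τ p.2) ^ 2)) +
    ∑ i, (a * (x i ^ 2 / Real.sin (τ i) ^ 2) +
      b * ((2 * x i) ^ 2 / Real.sin (2 * τ i) ^ 2)) = ∑ i, ∑ j, x i * S i j * x j := by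
  obtain ⟨h1, h2, h3, h4⟩ := jint_mem hτ h
  have hzi : ∀ i j, i ≠ j → z i - z j ≠ 0 := by
    intro i j hij h0
    rw [hz, hz, sub_eq_zero] at h0
    have := Real.injOn_cos (Set.Ioo_subset_Icc_self (h2 i)) (Set.Ioo_subset_Icc_self (h2 j)) h0
    exact hij (hτ.injective (by linarith))
  have e : ∑ p ∈ Finset.univ.filter (fun p : Fin N × Fin N => p.1 < p.2),
      ((x p.1 + x p.2) ^ 2 / Real.sin (τ p.1 + τ p.2) ^ 2 +
        (x p.1 - x p.2) ^ 2 / Real.sin (τ p.1 - τ p.2) ^ 2) =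
      ∑ i, ∑ j ∈ Finset.univ.erase i,
        (x i ^ 2 * (4 * (1 - z i * z j) / (z i - z j) ^ 2)
        - 4 * x i * x j * (Real.sin (2 * τ i) * Real.sin (2 * τ j)) / (z i - z j) ^ 2) := by
    rw [← sum_pairs]
    refine Finset.sum_congr rfl fun p hp => ?_
    simp only [hz]
    exact pair_quad _ _ _ _ (Real.sin_pos_of_mem_Ioo (h3 _ _)).ne'
      (Real.sin_pos_of_mem_Ioo (h4 _ _ (Finset.mem_filter.1 hp).2)).ne'
  rw [e, ← Finset.sum_add_distrib]
  refine Finset.sum_congr rfl fun i _ => ?_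
  have s1 := (Real.sin_pos_of_mem_Ioo (h1 i))
  have s2 := (Real.sin_pos_of_mem_Ioo (h2 i))
  have hs : Real.sin (2 * τ i) ^ 2 = 1 - z i ^ 2 := by rw [hz]; exact Real.sin_sq _
  have hs1 : Real.sin (τ i) ^ 2 = (1 - z i) / 2 := by
    rw [hz, Real.cos_two_mul]
    linarith [Real.sin_sq (τ i)]
  have p1 : 0 < 1 - z i := by nlinarith
  have p2 : 0 < 1 + z i := by nlinarith
  rw [← Finset.add_sum_erase _ _ (Finset.mem_univ i), Finset.sum_sub_distrib]
  have c1 : ∑ j ∈ Finset.univ.erase i, x i * S i j * x j =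
      - ∑ j ∈ Finset.univ.erase i, 4 * x i * x j * (Real.sin (2 * τ i) * Real.sin (2 * τ j)) / (z i - z j) ^ 2 := by
    rw [← Finset.sum_neg_distrib]
    refine Finset.sum_congr rfl fun j hj => ?_
    have hij : i ≠ j := (Finset.ne_of_mem_erase hj).symm
    have hsq : Real.sqrt ((1 - z i ^ 2) * (1 - z j ^ 2)) = Real.sin (2 * τ i) * Real.sin (2 * τ j) := by
      have := Real.sin_pos_of_mem_Ioo (h2 j)
      rw [hz, hz, ← Real.sin_sq, ← Real.sin_sq, ← mul_pow, Real.sqrt_sq (by positivity)]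
    rw [hS]
    simp only [Matrix.of_apply, if_neg hij, hsq]
    ring
  have c2 : ∑ j ∈ Finset.univ.erase i, x i ^ 2 * (4 * (1 - z i * z j) / (z i - z j) ^ 2) =
      x i ^ 2 * (4 * (∑ l ∈ Finset.univ.erase i, (1 - z i ^ 2) / (z i - z l) ^ 2)) +
       x i ^ 2 * 4 * z i * ∑ j ∈ Finset.univ.erase i, 1 / (z i - z j) := by
    rw [Finset.mul_sum, Finset.mul_sum, Finset.mul_sum, ← Finset.sum_add_distrib]
    refine Finset.sum_congr rfl fun j hj => ?_
    have hij := hzi i j (Finset.ne_of_mem_erase hj).symm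
    field_simp
    ring
  rw [c1, c2, hs, hs1]
  have hS' := hSt i
  simp only [← hz] at hS'
  have hSii : S i i = 4 * (∑ l ∈ Finset.univ.erase i, (1 - z i ^ 2) / (z i - z l) ^ 2) +
          2 * (a + b) * ((1 + z i) / (1 - z i)) + 2 * b * ((1 - z i) / (1 + z i)) := by
    rw [hS]; simp
  rw [hSii]
  have hf : 1 - z i ^ 2 = (1 - z i) * (1 + z i) := by ring
  have hT : ∑ j ∈ Finset.univ.erase i, 1 / (z i - z j) =
      ((a + b) * (1 + z i) - b * (1 - z i)) / (2 * ((1 - z i) * (1 + z i))) := by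
    rw [eq_div_iff (by positivity)]
    rw [hf] at hS'
    linarith
  rw [hT]
  have hgoal : x i ^ 2 * 4 * z i * (((a + b) * (1 + z i) - b * (1 - z i)) / (2 * ((1 - z i) * (1 + z i))))
      + (a * (x i ^ 2 / ((1 - z i) / 2)) + b * ((2 * x i) ^ 2 / (1 - z i ^ 2))) =
      x i * (2 * (a + b) * ((1 + z i) / (1 - z i)) + 2 * b * ((1 - z i) / (1 + z i))) * x i := by
    rw [hf]
    field_simp
    ring
  linear_combination hgoal

lemma jU_le {N : ℕ} (a b : ℝ) (ha : 0 ≤ a) (hb : 0 < b) (τ : Fin N → ℝ) (hτ : StrictAnti τ)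
    (h : ∀ i, τ i ∈ Set.Ioo 0 (π / 2))
    (hSt : ∀ i, 2 * (1 - Real.cos (2 * τ i) ^ 2) *
      ∑ j ∈ Finset.univ.erase i, 1 / (Real.cos (2 * τ i) - Real.cos (2 * τ j)) =
      (a + b) * (1 + Real.cos (2 * τ i)) - b * (1 - Real.cos (2 * τ i)))
    (x : Fin N → ℝ) (ht : StrictAnti (τ + x))
    (h' : ∀ i, (τ + x) i ∈ Set.Ioo 0 (π / 2)) :
    jU N a b (τ + x) - jU N a b τ ≤ - ∑ i, 2 * b * x i ^ 2 := by
  obtain ⟨h1, h2, h3, h4⟩ := jint_mem hτ h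
  obtain ⟨g1, g2, g3, g4⟩ := jint_mem ht h'
  have hg := j_grad a b τ hτ h hSt x
  simp only [jU]
  rw [add_sub_add_comm, ← Finset.sum_sub_distrib, ← Finset.sum_sub_distrib]
  have A : ∑ p ∈ Finset.univ.filter (fun p : Fin N × Fin N => p.1 < p.2),
      ((Real.log 2 + Real.log (Real.sin ((τ + x) p.1 + (τ + x) p.2)) + Real.log (Real.sin ((τ + x) p.1 - (τ + x) p.2))) -
       (Real.log 2 + Real.log (Real.sin (τ p.1 + τ p.2)) + Real.log (Real.sin (τ p.1 - τ p.2)))) ≤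
      ∑ p ∈ Finset.univ.filter (fun p : Fin N × Fin N => p.1 < p.2),
      (Real.cos (τ p.1 + τ p.2) / Real.sin (τ p.1 + τ p.2) * (x p.1 + x p.2) +
        Real.cos (τ p.1 - τ p.2) / Real.sin (τ p.1 - τ p.2) * (x p.1 - x p.2)) := by
    refine Finset.sum_le_sum fun p hp => ?_
    have hp' := (Finset.mem_filter.1 hp).2
    have i1 := logsin_le (h3 p.1 p.2) (g3 p.1 p.2)
    have i2 := logsin_le (h4 p.1 p.2 hp') (g4 p.1 p.2 hp')
    have r1 : (τ + x) p.1 + (τ + x) p.2 - (τ p.1 + τ p.2) = x p.1 + x p.2 := by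
      simp only [Pi.add_apply]; ring
    have r2 : (τ + x) p.1 - (τ + x) p.2 - (τ p.1 - τ p.2) = x p.1 - x p.2 := by
      simp only [Pi.add_apply]; ring
    rw [r1] at i1
    rw [r2] at i2
    linarith [sq_nonneg (x p.1 + x p.2), sq_nonneg (x p.1 - x p.2)]
  have B : ∑ i, ((a * Real.log (Real.sin ((τ + x) i)) + b * Real.log (Real.sin (2 * (τ + x) i))) -
      (a * Real.log (Real.sin (τ i)) + b * Real.log (Real.sin (2 * τ i)))) ≤
      ∑ i, (a * (Real.cos (τ i) / Real.sin (τ i) * x i) +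
      b * (Real.cos (2 * τ i) / Real.sin (2 * τ i) * (2 * x i))) + - ∑ i, 2 * b * x i ^ 2 := by
    rw [← Finset.sum_neg_distrib, ← Finset.sum_add_distrib]
    refine Finset.sum_le_sum fun i _ => ?_
    have i1 := logsin_le (h1 i) (g1 i)
    have i2 := logsin_le (h2 i) (g2 i)
    have r1 : (τ + x) i - τ i = x i := by simp
    have r2 : 2 * (τ + x) i - 2 * τ i = 2 * x i := by simp only [Pi.add_apply]; ring
    rw [r1] at i1
    rw [r2] at i2
    have i1' := mul_le_mul_of_nonneg_left i1 ha
    have i2' := mul_le_mul_of_nonneg_left i2 hb.le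
    nlinarith [mul_nonneg ha (sq_nonneg (x i))]
  linarith

lemma jU_tendsto {N : ℕ} (a b : ℝ) (τ : Fin N → ℝ) (hτ : StrictAnti τ)
    (h : ∀ i, τ i ∈ Set.Ioo 0 (π / 2))
    (hSt : ∀ i, 2 * (1 - Real.cos (2 * τ i) ^ 2) *
      ∑ j ∈ Finset.univ.erase i, 1 / (Real.cos (2 * τ i) - Real.cos (2 * τ j)) =
      (a + b) * (1 + Real.cos (2 * τ i)) - b * (1 - Real.cos (2 * τ i)))
    (x : Fin N → ℝ) :
    Tendsto (fun κ : ℝ => κ * (jU N a b (τ + (√κ)⁻¹ • x) - jU N a b τ)) atTop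
      (𝓝 (-((∑ p ∈ Finset.univ.filter (fun p : Fin N × Fin N => p.1 < p.2),
      ((x p.1 + x p.2) ^ 2 / Real.sin (τ p.1 + τ p.2) ^ 2 +
        (x p.1 - x p.2) ^ 2 / Real.sin (τ p.1 - τ p.2) ^ 2)) +
    ∑ i, (a * (x i ^ 2 / Real.sin (τ i) ^ 2) +
      b * ((2 * x i) ^ 2 / Real.sin (2 * τ i) ^ 2))) / 2)) := by
  obtain ⟨h1, h2, h3, h4⟩ := jint_mem hτ h
  have A := tendsto_finsetSum (Finset.univ.filter (fun p : Fin N × Fin N => p.1 < p.2))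
    (fun p hp => (logsin_taylor (h3 p.1 p.2) (x p.1 + x p.2)).add
      (logsin_taylor (h4 p.1 p.2 (Finset.mem_filter.1 hp).2) (x p.1 - x p.2)))
  have B := tendsto_finsetSum (Finset.univ : Finset (Fin N))
    (fun i _ => ((logsin_taylor (h1 i) (x i)).const_mul a).add
      ((logsin_taylor (h2 i) (2 * x i)).const_mul b))
  refine ((A.add B).congr ?_).trans_eq ?_
  · intro κ
    have hg := j_grad a b τ hτ h hSt ((√κ)⁻¹ • x)
    rw [← sub_zero (jU N a b (τ + (√κ)⁻¹ • x) - jU N a b τ), ← hg]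
    simp only [jU]
    rw [add_sub_add_comm, add_sub_add_comm, ← Finset.sum_sub_distrib, ← Finset.sum_sub_distrib,
      ← Finset.sum_sub_distrib, ← Finset.sum_sub_distrib, mul_add, Finset.mul_sum, Finset.mul_sum]
    congr 1
    · refine Finset.sum_congr rfl fun p _ => ?_
      have r1 : (τ + (√κ)⁻¹ • x) p.1 + (τ + (√κ)⁻¹ • x) p.2 =
        τ p.1 + τ p.2 + (√κ)⁻¹ * (x p.1 + x p.2) := by
        simp only [Pi.add_apply, Pi.smul_apply, smul_eq_mul]; ring
      have r2 : (τ + (√κ)⁻¹ • x) p.1 - (τ + (√κ)⁻¹ • x) p.2 =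
        τ p.1 - τ p.2 + (√κ)⁻¹ * (x p.1 - x p.2) := by
        simp only [Pi.add_apply, Pi.smul_apply, smul_eq_mul]; ring
      rw [r1, r2]
      simp only [Pi.smul_apply, smul_eq_mul]
      ring
    · refine Finset.sum_congr rfl fun i _ => ?_
      have r1 : (τ + (√κ)⁻¹ • x) i = τ i + (√κ)⁻¹ * x i := by
        simp only [Pi.add_apply, Pi.smul_apply, smul_eq_mul]
      have r2 : 2 * (τ i + (√κ)⁻¹ * x i) = 2 * τ i + (√κ)⁻¹ * (2 * x i) := by ring
      rw [r1, r2]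
      simp only [Pi.smul_apply, smul_eq_mul]
      ring
  · congr 1
    rw [neg_div, add_div, Finset.sum_div, Finset.sum_div, neg_add, ← Finset.sum_neg_distrib,
      ← Finset.sum_neg_distrib]
    congr 1
    · refine Finset.sum_congr rfl fun p _ => ?_
      ring
    · refine Finset.sum_congr rfl fun p _ => ?_
      ring

theorem trig_jacobi_ensemble_clt
    (N : ℕ) (hN : 1 ≤ N) (a b : ℝ) (ha : 0 ≤ a) (hb : 0 < b)
    (α β : ℝ) (hα : α = a + b - 1) (hβ : β = b - 1)
    (P : Polynomial ℝ) (hPdeg : P.natDegree = N)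
    (hPorth : ∀ Q : Polynomial ℝ, Q.natDegree < N →
      ∫ x in Set.Ioo (-1 : ℝ) 1,
        P.eval x * Q.eval x * (1 - x) ^ α * (1 + x) ^ β = 0)
    (hPone : P.eval 1 = (∏ j ∈ Finset.range N, (α + 1 + j)) / (N.factorial : ℝ))
    (z : Fin N → ℝ) (hzmono : StrictMono z)
    (hzroot : ∀ i, P.eval (z i) = 0)
    (hzmem : ∀ i, z i ∈ Set.Ioo (-1 : ℝ) 1)
    (At : Set (Fin N → ℝ))
    (hAt : At = {t | Antitone t ∧ ∀ i, t i ∈ Set.Icc (0 : ℝ) (π / 2)})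
    (w : ℝ → (Fin N → ℝ) → ℝ)
    (hw : w = fun κ t =>
      (∏ p ∈ Finset.univ.filter (fun p : Fin N × Fin N => p.1 < p.2),
        (Real.cos (2 * t p.2) - Real.cos (2 * t p.1)) ^ κ) *
      ∏ i, (Real.sin (t i) ^ (κ * a) * Real.sin (2 * t i) ^ (κ * b)))
    (S : Matrix (Fin N) (Fin N) ℝ)
    (hS : S = Matrix.of fun i j =>
      if i = j then
        4 * (∑ l ∈ Finset.univ.erase j, (1 - z j ^ 2) / (z j - z l) ^ 2) +
          2 * (a + b) * ((1 + z j) / (1 - z j)) + 2 * b * ((1 - z j) / (1 + z j))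
      else -4 * Real.sqrt ((1 - z i ^ 2) * (1 - z j ^ 2)) / (z i - z j) ^ 2)
    : S.PosDef ∧
      ∀ f : BoundedContinuousFunction (Fin N → ℝ) ℝ,
        Tendsto (fun κ : ℝ =>
            (∫ t in At, f (Real.sqrt κ • (t - fun i => Real.arccos (z i) / 2)) * w κ t) /
              (∫ t in At, w κ t))
          atTop
          (𝓝 (∫ x : Fin N → ℝ, f x *
            ((2 * π) ^ (-(N : ℝ) / 2) * Real.sqrt S.det *
              Real.exp (-(∑ i, ∑ j, x i * S i j * x j) / 2)))) := by
  have hpi := Real.pi_pos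
  have hwj : w = jw N a b := by rw [hw]; rfl
  have hSt0 := jacobi_stieltjes N a b ha hb hN α β hα hβ P hPdeg hPorth z hzmono hzroot
  set τ : Fin N → ℝ := fun i => Real.arccos (z i) / 2 with hτdef
  have hz : ∀ i, z i = Real.cos (2 * τ i) := by
    intro i
    rw [hτdef]
    simp only
    rw [mul_div_cancel₀ _ (by norm_num), Real.cos_arccos (hzmem i).1.le (hzmem i).2.le]
  have hτ : StrictAnti τ := by
    intro i j hij
    have := Real.strictAntiOn_arccos (Set.Ioo_subset_Icc_self (hzmem i))
      (Set.Ioo_subset_Icc_self (hzmem j)) (hzmono hij)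
    simp only [hτdef]
    linarith
  have hτm : ∀ i, τ i ∈ Set.Ioo 0 (π / 2) := by
    intro i
    have h1 : 0 < Real.arccos (z i) := Real.arccos_pos.2 (hzmem i).2
    have h2 : Real.arccos (z i) < π := by
      refine lt_of_le_of_ne (Real.arccos_le_pi _) fun h => ?_
      have := Real.arccos_eq_pi.1 h
      linarith [(hzmem i).1]
    simp only [hτdef]
    constructor <;> linarith
  have hSt := hSt0
  simp only [hz] at hSt
  have hquad := j_quad a b τ hτ hτm hSt z hz S hS
  obtain ⟨h1, h2, h3, h4⟩ := jint_mem hτ hτm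
  -- positive definiteness
  have hPD : S.PosDef := by
    refine Matrix.PosDef.of_dotProduct_mulVec_pos ?_ ?_
    · ext i j
      rw [Matrix.conjTranspose_apply, hS]
      simp only [Matrix.of_apply, star_trivial]
      by_cases hij : i = j
      · subst hij; rfl
      · rw [if_neg hij, if_neg (Ne.symm hij), mul_comm (1 - z j ^ 2), ← neg_sub (z i), neg_sq]
    · intro x hx
      have e : star x ⬝ᵥ S.mulVec x = ∑ i, ∑ j, x i * S i j * x j := by
        simp [dotProduct, Matrix.mulVec, Finset.mul_sum, mul_assoc]
      rw [e, ← hquad x]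
      obtain ⟨i, hi⟩ := Function.ne_iff.1 hx
      refine add_pos_of_nonneg_of_pos (Finset.sum_nonneg fun p _ => by positivity)
        (Finset.sum_pos' (fun i _ => by positivity) ⟨i, Finset.mem_univ _, ?_⟩)
      have s1 := Real.sin_pos_of_mem_Ioo (h1 i)
      have s2 := Real.sin_pos_of_mem_Ioo (h2 i)
      have hi' : x i ≠ 0 := hi
      positivity
  refine ⟨hPD, ?_⟩
  have hAtc : IsClosed At := by
    rw [hAt]
    have : {t : Fin N → ℝ | Antitone t ∧ ∀ i, t i ∈ Set.Icc (0 : ℝ) (π / 2)} =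
      (⋂ i, ⋂ j, ⋂ (_ : i ≤ j), {t : Fin N → ℝ | t j ≤ t i}) ∩
        ⋂ i, {t : Fin N → ℝ | t i ∈ Set.Icc (0 : ℝ) (π / 2)} := by
      ext t
      simp [Antitone]
    rw [this]
    refine IsClosed.inter ?_ ?_
    · refine isClosed_iInter fun i => isClosed_iInter fun j => isClosed_iInter fun _ => ?_
      exact isClosed_le (continuous_apply _) (continuous_apply _)
    · exact isClosed_iInter fun i => isClosed_Icc.preimage (continuous_apply i)
  have hwm : ∀ κ, Measurable (w κ) := by
    intro κ
    rw [hw]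
    fun_prop
  -- rescaled density
  set g : ℝ → (Fin N → ℝ) → ℝ := fun κ x =>
    At.indicator (w κ) (τ + (√κ)⁻¹ • x) / w κ τ with hg
  have hgm : ∀ κ, Measurable (g κ) := by
    intro κ
    have := (hwm κ).indicator hAtc.measurableSet
    exact (this.comp (by fun_prop : Measurable fun x : Fin N → ℝ => τ + (√κ)⁻¹ • x)).div_const _
  have hwτ : ∀ κ, w κ τ = Real.exp (κ * jU N a b τ) := fun κ => by
    rw [hwj]; exact jw_eq a b κ hτ hτm
  have hgb : ∀ κ > 0, ∀ x, ‖g κ x‖ ≤ ∏ i, Real.exp (-(2 * b) * x i ^ 2) := by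
    intro κ hκ x
    have hnn : 0 ≤ ∏ i, Real.exp (-(2 * b) * x i ^ 2) := Finset.prod_nonneg fun i _ => (Real.exp_pos _).le
    simp only [hg]
    by_cases hmem : τ + (√κ)⁻¹ • x ∈ At
    · rw [Set.indicator_of_mem hmem]
      rw [hAt] at hmem
      by_cases hint : StrictAnti (τ + (√κ)⁻¹ • x) ∧ ∀ i, (τ + (√κ)⁻¹ • x) i ∈ Set.Ioo 0 (π / 2)
      · have hle := jU_le a b ha hb τ hτ hτm hSt _ hint.1 hint.2
        rw [hwτ, hwj, jw_eq a b κ hint.1 hint.2, ← Real.exp_sub, Real.norm_of_nonneg (Real.exp_pos _).le,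
          ← Real.exp_sum, Real.exp_le_exp, ← mul_sub]
        refine (mul_le_mul_of_nonneg_left hle hκ.le).trans_eq ?_
        rw [← Finset.sum_neg_distrib, Finset.mul_sum]
        refine Finset.sum_congr rfl fun i _ => ?_
        have e : ((√κ)⁻¹) ^ 2 = κ⁻¹ := by rw [inv_pow, Real.sq_sqrt hκ.le]
        simp only [Pi.smul_apply, smul_eq_mul, mul_pow, e]
        field_simp
      · rw [hwj, jw_zero a b κ hb hκ hmem.1 hmem.2 hint]
        simpa using hnn
    · rw [Set.indicator_of_notMem hmem]
      simpa using hnn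
  have hbi : Integrable (fun x : Fin N → ℝ => ∏ i, Real.exp (-(2 * b) * x i ^ 2)) :=
    Integrable.fintype_prod (f := fun _ y => Real.exp (-(2 * b) * y ^ 2))
      fun i => integrable_exp_neg_mul_sq (by positivity)
  have hopen : IsOpen {t : Fin N → ℝ | StrictAnti t ∧ ∀ i, t i ∈ Set.Ioo (0 : ℝ) (π / 2)} := by
    have : {t : Fin N → ℝ | StrictAnti t ∧ ∀ i, t i ∈ Set.Ioo (0 : ℝ) (π / 2)} =
      (⋂ i, ⋂ j, ⋂ (_ : i < j), {t : Fin N → ℝ | t j < t i}) ∩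
        ⋂ i, {t : Fin N → ℝ | t i ∈ Set.Ioo (0 : ℝ) (π / 2)} := by
      ext t
      simp [StrictAnti]
    rw [this]
    refine IsOpen.inter ?_ ?_
    · refine isOpen_iInter_of_finite fun i => isOpen_iInter_of_finite fun j =>
        isOpen_iInter_of_finite fun _ => ?_
      exact isOpen_lt (continuous_apply _) (continuous_apply _)
    · exact isOpen_iInter_of_finite fun i => isOpen_Ioo.preimage (continuous_apply i)
  have hgt : ∀ x, Tendsto (fun κ => g κ x) atTop
      (𝓝 (Real.exp (-(∑ i, ∑ j, x i * S i j * x j) / 2))) := by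
    intro x
    have hT := jU_tendsto a b τ hτ hτm hSt x
    rw [hquad x] at hT
    refine ((Real.continuous_exp.tendsto _).comp hT).congr' ?_
    have ht : Tendsto (fun κ : ℝ => τ + (√κ)⁻¹ • x) atTop (𝓝 τ) := by
      have : Tendsto (fun κ : ℝ => (√κ)⁻¹) atTop (𝓝 0) :=
        tendsto_inv_atTop_zero.comp tendsto_sqrt_atTop
      simpa using (this.smul_const x).const_add τ
    filter_upwards [ht.eventually (hopen.mem_nhds ⟨hτ, hτm⟩)] with κ hκ
    have hmem : τ + (√κ)⁻¹ • x ∈ At := by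
      rw [hAt]
      exact ⟨hκ.1.antitone, fun i => Set.Ioo_subset_Icc_self (hκ.2 i)⟩
    simp only [hg, Function.comp]
    rw [Set.indicator_of_mem hmem, hwτ, hwj, jw_eq a b κ hκ.1 hκ.2, ← Real.exp_sub, mul_sub]
  have hlim : ∀ f : BoundedContinuousFunction (Fin N → ℝ) ℝ,
      Tendsto (fun κ => ∫ x, f x * g κ x) atTop
        (𝓝 (∫ x, f x * Real.exp (-(∑ i, ∑ j, x i * S i j * x j) / 2))) := by
    intro f
    refine tendsto_integral_filter_of_dominated_convergence
      (fun x => ‖f‖ * ∏ i, Real.exp (-(2 * b) * x i ^ 2)) ?_ ?_ (hbi.const_mul _) ?_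
    · exact Eventually.of_forall fun κ =>
        (f.continuous.measurable.mul (hgm κ)).aestronglyMeasurable
    · filter_upwards [eventually_gt_atTop 0] with κ hκ
      refine Eventually.of_forall fun x => ?_
      rw [norm_mul]
      exact mul_le_mul (f.norm_coe_le_norm x) (hgb κ hκ x) (norm_nonneg _) (norm_nonneg _)
    · exact Eventually.of_forall fun x => (hgt x).const_mul _
  -- change of variables
  have hcv : ∀ κ > 0, ∃ D : ℝ, D ≠ 0 ∧ ∀ f : BoundedContinuousFunction (Fin N → ℝ) ℝ,
      ∫ t in At, f (√κ • (t - τ)) * w κ t = D * ∫ x, f x * g κ x := by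
    intro κ hκ
    have hs : √κ ≠ 0 := (Real.sqrt_pos.2 hκ).ne'
    have hw0 : w κ τ ≠ 0 := by rw [hwτ]; exact (Real.exp_pos _).ne'
    set C : ℝ := |(((√κ)⁻¹) ^ Module.finrank ℝ (Fin N → ℝ))⁻¹| with hC
    have hC0 : C ≠ 0 := by rw [hC]; positivity
    refine ⟨C⁻¹ * w κ τ, mul_ne_zero (inv_ne_zero hC0) hw0, fun f => ?_⟩
    rw [← integral_indicator hAtc.measurableSet]
    set F : (Fin N → ℝ) → ℝ := At.indicator (fun t => f (√κ • (t - τ)) * w κ t) with hF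
    have e1 : ∫ x, F (τ + (√κ)⁻¹ • x) = C * ∫ t, F t := by
      have := Measure.integral_comp_smul (volume : Measure (Fin N → ℝ)) (fun t => F (τ + t)) (√κ)⁻¹
      rw [this, integral_add_left_eq_self F τ, smul_eq_mul]
    have e2 : ∀ x, F (τ + (√κ)⁻¹ • x) = w κ τ * (f x * g κ x) := by
      intro x
      simp only [hF, hg]
      by_cases hmem : τ + (√κ)⁻¹ • x ∈ At
      · rw [Set.indicator_of_mem hmem, Set.indicator_of_mem hmem, add_sub_cancel_left,
          smul_smul, mul_inv_cancel₀ hs, one_smul]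
        field_simp
      · rw [Set.indicator_of_notMem hmem, Set.indicator_of_notMem hmem]
        simp
    simp_rw [e2] at e1
    rw [integral_const_mul] at e1
    rw [mul_assoc, e1, inv_mul_cancel_left₀ hC0]
  intro f
  have hZ := gauss_norm N S hPD
  have hZpos : (0:ℝ) < (2 * π) ^ (-(N : ℝ) / 2) * Real.sqrt S.det := by
    have := hPD.det_pos
    positivity
  have l1 := hlim f
  have l2 := hlim (BoundedContinuousFunction.const _ 1)
  simp only [BoundedContinuousFunction.const_apply, one_mul] at l2
  rw [hZ] at l2
  have l3 := l1.div l2 (inv_ne_zero hZpos.ne')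
  refine (l3.congr' ?_).trans_eq ?_
  · filter_upwards [eventually_gt_atTop 0] with κ hκ
    obtain ⟨D, hD, hcvD⟩ := hcv κ hκ
    have d1 := hcvD f
    have d2 := hcvD (BoundedContinuousFunction.const _ 1)
    simp only [BoundedContinuousFunction.const_apply, one_mul] at d2
    rw [d1, d2, mul_div_mul_left _ _ hD]
    rfl
  · congr 1
    rw [div_inv_eq_mul, mul_comm, ← integral_const_mul]
    congr 1
    ext x
    ring
end

section
/- Let N ≥ 1, α, β > −1, and let z_1 < ... < z_N be the ordered zeros of the Jacobi polynomial P_N^{(α,β)}. Let S̃ be the N×N matrix with entries s̃_{j,j} = 4Σ_{l≠j}(1−z_j²)/(z_j−z_l)² + 2(α+1)(1+z_j)/(1−z_j) + 2(β+1)(1−z_j)/(1+z_j) and s̃_{i,j} = −4√((1−z_i²)(1−z_j²))/(z_i−z_j)² for i ≠ j. Then the eigenvalues of S̃ are exactly the N pairwise distinct positive numbers λ_k = 2k(2N+α+β+1−k) for k = 1, ..., N, and each eigenvalue is simple. -/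
open MeasureTheory Filter Real Finset Topology

namespace JacTrig
open Polynomial

noncomputable def M (α β : ℝ) (N : ℕ) (Q : ℝ[X]) : ℝ[X] :=
  (1 - X ^ 2) * derivative (derivative Q) + (C (β - α) - C (α + β + 2) * X) * derivative Q
    + C ((N : ℝ) * (N + α + β + 1)) * Q

lemma M_C_mul (α β : ℝ) (N : ℕ) (a : ℝ) (Q : ℝ[X]) : M α β N (C a * Q) = C a * M α β N Q := by
  simp only [M, derivative_C_mul]; ring

lemma M_sum (α β : ℝ) (N : ℕ) {ι : Type*} (s : Finset ι) (f : ι → ℝ[X]) :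
    M α β N (∑ i ∈ s, f i) = ∑ i ∈ s, M α β N (f i) := by
  simp only [M, derivative_sum, Finset.mul_sum, Finset.sum_add_distrib]

lemma coeff_M (α β : ℝ) (N : ℕ) (Q : ℝ[X]) (n : ℕ) :
    (M α β N Q).coeff n = (n + 2) * (n + 1) * Q.coeff (n + 2) + (β - α) * (n + 1) * Q.coeff (n + 1)
      + ((N : ℝ) * (N + α + β + 1) - n * (n + α + β + 1)) * Q.coeff n := by
  have e : M α β N Q = derivative (derivative Q) - derivative (derivative Q) * X ^ 2
     + (C (β - α) * derivative Q - C (α + β + 2) * (derivative Q * X))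
    + C ((N : ℝ) * (N + α + β + 1)) * Q := by unfold M; ring
  rw [e]
  simp only [coeff_add, coeff_sub, coeff_C_mul]
  rcases n with _ | _ | n
  · simp [coeff_derivative]
    ring
  · simp [coeff_derivative, coeff_mul_X_pow', coeff_mul_X]
    ring
  · simp [coeff_derivative, coeff_mul_X_pow, coeff_mul_X]
    ring

lemma degree_M_lt (α β : ℝ) (N : ℕ) (Q : ℝ[X]) (hQ : Q.natDegree ≤ N) :
    (M α β N Q).degree < N := by
  rw [degree_lt_iff_coeff_zero]
  intro m hm
  rw [coeff_M, coeff_eq_zero_of_natDegree_lt (by omega : Q.natDegree < m + 2),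
    coeff_eq_zero_of_natDegree_lt (by omega : Q.natDegree < m + 1)]
  rcases hm.eq_or_lt with h | h
  · subst h; simp
  · rw [coeff_eq_zero_of_natDegree_lt (by omega : Q.natDegree < m)]; simp

lemma natDegree_M_lt (α β : ℝ) (N : ℕ) (hN : 1 ≤ N) (Q : ℝ[X]) (hQ : Q.natDegree ≤ N) :
    (M α β N Q).natDegree < N := by
  by_cases h : M α β N Q = 0
  · simp [h]; omega
  · exact (natDegree_lt_iff_degree_lt h).2 (degree_M_lt α β N Q hQ)

lemma int_w (α β : ℝ) (hα : -1 < α) (hβ : -1 < β) :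
    IntervalIntegrable (fun x : ℝ => (1 - x) ^ α * (1 + x) ^ β) volume (-1) 1 := by
  have h1 : IntervalIntegrable (fun x : ℝ => (1 - x) ^ α) volume 0 1 := by
    have := (intervalIntegral.intervalIntegrable_rpow' (a := 1) (b := 0) hα).comp_sub_left 1
    simpa using this
  have h2 : IntervalIntegrable (fun x : ℝ => (1 + x) ^ β) volume (-1) 0 := by
    have := (intervalIntegral.intervalIntegrable_rpow' (a := 0) (b := 1) hβ).comp_add_left 1
    simpa using this
  refine IntervalIntegrable.trans (b := 0) ?_ ?_
  · refine h2.continuousOn_mul ?_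
    intro x hx
    rw [Set.uIcc_of_le (by norm_num)] at hx
    refine ContinuousAt.continuousWithinAt ?_
    refine ContinuousAt.rpow_const (by fun_prop) (Or.inl ?_)
    linarith [hx.2]
  · refine h1.mul_continuousOn ?_
    intro x hx
    rw [Set.uIcc_of_le (by norm_num)] at hx
    refine ContinuousAt.continuousWithinAt ?_
    refine ContinuousAt.rpow_const (by fun_prop) (Or.inl ?_)
    linarith [hx.1]

lemma int_pw (α β : ℝ) (hα : -1 < α) (hβ : -1 < β) (R : ℝ[X]) :
    IntervalIntegrable (fun x : ℝ => R.eval x * ((1 - x) ^ α * (1 + x) ^ β)) volume (-1) 1 :=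
  (int_w α β hα hβ).continuousOn_mul R.continuous.continuousOn

lemma green (α β : ℝ) (N : ℕ) (hα : -1 < α) (hβ : -1 < β) (P Q : ℝ[X]) :
    ∫ x in (-1 : ℝ)..1, (M α β N P * Q - P * M α β N Q).eval x * ((1 - x) ^ α * (1 + x) ^ β)
      = 0 := by
  rw [intervalIntegral.integral_eq_sub_of_hasDerivAt_of_le (f := fun x =>
    (1 - x) ^ (α + 1) * (1 + x) ^ (β + 1) * (derivative P * Q - P * derivative Q).eval x)
    (by norm_num) ?_ ?_ (int_pw α β hα hβ _)]
  · rw [sub_self, Real.zero_rpow (by linarith)]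
    rw [show (1 : ℝ) + -1 = 0 by norm_num, Real.zero_rpow (by linarith)]
    simp
  · refine Continuous.continuousOn ?_
    refine Continuous.mul (Continuous.mul ?_ ?_) (Polynomial.continuous _)
    · exact Continuous.rpow_const (by fun_prop) (fun x => Or.inr (by linarith))
    · exact Continuous.rpow_const (by fun_prop) (fun x => Or.inr (by linarith))
  · intro x hx
    have hx1 : 0 < 1 - x := by linarith [hx.2]
    have hx2 : 0 < 1 + x := by linarith [hx.1]
    have d1 : HasDerivAt (fun x : ℝ => (1 - x) ^ (α + 1)) (-1 * (α + 1) * (1 - x) ^ α) x := by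
      have := HasDerivAt.rpow_const (p := α + 1) ((hasDerivAt_id x).const_sub 1)
        (Or.inl hx1.ne')
      simpa using this
    have d2 : HasDerivAt (fun x : ℝ => (1 + x) ^ (β + 1)) (1 * (β + 1) * (1 + x) ^ β) x := by
      have := HasDerivAt.rpow_const (p := β + 1) ((hasDerivAt_id x).const_add 1)
        (Or.inl hx2.ne')
      simpa using this
    have d3 := (derivative P * Q - P * derivative Q).hasDerivAt x
    refine ((d1.mul d2).mul d3).congr_deriv ?_
    simp only [Pi.mul_apply]
    rw [Real.rpow_add hx1, Real.rpow_add hx2, Real.rpow_one, Real.rpow_one]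
    simp [M]
    ring

lemma M_eq_zero (N : ℕ) (hN : 1 ≤ N) (α β : ℝ) (hα : -1 < α) (hβ : -1 < β)
    (P : Polynomial ℝ) (hPdeg : P.natDegree = N)
    (hPorth : ∀ Q : Polynomial ℝ, Q.natDegree < N →
      ∫ x in Set.Ioo (-1 : ℝ) 1,
        P.eval x * Q.eval x * (1 - x) ^ α * (1 + x) ^ β = 0) : M α β N P = 0 := by
  by_contra hne
  set R := M α β N P with hR
  have hRd : R.natDegree < N := natDegree_M_lt α β N hN P hPdeg.le
  have h1 := hPorth (M α β N R) (natDegree_M_lt α β N hN R hRd.le)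
  have h2 := green α β N hα hβ P R
  rw [← hR] at h2
  have h3 : ∫ x in (-1 : ℝ)..1, (P * M α β N R).eval x * ((1 - x) ^ α * (1 + x) ^ β) = 0 := by
    rw [intervalIntegral.integral_of_le (by norm_num), integral_Ioc_eq_integral_Ioo, ← h1]
    congr 1; ext x; simp; ring
  have h4 : ∫ x in (-1 : ℝ)..1, (R * R).eval x * ((1 - x) ^ α * (1 + x) ^ β) = 0 := by
    have := intervalIntegral.integral_sub (int_pw α β hα hβ (R * R))
      (int_pw α β hα hβ (P * M α β N R))
    rw [h3, sub_zero] at this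
    rw [← this, ← h2]
    congr 1; ext x; simp; ring
  rw [intervalIntegral.integral_of_le (by norm_num), integral_Ioc_eq_integral_Ioo] at h4
  have hpos : 0 < ∫ x in Set.Ioo (-1 : ℝ) 1, (R * R).eval x * ((1 - x) ^ α * (1 + x) ^ β) := by
    rw [setIntegral_pos_iff_support_of_nonneg_ae]
    · have hsub : Set.Ioo (-1 : ℝ) 1 \ (R.roots.toFinset : Set ℝ) ⊆
        (Function.support fun x : ℝ => (R * R).eval x * ((1 - x) ^ α * (1 + x) ^ β)) ∩
          Set.Ioo (-1 : ℝ) 1 := by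
        rintro x ⟨hx, hxr⟩
        refine ⟨?_, hx⟩
        have hx1 : 0 < 1 - x := by linarith [hx.2]
        have hx2 : 0 < 1 + x := by linarith [hx.1]
        have : R.eval x ≠ 0 := by simpa [hne] using hxr
        have e1 := (Real.rpow_pos_of_pos hx1 α).ne'
        have e2 := (Real.rpow_pos_of_pos hx2 β).ne'
        simp [this, e1, e2]
      refine lt_of_lt_of_le ?_ (measure_mono hsub)
      rw [measure_sdiff_null (Set.Finite.measure_zero (Finset.finite_toSet _) _)]
      simp
    · refine (ae_restrict_iff' measurableSet_Ioo).2 (ae_of_all _ ?_)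
      intro x hx
      have hx1 : 0 < 1 - x := by linarith [hx.2]
      have hx2 : 0 < 1 + x := by linarith [hx.1]
      have e1 := (Real.rpow_pos_of_pos hx1 α)
      have e2 := (Real.rpow_pos_of_pos hx2 β)
      simp only [eval_mul, Pi.zero_apply]
      have := mul_self_nonneg (R.eval x)
      positivity
    · have := int_pw α β hα hβ (R * R)
      rw [intervalIntegrable_iff_integrableOn_Ioo_of_le (by norm_num)] at this
      exact this
  linarith

/-- log-derivative identity -/
lemma sum_inv_sq {ι : Type*} [DecidableEq ι] (s : Finset ι) (z : ι → ℝ) (x : ℝ) (h : ∀ l ∈ s, x - z l ≠ 0) :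
    (derivative (∏ l ∈ s, (X - C (z l)))).eval x ^ 2 -
      (∏ l ∈ s, (X - C (z l))).eval x * (derivative (derivative (∏ l ∈ s, (X - C (z l))))).eval x
    = (∏ l ∈ s, (X - C (z l))).eval x ^ 2 * ∑ l ∈ s, 1 / (x - z l) ^ 2 := by
  induction s using Finset.induction_on with
  | empty => simp
  | insert a s ha ih =>
    have ih := ih (fun l hl => h l (Finset.mem_insert_of_mem hl))
    have h0 := h a (Finset.mem_insert_self _ _)
    rw [Finset.prod_insert ha, Finset.sum_insert ha]
    set H := ∏ l ∈ s, (X - C (z l))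
    have : ((X - C (z a)) * H).eval x ^ 2 * (1 / (x - z a) ^ 2 + ∑ l ∈ s, 1 / (x - z l) ^ 2)
      = H.eval x ^ 2 + (x - z a) ^ 2 * (H.eval x ^ 2 * ∑ l ∈ s, 1 / (x - z l) ^ 2) := by
      simp only [eval_mul, eval_sub, eval_X, eval_C]
      field_simp
    rw [this, ← ih]
    simp
    ring

lemma M_X_sub_mul (α β : ℝ) (N : ℕ) (a : ℝ) (H : ℝ[X]) :
    M α β N ((X - C a) * H) = (X - C a) * M α β N H + C 2 * (1 - X ^ 2) * derivative H
      + (C (β - α) - C (α + β + 2) * X) * H := by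
  have : (C 2 : ℝ[X]) = 2 := rfl
  rw [this]
  simp only [M, derivative_mul, derivative_sub, derivative_X, derivative_C, derivative_add]
  simp
  ring

section
variable {N : ℕ} (α β : ℝ) (z : Fin N → ℝ)

noncomputable def W (j : Fin N) : ℝ[X] := ∏ l ∈ univ.erase j, (X - C (z l))

noncomputable def d (j : Fin N) : ℝ := (W z j).eval (z j)

lemma d_ne (hz : Function.Injective z) (j : Fin N) : d z j ≠ 0 := by
  simp only [d, W, eval_prod, eval_sub, eval_X, eval_C]
  refine Finset.prod_ne_zero_iff.2 fun l hl => sub_ne_zero.2 fun h => ?_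
  exact (Finset.mem_erase.1 hl).1 (hz h).symm

lemma prod_eq (j : Fin N) : ∏ l, (X - C (z l)) = (X - C (z j)) * W z j :=
  (Finset.mul_prod_erase univ (fun l => X - C (z l)) (Finset.mem_univ j)).symm

lemma W_eval_ne {i j : Fin N} (h : i ≠ j) : (W z j).eval (z i) = 0 := by
  simp only [W, eval_prod, eval_sub, eval_X, eval_C]
  exact Finset.prod_eq_zero (Finset.mem_erase.2 ⟨h, Finset.mem_univ i⟩) (sub_self _)

lemma dW_eval_ne {i j : Fin N} (h : i ≠ j) :
    (z i - z j) * (derivative (W z j)).eval (z i) = d z i := by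
  have h1 : (derivative (∏ l, (X - C (z l)))).eval (z i) = d z i := by
    rw [prod_eq z i]; simp [d]
  rw [prod_eq z j] at h1
  simpa [W_eval_ne z h] using h1

lemma offdiag (hM : M α β N (∏ l, (X - C (z l))) = 0) 
    (hz : Function.Injective z) {i j : Fin N} (h : i ≠ j) :
    2 * (M α β N (W z j)).eval (z i) / d z i = -4 * (1 - z i ^ 2) / (z i - z j) ^ 2 := by
  have hne : z i - z j ≠ 0 := sub_ne_zero.2 fun e => h (hz e)
  rw [prod_eq z j, M_X_sub_mul] at hM
  have h1 := congrArg (eval (z i)) hM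
  simp [W_eval_ne z h] at h1
  have h2 := dW_eval_ne z h
  have h3 := d_ne z hz i
  rw [div_eq_div_iff h3 (by positivity), ← h2]
  linear_combination 2 * (z i - z j) * h1

lemma diag (hM : M α β N (∏ l, (X - C (z l))) = 0) 
    (hz : Function.Injective z) (hm : ∀ i, z i ∈ Set.Ioo (-1 : ℝ) 1) (j : Fin N) :
    2 * (M α β N (W z j)).eval (z j) / d z j = 
      4 * (∑ l ∈ Finset.univ.erase j, (1 - z j ^ 2) / (z j - z l) ^ 2) +
          2 * (α + 1) * ((1 + z j) / (1 - z j)) + 2 * (β + 1) * ((1 - z j) / (1 + z j)) := by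
  have hx1 : 1 - z j ≠ 0 := by linarith [(hm j).2]
  have hx2 : 1 + z j ≠ 0 := by linarith [(hm j).1]
  have hd := d_ne z hz j
  have hs := sum_inv_sq (univ.erase j) z (z j) (fun l hl => sub_ne_zero.2 fun h =>
    (Finset.mem_erase.1 hl).1 (hz h).symm)
  change (derivative (W z j)).eval (z j) ^ 2 - (W z j).eval (z j) *
    (derivative (derivative (W z j))).eval (z j) = (W z j).eval (z j) ^ 2 * _ at hs
  rw [prod_eq z j, M_X_sub_mul] at hM
  have h1 := congrArg (eval (z j)) hM
  have h2 := congrArg (fun q => eval (z j) (derivative q)) hM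
  simp at h1 h2
  have e : ∑ l ∈ Finset.univ.erase j, (1 - z j ^ 2) / (z j - z l) ^ 2
     = (1 - z j ^ 2) * ∑ l ∈ Finset.univ.erase j, 1 / (z j - z l) ^ 2 := by
    rw [Finset.mul_sum]; exact Finset.sum_congr rfl fun _ _ => by ring
  rw [e]
  have hd' : (W z j).eval (z j) ≠ 0 := hd
  change _ / (W z j).eval (z j) = _
  generalize (∑ l ∈ Finset.univ.erase j, 1 / (z j - z l) ^ 2) = σ at *
  generalize (derivative (derivative (W z j))).eval (z j) = w2 at *
  generalize (derivative (W z j)).eval (z j) = w1 at *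
  generalize (W z j).eval (z j) = w0 at *
  generalize (M α β N (W z j)).eval (z j) = m at *
  generalize z j = x at *
  have hσ : σ = (w1 ^ 2 - w0 * w2) / w0 ^ 2 := by field_simp; linarith
  have hw1 : w1 = - ((β - α) - (α + β + 2) * x) * w0 / (2 * ((1 - x) * (1 + x))) := by
    field_simp; linarith
  have hmm : m = 4 * x * w1 - 2 * (1 - x ^ 2) * w2 + (α + β + 2) * w0
    - ((β - α) - (α + β + 2) * x) * w1 := by linarith
  rw [hmm, hσ, hw1]
  field_simp
  ring

lemma interp (hz : Function.Injective z) (Q : ℝ[X]) (hQ : Q.degree < N) :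
    Q = ∑ j, C (Q.eval (z j) / d z j) * W z j := by
  refine Polynomial.eq_of_degrees_lt_of_eval_index_eq (v := z) univ hz.injOn (by simpa using hQ) ?_ ?_
  · rw [← mem_degreeLT]
    refine Submodule.sum_mem _ fun j _ => ?_
    rw [← smul_eq_C_mul]
    refine Submodule.smul_mem _ _ ?_
    rw [mem_degreeLT, W, degree_prod_of_monic _ _ fun l _ => monic_X_sub_C _]
    simp
    exact j.pos
  · intro i _
    rw [eval_finsetSum, Finset.sum_eq_single i]
    · have := d_ne z hz i
      rw [eval_mul, eval_C]; change _ = _ / _ * d z i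
      field_simp
    · intro j _ hj
      rw [eval_mul, W_eval_ne z hj.symm, mul_zero]
    · simp

lemma charpoly_S (hM : M α β N (∏ l, (X - C (z l))) = 0) 
    (hz : Function.Injective z) (hm : ∀ i, z i ∈ Set.Ioo (-1 : ℝ) 1)
    (S : Matrix (Fin N) (Fin N) ℝ)
    (hS : S = Matrix.of fun i j =>
      if i = j then
        4 * (∑ l ∈ Finset.univ.erase j, (1 - z j ^ 2) / (z j - z l) ^ 2) +
          2 * (α + 1) * ((1 + z j) / (1 - z j)) + 2 * (β + 1) * ((1 - z j) / (1 + z j))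
      else -4 * Real.sqrt ((1 - z i ^ 2) * (1 - z j ^ 2)) / (z i - z j) ^ 2) :
    S.charpoly = ∏ n : Fin N, (X - C (2 * ((N : ℝ) * (N + α + β + 1) - n * (n + α + β + 1)))) := by
  have hp : ∀ i, 0 < 1 - z i ^ 2 := fun i => by nlinarith [(hm i).1, (hm i).2]
  set r : Fin N → ℝ := fun i => Real.sqrt (1 - z i ^ 2) with hr
  have hr0 : ∀ i, r i ≠ 0 := fun i => (Real.sqrt_pos.2 (hp i)).ne'
  have hr2 : ∀ i, r i * r i = 1 - z i ^ 2 := fun i => Real.mul_self_sqrt (hp i).le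
  have hd := d_ne z hz
  have hK : ∀ i j, S i j * r i = 2 * (M α β N (W z j)).eval (z i) / d z i * r j := by
    intro i j
    rw [hS, Matrix.of_apply]
    split_ifs with h
    · subst h; rw [diag α β z hM hz hm]
    · rw [offdiag α β z hM hz h, Real.sqrt_mul (hp i).le, ← hr2 i]
      change -4 * (Real.sqrt (r i * r i) * r j) / _ * r i = _
      rw [Real.sqrt_mul_self (Real.sqrt_nonneg _)]
      ring
  let A : Matrix (Fin N) (Fin N) ℝ := Matrix.of fun m n => 2 * (M α β N (X ^ (n : ℕ))).coeff m
  let B : Matrix (Fin N) (Fin N) ℝ := Matrix.diagonal (fun i => 1 / (d z i * r i)) * Matrix.vandermonde z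
  have hB : ∀ i n, B i n = z i ^ (n : ℕ) / (d z i * r i) := by
    intro i n
    simp only [B, Matrix.diagonal_mul, Matrix.vandermonde_apply]; ring
  have hBdet : IsUnit B.det := by
    rw [isUnit_iff_ne_zero, Matrix.det_mul, Matrix.det_diagonal]
    refine mul_ne_zero (Finset.prod_ne_zero_iff.2 fun i _ => ?_)
      (Matrix.det_vandermonde_ne_zero_iff.2 hz)
    exact one_div_ne_zero (mul_ne_zero (hd i) (hr0 i))
  have hSB : S * B = B * A := by
    ext i n
    have hdeg : (X ^ (n : ℕ) : ℝ[X]).degree < N := by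
      rw [degree_X_pow]; exact_mod_cast n.2
    have h1 := congrArg (fun q => (M α β N q).eval (z i)) (interp z hz _ hdeg)
    simp only [M_sum, M_C_mul, eval_finsetSum, eval_mul, eval_C, eval_pow, eval_X] at h1
    have h2 : (M α β N (X ^ (n : ℕ))).eval (z i) =
        ∑ m : Fin N, (M α β N (X ^ (n : ℕ))).coeff m * z i ^ (m : ℕ) := by
      rw [Polynomial.eval_eq_sum_range' (n := N), Finset.sum_range]
      exact natDegree_M_lt α β N n.pos _ (by simp)
    rw [Matrix.mul_apply, Matrix.mul_apply]
    have h3 : ∀ j, S i j * B j n = 2 / (d z i * r i) * (z j ^ (n : ℕ) / d z j *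
        (M α β N (W z j)).eval (z i)) := by
      intro j
      have hk := hK i j
      have a1 := hr0 i
      have a2 := hr0 j
      have a3 := hd i
      have a4 := hd j
      rw [hB, eq_div_of_mul_eq a1 hk]
      field_simp
    rw [Finset.sum_congr rfl fun j _ => h3 j, ← Finset.mul_sum, ← h1, h2, Finset.mul_sum]
    refine Finset.sum_congr rfl fun m _ => ?_
    rw [hB]; simp only [A, Matrix.of_apply]; ring
  have hSA : S = B * A * B⁻¹ := by
    rw [← hSB, Matrix.mul_assoc, Matrix.mul_nonsing_inv _ hBdet, Matrix.mul_one]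
  have hA : S.charpoly = A.charpoly := by
    rw [hSA, Matrix.charpoly_mul_comm, ← Matrix.mul_assoc, Matrix.nonsing_inv_mul _ hBdet,
      Matrix.one_mul]
  rw [hA, Matrix.charpoly_of_isUpperTriangular]
  · refine Finset.prod_congr rfl fun n _ => ?_
    simp only [A, Matrix.of_apply, coeff_M, coeff_X_pow]
    simp
  · intro m n h
    have h : (n : ℕ) < m := h
    simp only [A, Matrix.of_apply, coeff_M, coeff_X_pow]
    rw [if_neg (by omega), if_neg (by omega), if_neg (by omega)]
    simp

end

end JacTrig

theorem trig_jacobi_matrix_eigenvalues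
    (N : ℕ) (hN : 1 ≤ N) (α β : ℝ) (hα : -1 < α) (hβ : -1 < β)
    (P : Polynomial ℝ) (hPdeg : P.natDegree = N)
    (hPorth : ∀ Q : Polynomial ℝ, Q.natDegree < N →
      ∫ x in Set.Ioo (-1 : ℝ) 1,
        P.eval x * Q.eval x * (1 - x) ^ α * (1 + x) ^ β = 0)
    (hPone : P.eval 1 = (∏ j ∈ Finset.range N, (α + 1 + j)) / (N.factorial : ℝ))
    (z : Fin N → ℝ) (hzmono : StrictMono z)
    (hzroot : ∀ i, P.eval (z i) = 0)
    (hzmem : ∀ i, z i ∈ Set.Ioo (-1 : ℝ) 1)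
    (S : Matrix (Fin N) (Fin N) ℝ)
    (hS : S = Matrix.of fun i j =>
      if i = j then
        4 * (∑ l ∈ Finset.univ.erase j, (1 - z j ^ 2) / (z j - z l) ^ 2) +
          2 * (α + 1) * ((1 + z j) / (1 - z j)) + 2 * (β + 1) * ((1 - z j) / (1 + z j))
      else -4 * Real.sqrt ((1 - z i ^ 2) * (1 - z j ^ 2)) / (z i - z j) ^ 2)
    : (∀ k : ℕ, 1 ≤ k → k ≤ N →
        (0 : ℝ) < 2 * (k : ℝ) * (2 * (N : ℝ) + α + β + 1 - (k : ℝ))) ∧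
      (∀ k k' : ℕ, 1 ≤ k → k ≤ N → 1 ≤ k' → k' ≤ N →
        2 * (k : ℝ) * (2 * (N : ℝ) + α + β + 1 - (k : ℝ)) =
          2 * (k' : ℝ) * (2 * (N : ℝ) + α + β + 1 - (k' : ℝ)) → k = k') ∧
      (∀ μ : ℝ, (∃ v : Fin N → ℝ, v ≠ 0 ∧ S.mulVec v = μ • v) ↔
        ∃ k : ℕ, 1 ≤ k ∧ k ≤ N ∧
          μ = 2 * (k : ℝ) * (2 * (N : ℝ) + α + β + 1 - (k : ℝ))) ∧
      (∀ k : ℕ, 1 ≤ k → k ≤ N →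
        Module.finrank ℝ
          (LinearMap.ker
            ((S - (2 * (k : ℝ) * (2 * (N : ℝ) + α + β + 1 - (k : ℝ))) •
              (1 : Matrix (Fin N) (Fin N) ℝ)).mulVecLin)) = 1) := by
  have hinj : Function.Injective z := hzmono.injective
  have hpos : ∀ k : ℕ, 1 ≤ k → k ≤ N →
        (0 : ℝ) < 2 * (k : ℝ) * (2 * (N : ℝ) + α + β + 1 - (k : ℝ)) := by
    intro k h1 h2
    have h1' : (1 : ℝ) ≤ k := by exact_mod_cast h1
    have h2' : (k : ℝ) ≤ N := by exact_mod_cast h2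
    have : 0 < 2 * (N : ℝ) + α + β + 1 - (k : ℝ) := by linarith
    positivity
  have hdist : ∀ k k' : ℕ, 1 ≤ k → k ≤ N → 1 ≤ k' → k' ≤ N →
        2 * (k : ℝ) * (2 * (N : ℝ) + α + β + 1 - (k : ℝ)) =
          2 * (k' : ℝ) * (2 * (N : ℝ) + α + β + 1 - (k' : ℝ)) → k = k' := by
    intro k k' h1 h2 h3 h4 he
    by_contra hne
    have hne' : (k : ℝ) - k' ≠ 0 := sub_ne_zero.2 (by exact_mod_cast hne)
    have e : ((k : ℝ) - k') * (2 * (N : ℝ) + α + β + 1 - k - k') = 0 := by linarith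
    have e2 := (mul_eq_zero.1 e).resolve_left hne'
    have h5 : (k : ℝ) + k' + 1 ≤ 2 * N := by
      have : k + k' + 1 ≤ 2 * N := by omega
      exact_mod_cast this
    linarith
  have hMP := JacTrig.M_eq_zero N hN α β hα hβ P hPdeg hPorth
  have hP0 : P ≠ 0 := by rintro rfl; simp at hPdeg; omega
  have hlc : P.leadingCoeff ≠ 0 := Polynomial.leadingCoeff_ne_zero.2 hP0
  have hfac : P = Polynomial.C P.leadingCoeff * ∏ l, (Polynomial.X - Polynomial.C (z l)) := by
    have hmon : (∏ l, (Polynomial.X - Polynomial.C (z l))).Monic :=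
      Polynomial.monic_prod_of_monic _ _ fun l _ => Polynomial.monic_X_sub_C _
    refine Polynomial.eq_of_degree_le_of_eval_index_eq (v := z) univ hinj.injOn ?_ ?_ ?_ ?_
    · rw [Polynomial.degree_eq_natDegree hP0, hPdeg]; simp
    · rw [Polynomial.degree_eq_natDegree hP0, hPdeg, Polynomial.degree_C_mul hlc,
        Polynomial.degree_prod_of_monic _ _ fun l _ => Polynomial.monic_X_sub_C _]
      simp
    · rw [Polynomial.leadingCoeff_mul, hmon.leadingCoeff]; simp
    · intro i _
      rw [hzroot, JacTrig.prod_eq z i]; simp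
  have hM : JacTrig.M α β N (∏ l, (Polynomial.X - Polynomial.C (z l))) = 0 := by
    rw [hfac, JacTrig.M_C_mul] at hMP
    exact (mul_eq_zero.1 hMP).resolve_left (by simpa using hP0)
  have hc := JacTrig.charpoly_S α β z hM hinj hzmem S hS
  have hval : ∀ k n : ℕ, k + n = N →
      2 * ((N : ℝ) * (N + α + β + 1) - n * (n + α + β + 1)) =
        2 * (k : ℝ) * (2 * (N : ℝ) + α + β + 1 - (k : ℝ)) := by
    intro k n h
    rw [← h]; push_cast; ring
  have hroot : ∀ μ : ℝ, S.charpoly.IsRoot μ ↔ ∃ k : ℕ, 1 ≤ k ∧ k ≤ N ∧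
          μ = 2 * (k : ℝ) * (2 * (N : ℝ) + α + β + 1 - (k : ℝ)) := by
    intro μ
    rw [hc, Polynomial.IsRoot, Polynomial.eval_prod, Finset.prod_eq_zero_iff]
    constructor
    · rintro ⟨n, -, hn⟩
      refine ⟨N - n, by omega, by omega, ?_⟩
      rw [← hval (N - n) n (by omega)]
      simp at hn; linarith
    · rintro ⟨k, h1, h2, h3⟩
      refine ⟨⟨N - k, by omega⟩, Finset.mem_univ _, ?_⟩
      rw [hval k (N - k) (by omega), h3]
      simp
  have hev : ∀ μ : ℝ, Module.End.HasEigenvalue (S.mulVecLin : Module.End ℝ (Fin N → ℝ)) μ ↔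
      ∃ k : ℕ, 1 ≤ k ∧ k ≤ N ∧
          μ = 2 * (k : ℝ) * (2 * (N : ℝ) + α + β + 1 - (k : ℝ)) := by
    intro μ
    rw [Module.End.hasEigenvalue_iff_isRoot_charpoly, Matrix.charpoly_mulVecLin, hroot]
  refine ⟨hpos, hdist, ?_, ?_⟩
  · intro μ
    rw [← hev]
    constructor
    · rintro ⟨v, hv, h⟩
      exact Module.End.hasEigenvalue_of_hasEigenvector (x := v)
        ⟨Module.End.mem_eigenspace_iff.2 (by simpa using h), hv⟩
    · intro h
      obtain ⟨v, hv⟩ := h.exists_hasEigenvector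
      exact ⟨v, hv.2, by simpa using hv.apply_eq_smul⟩
  · intro k h1 h2
    set μ := 2 * (k : ℝ) * (2 * (N : ℝ) + α + β + 1 - (k : ℝ)) with hμ
    have hker : LinearMap.ker ((S - μ • (1 : Matrix (Fin N) (Fin N) ℝ)).mulVecLin) =
        Module.End.eigenspace (S.mulVecLin : Module.End ℝ (Fin N → ℝ)) μ := by
      ext v
      rw [LinearMap.mem_ker, Module.End.mem_eigenspace_iff]
      simp [Matrix.sub_mulVec, sub_eq_zero]
    rw [hker]
    have hE : Module.End.HasEigenvalue (S.mulVecLin : Module.End ℝ (Fin N → ℝ)) μ :=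
      (hev μ).2 ⟨k, h1, h2, rfl⟩
    refine le_antisymm ?_ ?_
    · refine (LinearMap.finrank_eigenspace_le _ μ).trans ?_
      rw [Matrix.charpoly_mulVecLin, hc]
      refine Polynomial.rootMultiplicity_le_one_of_separable ?_ μ
      rw [Polynomial.separable_prod_X_sub_C_iff]
      intro n p h
      have h' : 2 * ((N : ℝ) * (N + α + β + 1) - (n : ℕ) * ((n : ℕ) + α + β + 1)) =
        2 * ((N : ℝ) * (N + α + β + 1) - (p : ℕ) * ((p : ℕ) + α + β + 1)) := h
      rw [hval (N - n) n (by omega), hval (N - p) p (by omega)] at h'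
      have := hdist _ _ (by omega) (by omega) (by omega) (by omega) h'
      exact Fin.ext (by omega)
    · exact Submodule.one_le_finrank_iff.2 hE
end

section
/- Let N ≥ 1, α, β > −1, and let z_1 < ... < z_N be the ordered zeros of the Jacobi polynomial P_N^{(α,β)}. Let S̃ be the N×N matrix with entries s̃_{j,j} = 4Σ_{l≠j}(1−z_j²)/(z_j−z_l)² + 2(α+1)(1+z_j)/(1−z_j) + 2(β+1)(1−z_j)/(1+z_j) and s̃_{i,j} = −4√((1−z_i²)(1−z_j²))/(z_i−z_j)² for i ≠ j. Then there exist real polynomials q_0, q_1, ..., q_{N−1}, with q_{k−1} of degree k−1, which are orthonormal with respect to the discrete measure μ_{N,α,β} = Σ_{i=1}^N (1−z_i²)δ_{z_i} (i.e. Σ_{i=1}^N q_l(z_i)q_m(z_i)(1−z_i²) = δ_{l,m}), such that for every k = 1, ..., N the vector v_k = (q_{k−1}(z_1)√(1−z_1²), ..., q_{k−1}(z_N)√(1−z_N²))^T satisfies S̃ v_k = 2k(2N+α+β+1−k) v_k. -/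
open MeasureTheory Filter Real Finset Topology

namespace TJ

lemma wInt (α β : ℝ) (hα : -1 < α) (hβ : -1 < β) :
    IntervalIntegrable (fun x : ℝ => (1 - x) ^ α * (1 + x) ^ β) volume (-1) 1 := by
  have h1 : IntervalIntegrable (fun x : ℝ => (1 + x) ^ β) volume (-1) 0 := by
    have := (intervalIntegral.intervalIntegrable_rpow' (a := 0) (b := 1) hβ).comp_add_left 1
    simpa using this
  have h2 : IntervalIntegrable (fun x : ℝ => (1 - x) ^ α) volume 0 1 := by
    have := (intervalIntegral.intervalIntegrable_rpow' (a := 1) (b := 0) hα).comp_sub_left 1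
    simpa using this
  have c1 : ContinuousOn (fun x : ℝ => (1 - x) ^ α) (Set.uIcc (-1) 0) := by
    apply ContinuousOn.rpow_const (by fun_prop)
    intro x hx
    rw [Set.uIcc_of_le (by norm_num)] at hx
    left; have := hx.2; linarith
  have c2 : ContinuousOn (fun x : ℝ => (1 + x) ^ β) (Set.uIcc 0 1) := by
    apply ContinuousOn.rpow_const (by fun_prop)
    intro x hx
    rw [Set.uIcc_of_le (by norm_num)] at hx
    left; have := hx.1; linarith
  exact (h1.continuousOn_mul c1).trans (h2.mul_continuousOn c2)

lemma wIntP (α β : ℝ) (hα : -1 < α) (hβ : -1 < β) (R : Polynomial ℝ) :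
    IntervalIntegrable (fun x : ℝ => R.eval x * (1 - x) ^ α * (1 + x) ^ β) volume (-1) 1 := by
  have := (wInt α β hα hβ).continuousOn_mul (g := fun x => R.eval x) R.continuous.continuousOn
  simpa [mul_assoc] using this

lemma wIntP' (α β : ℝ) (hα : -1 < α) (hβ : -1 < β) (R : Polynomial ℝ) :
    IntegrableOn (fun x : ℝ => R.eval x * (1 - x) ^ α * (1 + x) ^ β) (Set.Ioo (-1) 1) volume := by
  have := wIntP α β hα hβ R
  rwa [intervalIntegrable_iff_integrableOn_Ioo_of_le (by norm_num)] at this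

open Polynomial in
/-- the first order part -/
noncomputable def tau (α β : ℝ) : Polynomial ℝ := C (β - α) - C (α + β + 2) * X

open Polynomial in
lemma key (α β : ℝ) (hα : -1 < α) (hβ : -1 < β) (R : Polynomial ℝ) :
    ∫ x in Set.Ioo (-1 : ℝ) 1,
      ((1 - X ^ 2) * derivative R + tau α β * R).eval x * (1 - x) ^ α * (1 + x) ^ β = 0 := by
  rw [← integral_Ioc_eq_integral_Ioo, ← intervalIntegral.integral_of_le (by norm_num)]
  rw [intervalIntegral.integral_eq_sub_of_hasDerivAt_of_le (by norm_num)
    (f := fun x => R.eval x * (1 - x) ^ (α + 1) * (1 + x) ^ (β + 1)) ?_ ?_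
    (wIntP α β hα hβ _)]
  · have h1 : α + 1 ≠ 0 := by linarith
    have h2 : β + 1 ≠ 0 := by linarith
    simp [h1, h2]
  · apply ContinuousOn.mul
    · apply ContinuousOn.mul R.continuous.continuousOn
      apply ContinuousOn.rpow_const (by fun_prop)
      intro x hx; right; linarith
    · apply ContinuousOn.rpow_const (by fun_prop)
      intro x hx; right; linarith
  · intro x hx
    have p1 : 0 < 1 - x := by have := hx.2; linarith
    have p2 : 0 < 1 + x := by have := hx.1; linarith
    have d1 : HasDerivAt (fun x : ℝ => (1 - x) ^ (α + 1)) (-1 * (α + 1) * (1 - x) ^ (α + 1 - 1)) x :=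
      ((hasDerivAt_id x).const_sub 1).rpow_const (Or.inl p1.ne')
    have d2 : HasDerivAt (fun x : ℝ => (1 + x) ^ (β + 1)) (1 * (β + 1) * (1 + x) ^ (β + 1 - 1)) x :=
      ((hasDerivAt_id x).const_add 1).rpow_const (Or.inl p2.ne')
    have d3 := ((R.hasDerivAt x).mul d1).mul d2
    refine d3.congr_deriv ?_
    simp only [add_sub_cancel_right, Pi.mul_apply, rpow_add_one p1.ne', rpow_add_one p2.ne', tau]
    simp
    ring

open Polynomial in
lemma zero_of_sq (α β : ℝ) (hα : -1 < α) (hβ : -1 < β) (R : Polynomial ℝ)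
    (h : ∫ x in Set.Ioo (-1 : ℝ) 1, (R * R).eval x * (1 - x) ^ α * (1 + x) ^ β = 0) : R = 0 := by
  have hnn : ∀ x ∈ Set.Ioo (-1 : ℝ) 1, 0 ≤ (R * R).eval x * (1 - x) ^ α * (1 + x) ^ β := by
    intro x hx
    have p1 : 0 < 1 - x := by have := hx.2; linarith
    have p2 : 0 < 1 + x := by have := hx.1; linarith
    rw [eval_mul]
    have := mul_self_nonneg (R.eval x)
    positivity
  rw [setIntegral_eq_zero_iff_of_nonneg_ae
    ((ae_restrict_iff' measurableSet_Ioo).2 (Eventually.of_forall hnn)) (wIntP' α β hα hβ _)] at h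
  by_contra hR
  have hfin : (R.rootSet ℝ).Finite := Polynomial.rootSet_finite R ℝ
  have h0 : ∀ᵐ x ∂(volume.restrict (Set.Ioo (-1 : ℝ) 1)), False := by
    have hn : ∀ᵐ x ∂(volume.restrict (Set.Ioo (-1 : ℝ) 1)), x ∉ R.rootSet ℝ :=
      ae_restrict_of_ae (measure_eq_zero_iff_ae_notMem.1 (hfin.measure_zero _))
    filter_upwards [h, hn, ae_restrict_mem measurableSet_Ioo] with x hx hxn hm
    have p1 : 0 < 1 - x := by have := hm.2; linarith
    have p2 : 0 < 1 + x := by have := hm.1; linarith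
    apply hxn
    rw [mem_rootSet]
    refine ⟨hR, ?_⟩
    have e1 := (rpow_pos_of_pos p1 α).ne'
    have e2 := (rpow_pos_of_pos p2 β).ne'
    simpa [e1, e2] using hx
  rw [ae_iff] at h0
  simp at h0
  norm_num at h0

open Polynomial in
/-- Jacobi operator -/
noncomputable def L (α β : ℝ) (P : Polynomial ℝ) : Polynomial ℝ :=
  (1 - X ^ 2) * derivative (derivative P) + tau α β * derivative P

open Polynomial in
lemma L_deg (α β : ℝ) (P : Polynomial ℝ) : (L α β P).natDegree ≤ P.natDegree := by
  unfold L
  have hd := natDegree_derivative_le P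
  have hd2 := natDegree_derivative_le (derivative P)
  have ht : (tau α β).natDegree ≤ 1 := by unfold tau; compute_degree
  have hq : (1 - X ^ 2 : Polynomial ℝ).natDegree ≤ 2 := by compute_degree
  apply natDegree_add_le_of_degree_le
  · by_cases h2 : derivative (derivative P) = 0
    · simp [h2]
    have : 2 ≤ P.natDegree := by
      by_contra hlt
      apply h2
      have : (derivative P).natDegree = 0 := by omega
      rw [eq_C_of_natDegree_eq_zero this]; simp
    exact natDegree_mul_le.trans (by omega)
  · by_cases h2 : derivative P = 0
    · simp [h2]
    have : 1 ≤ P.natDegree := by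
      by_contra hlt
      apply h2
      have : P.natDegree = 0 := by omega
      rw [eq_C_of_natDegree_eq_zero this]; simp
    exact natDegree_mul_le.trans (by omega)

open Polynomial in
lemma ode (N : ℕ) (hN : 1 ≤ N) (α β : ℝ) (hα : -1 < α) (hβ : -1 < β)
    (P : Polynomial ℝ) (hPdeg : P.natDegree = N)
    (hPorth : ∀ Q : Polynomial ℝ, Q.natDegree < N →
      ∫ x in Set.Ioo (-1 : ℝ) 1,
        P.eval x * Q.eval x * (1 - x) ^ α * (1 + x) ^ β = 0) :
    ∃ c : ℝ, L α β P = C c * P := by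
  have hLQ : ∀ Q : Polynomial ℝ, Q.natDegree < N →
      ∫ x in Set.Ioo (-1 : ℝ) 1, (L α β P * Q).eval x * (1 - x) ^ α * (1 + x) ^ β = 0 := by
    intro Q hQ
    have h1 := key α β hα hβ (derivative P * Q - P * derivative Q)
    have h2 := hPorth (L α β Q) ((L_deg α β Q).trans_lt hQ)
    simp only [← eval_mul] at h2
    have h3 := integral_add (wIntP' α β hα hβ ((1 - X ^ 2) * derivative (derivative P * Q - P * derivative Q) + tau α β * (derivative P * Q - P * derivative Q))) (wIntP' α β hα hβ (P * L α β Q))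
    rw [h1, h2] at h3
    rw [← add_zero (0:ℝ), ← h3]
    congr 1
    ext x
    rw [← add_mul, ← add_mul, ← eval_add]
    congr 3
    simp only [L, derivative_sub, derivative_mul]
    ring
  have hlc : P.coeff N ≠ 0 := by
    rw [← hPdeg]; 
    have : P ≠ 0 := by rintro rfl; simp at hPdeg; omega
    simpa using this
  set c := (L α β P).coeff N / P.coeff N with hc
  refine ⟨c, ?_⟩
  set R := L α β P - C c * P with hR
  have hRd : R.natDegree < N := by
    have h1 : R.natDegree ≤ N := by
      refine (natDegree_sub_le _ _).trans (max_le ((L_deg α β P).trans hPdeg.le) ?_)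
      exact (natDegree_C_mul_le _ _).trans hPdeg.le
    have h2 : R.coeff N = 0 := by
      rw [hR, coeff_sub, coeff_C_mul, hc]; field_simp; simp
    refine lt_of_le_of_ne h1 fun h => ?_
    have h3 : R.leadingCoeff = 0 := by rw [leadingCoeff, h, h2]
    rw [leadingCoeff_eq_zero] at h3
    rw [h3] at h; simp at h; omega
  have hR0 : R = 0 := by
    apply zero_of_sq α β hα hβ
    have h1 := hLQ R hRd
    have h2 := hPorth R hRd
    simp only [← eval_mul] at h2
    have h3 := integral_sub (wIntP' α β hα hβ (L α β P * R)) ((wIntP' α β hα hβ (P * R)).const_mul c)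
    rw [integral_const_mul, h1, h2] at h3
    simp only [mul_zero, sub_zero] at h3
    rw [← h3]
    congr 1
    ext x
    have hRx : R.eval x = (L α β P).eval x - c * P.eval x := by
      rw [hR, eval_sub, eval_mul, eval_C]
    simp only [eval_mul]
    rw [hRx]
    ring
  exact sub_eq_zero.1 hR0

open Polynomial in
lemma stieltjes (N : ℕ) (hN : 1 ≤ N) (α β : ℝ) 
    (P : Polynomial ℝ) (hPdeg : P.natDegree = N) (c : ℝ) (hode : L α β P = C c * P)
    (z : Fin N → ℝ) (hz : Function.Injective z)
    (hzroot : ∀ i, P.eval (z i) = 0) (hzmem : ∀ i, z i ∈ Set.Ioo (-1 : ℝ) 1) (i : Fin N) :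
    2 * ∑ l ∈ Finset.univ.erase i, 1 / (z i - z l) =
      (α + 1) / (1 - z i) - (β + 1) / (1 + z i) := by
  have hP0 : P ≠ 0 := by rintro rfl; simp at hPdeg; omega
  set G : Polynomial ℝ := ∏ l, (X - C (z l)) with hG
  have hdvd : G ∣ P := by
    apply Finset.prod_dvd_of_coprime
    · intro a _ b _ hab
      exact isCoprime_X_sub_C_of_isUnit_sub (sub_ne_zero.2 (hz.ne hab)).isUnit
    · intro a _
      exact dvd_iff_isRoot.2 (hzroot a)
  obtain ⟨K, hK⟩ := hdvd
  have hGd : G.natDegree = N := by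
    rw [hG, natDegree_prod_of_monic _ _ (fun l _ => monic_X_sub_C _)]; simp
  have hK0 : K ≠ 0 := by rintro rfl; simp at hK; exact hP0 hK
  have hKd : K.natDegree = 0 := by
    have hG0 : G ≠ 0 := by rintro h; rw [h] at hK; simp at hK; exact hP0 hK
    have := natDegree_mul hG0 hK0
    rw [← hK] at this; omega
  obtain ⟨a, rfl⟩ : ∃ a, K = C a := ⟨_, eq_C_of_natDegree_eq_zero hKd⟩
  have ha : a ≠ 0 := by rintro rfl; simp at hK0
  set R : Polynomial ℝ := ∏ l ∈ Finset.univ.erase i, (X - C (z l)) with hR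
  have hPR : P = (X - C (z i)) * (R * C a) := by
    rw [hK, hG, ← Finset.mul_prod_erase _ _ (Finset.mem_univ i), mul_assoc]
  have hne : ∀ l ∈ Finset.univ.erase i, z i - z l ≠ 0 := by
    intro l hl
    exact sub_ne_zero.2 (hz.ne (Finset.ne_of_mem_erase hl).symm)
  have hRi : R.eval (z i) ≠ 0 := by
    rw [hR, eval_prod, Finset.prod_ne_zero_iff]
    intro l hl
    simpa using hne l hl
  have hR' : (derivative R).eval (z i) = R.eval (z i) * ∑ l ∈ Finset.univ.erase i, 1 / (z i - z l) := by
    rw [hR, derivative_prod_finset, eval_finsetSum, Finset.mul_sum]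
    apply Finset.sum_congr rfl
    intro l hl
    rw [eval_prod, ← Finset.mul_prod_erase _ _ hl, ← eval_prod]
    have := hne l hl
    simp
    field_simp
  generalize ∑ l ∈ Finset.univ.erase i, 1 / (z i - z l) = s at *
  have he := congrArg (eval (z i)) hode
  simp only [L, eval_mul, hzroot, mul_zero, eval_add] at he
  rw [hPR] at he
  simp [tau, hR'] at he
  have hm := hzmem i
  have p1 : 1 - z i ≠ 0 := by have := hm.2; linarith
  have p2 : 1 + z i ≠ 0 := by have := hm.1; linarith
  have hRa : eval (z i) R * a ≠ 0 := mul_ne_zero hRi ha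
  have : (1 - z i ^ 2) * (2 * s) + (β - α - (α + β + 2) * z i) = 0 := by
    apply mul_left_cancel₀ hRa
    linear_combination he
  field_simp
  linear_combination this
end TJ

namespace TJ
open Polynomial

/-- Taylor remainder polynomials of monomials. -/
noncomputable def H (y : ℝ) : ℕ → ℝ[X]
  | 0 => 0
  | m + 1 => C y * H y m + C (m : ℝ) * X ^ (m - 1)

lemma natmul (m : ℕ) (x : ℝ) : (m : ℝ) * x ^ (m - 1) * x = m * x ^ m := by
  cases m with
  | zero => simp
  | succ m => rw [Nat.add_sub_cancel, pow_succ]; ring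

lemma H_id (x y : ℝ) (m : ℕ) :
    (y - x) ^ 2 * (H y m).eval x = y ^ m - x ^ m - m * x ^ (m - 1) * (y - x) := by
  induction m with
  | zero => simp [H]
  | succ m ih =>
    have := natmul m x
    simp only [H, eval_add, eval_mul, eval_C, eval_pow, eval_X, Nat.add_sub_cancel]
    push_cast
    linear_combination y * ih - (y - x) * this

lemma H_diag (x : ℝ) (m : ℕ) : 2 * (H x m).eval x = m * (m - 1) * x ^ (m - 2) := by
  induction m with
  | zero => simp [H]
  | succ m ih =>
    simp only [H, eval_add, eval_mul, eval_C, eval_pow, eval_X]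
    rcases m with _ | _ | m
    · simp [H]
    · simp at ih ⊢; rw [ih]; norm_num
    · simp only [show m + 1 + 1 - 2 = m by omega, show m + 1 + 1 + 1 - 2 = m + 1 by omega,
        show m + 1 + 1 - 1 = m + 1 by omega] at ih ⊢
      push_cast at ih ⊢
      linear_combination x * ih

lemma X_mem {m k : ℕ} (h : m < k) : (X ^ m : ℝ[X]) ∈ degreeLT ℝ k := by
  rw [mem_degreeLT, degree_X_pow]; exact_mod_cast h

lemma C_mul_mem {k : ℕ} (a : ℝ) {p : ℝ[X]} (h : p ∈ degreeLT ℝ k) : C a * p ∈ degreeLT ℝ k := by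
  rw [← smul_eq_C_mul]; exact Submodule.smul_mem _ _ h

lemma natX_mem (m k : ℕ) (a : ℝ) (h : m ≤ k) : C ((m : ℝ) * a) * X ^ (m - 1) ∈ degreeLT ℝ k := by
  cases m with
  | zero => simp
  | succ m => exact C_mul_mem _ (X_mem (by omega))

lemma H_mem (y : ℝ) (m : ℕ) : H y (m + 1) ∈ degreeLT ℝ m := by
  induction m with
  | zero => simp [H]
  | succ m ih =>
    rw [H]
    refine Submodule.add_mem _ (C_mul_mem _ (degreeLT_mono (by omega) ih)) ?_
    simpa using natX_mem (m + 1) (m + 1) 1 le_rfl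

lemma H_mem' (y : ℝ) (m : ℕ) : H y m ∈ degreeLT ℝ m := by
  cases m with
  | zero => simp [H]
  | succ m => exact degreeLT_mono (by omega) (H_mem y m)

section
variable {N : ℕ} (α β : ℝ) (z : Fin N → ℝ)

/-- The conjugated matrix acting on vectors of values. -/
noncomputable def Aop (u : Fin N → ℝ) (i : Fin N) : ℝ :=
  (4 * (∑ l ∈ Finset.univ.erase i, (1 - z i ^ 2) / (z i - z l) ^ 2) +
          2 * (α + 1) * ((1 + z i) / (1 - z i)) + 2 * (β + 1) * ((1 - z i) / (1 + z i))) * u i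
    - 4 * ∑ j ∈ Finset.univ.erase i, (1 - z j ^ 2) * u j / (z i - z j) ^ 2

lemma Aop_lin (a : ℝ) (u v : Fin N → ℝ) (i : Fin N) :
    Aop α β z (fun j => a * u j + v j) i = a * Aop α β z u i + Aop α β z v i := by
  have : ∑ j ∈ Finset.univ.erase i, (1 - z j ^ 2) * (a * u j + v j) / (z i - z j) ^ 2
    = a * ∑ j ∈ Finset.univ.erase i, (1 - z j ^ 2) * u j / (z i - z j) ^ 2
     + ∑ j ∈ Finset.univ.erase i, (1 - z j ^ 2) * v j / (z i - z j) ^ 2 := by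
    rw [Finset.mul_sum, ← Finset.sum_add_distrib]
    apply Finset.sum_congr rfl
    intros; ring
  simp only [Aop, this]
  ring

lemma Aop_symm (u v : Fin N → ℝ) :
    ∑ i, Aop α β z u i * v i * (1 - z i ^ 2) = ∑ i, u i * Aop α β z v i * (1 - z i ^ 2) := by
  have h : ∀ u : Fin N → ℝ, ∀ i, ∑ j ∈ Finset.univ.erase i, (1 - z j ^ 2) * u j / (z i - z j) ^ 2
      = ∑ j, (1 - z j ^ 2) * u j / (z i - z j) ^ 2 := by
    intro u i
    apply Finset.sum_erase; simp
  have h2 : ∑ i, ∑ j, (1 - z j ^ 2) * u j / (z i - z j) ^ 2 * v i * (1 - z i ^ 2)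
      = ∑ i, ∑ j, (1 - z j ^ 2) * v j / (z i - z j) ^ 2 * u i * (1 - z i ^ 2) := by
    rw [Finset.sum_comm]
    refine Finset.sum_congr rfl fun i _ => Finset.sum_congr rfl fun j _ => ?_
    rw [show (z j - z i) ^ 2 = (z i - z j) ^ 2 by ring]
    ring
  simp only [← Finset.sum_mul] at h2
  simp only [Aop, h]
  rw [← sub_eq_zero, ← Finset.sum_sub_distrib] at h2 ⊢
  rw [← mul_zero (-4 : ℝ), ← h2, Finset.mul_sum]
  refine Finset.sum_congr rfl fun i _ => ?_
  ring

/-- eigenvalues -/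
noncomputable def lam (N : ℕ) (k : ℕ) : ℝ :=
  2 * ((k : ℝ) + 1) * (2 * (N : ℝ) + α + β + 1 - ((k : ℝ) + 1))

lemma A_mono (hz : Function.Injective z) (hzmem : ∀ i, z i ∈ Set.Ioo (-1 : ℝ) 1)
    (hst : ∀ i, 2 * ∑ l ∈ Finset.univ.erase i, 1 / (z i - z l) =
      (α + 1) / (1 - z i) - (β + 1) / (1 + z i)) (k : ℕ) :
    ∃ r ∈ degreeLT ℝ k, ∀ i, Aop α β z (fun j => z j ^ k) i
      = lam α β N k * z i ^ k + r.eval (z i) := by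
  refine ⟨C ((k : ℝ) * (2 * (α - β))) * X ^ (k - 1)
    - C 4 * ∑ j, (H (z j) k - C (z j) * H (z j) (k + 1))
    + C ((k : ℝ) * (2 * ((k : ℝ) - 1))) * X ^ (k - 2), ?_, ?_⟩
  · refine Submodule.add_mem _ (Submodule.sub_mem _ (natX_mem k k _ le_rfl) (C_mul_mem _
      (Submodule.sum_mem _ fun j _ => Submodule.sub_mem _ (H_mem' _ _) (C_mul_mem _ (H_mem _ _))))) ?_
    · rcases k with _ | _ | k
      · simp
      · simp
      · exact C_mul_mem _ (X_mem (by omega))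
  · intro i
    have hm := hzmem i
    have p1 : 1 - z i ≠ 0 := by have := hm.2; linarith
    have p2 : 1 + z i ≠ 0 := by have := hm.1; linarith
    set x := z i with hx
    have hk := natmul k x
    set g' : ℝ := k * x ^ (k - 1) - (k + 2) * x ^ (k + 1) with hg'
    have e1 : (4 * ∑ l ∈ Finset.univ.erase i, (1 - x ^ 2) / (x - z l) ^ 2) * x ^ k
        - 4 * ∑ j ∈ Finset.univ.erase i, (1 - z j ^ 2) * z j ^ k / (x - z j) ^ 2
        = 4 * g' * ∑ l ∈ Finset.univ.erase i, 1 / (x - z l)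
          - 4 * ∑ l ∈ Finset.univ.erase i, ((H (z l) k).eval x - (H (z l) (k + 2)).eval x) := by
      simp only [Finset.mul_sum, Finset.sum_mul, ← Finset.sum_sub_distrib]
      refine Finset.sum_congr rfl fun l hl => ?_
      have hne : x - z l ≠ 0 := sub_ne_zero.2 (hz.ne (Finset.ne_of_mem_erase hl).symm)
      have i1 := H_id x (z l) k
      have i2 := H_id x (z l) (k + 2)
      simp only [show k + 2 - 1 = k + 1 by omega] at i2
      push_cast at i2
      have i3 : (z l - x) ^ 2 = (x - z l) ^ 2 := by ring
      rw [i3] at i1 i2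
      have j1 : (H (z l) k).eval x - (H (z l) (k + 2)).eval x =
        ((z l ^ k - x ^ k - k * x ^ (k - 1) * (z l - x)) -
        (z l ^ (k + 2) - x ^ (k + 2) - (k + 2) * x ^ (k + 1) * (z l - x))) / (x - z l) ^ 2 := by
        rw [eq_div_iff (pow_ne_zero 2 hne)]
        linear_combination i1 - i2
      rw [j1, hg']
      field_simp
      ring
    have e2 : ∑ l ∈ Finset.univ.erase i, ((H (z l) k).eval x - (H (z l) (k + 2)).eval x)
       = ∑ l, ((H (z l) k).eval x - z l * (H (z l) (k + 1)).eval x) - N * ((k + 1) * x ^ k)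
         - ((H x k).eval x - (H x (k + 2)).eval x) := by
      rw [eq_sub_of_add_eq' (Finset.add_sum_erase _
        (fun l => (H (z l) k).eval x - (H (z l) (k + 2)).eval x) (Finset.mem_univ i))]
      congr 1
      rw [show (N : ℝ) * ((k + 1) * x ^ k) = ∑ l : Fin N, (k + 1) * x ^ k by simp,
        ← Finset.sum_sub_distrib]
      refine Finset.sum_congr rfl fun l hl => ?_
      have : H (z l) (k + 2) = C (z l) * H (z l) (k + 1) + C ((k + 1 : ℕ) : ℝ) * X ^ k := rfl
      rw [this]
      simp
      ring
    have d1 := H_diag x k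
    have d2 := H_diag x (k + 2)
    simp only [show k + 2 - 2 = k by omega] at d2
    push_cast at d2
    have s := hst i
    rw [← hx] at s
    have e3 : 2 * g' * ((α + 1) / (1 - x) - (β + 1) / (1 + x))
      + (2 * (α + 1) * ((1 + x) / (1 - x)) + 2 * (β + 1) * ((1 - x) / (1 + x))) * x ^ k
      = 2 * k * x ^ (k - 1) * ((α + β + 2) * x + (α - β)) + 2 * (α + β + 2) * x ^ k := by
      have : g' = k * x ^ (k - 1) * (1 - x ^ 2) - 2 * x * x ^ k := by
        rw [hg']; linear_combination x * hk
      have ha : (1 - x)⁻¹ * (1 - x) = 1 := inv_mul_cancel₀ p1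
      have hb : (1 + x)⁻¹ * (1 + x) = 1 := inv_mul_cancel₀ p2
      rw [this]
      simp only [div_eq_mul_inv]
      linear_combination 2 * (α + 1) * (k * x ^ (k - 1) * (1 + x) + x ^ k) * ha
        + 2 * (β + 1) * (x ^ k - k * x ^ (k - 1) * (1 - x)) * hb
    simp only [Aop, ← hx]
    simp only [eval_add, eval_sub, eval_mul, eval_C, eval_pow, eval_X, eval_finsetSum, lam]
    rw [e2] at e1
    linear_combination e1 + e3 + 2 * g' * s + 2 * d1 - 2 * d2 + 2 * (α + β + 2) * hk

lemma split_top (k : ℕ) (f : ℝ[X]) (hf : f ∈ degreeLT ℝ (k + 1)) :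
    ∃ a : ℝ, ∃ f' ∈ degreeLT ℝ k, f = C a * X ^ k + f' := by
  refine ⟨f.coeff k, f - C (f.coeff k) * X ^ k, ?_, by ring⟩
  rw [mem_degreeLT, degree_lt_iff_coeff_zero]
  intro m hm
  rcases hm.eq_or_lt with rfl | h
  · simp
  · rw [mem_degreeLT, degree_lt_iff_coeff_zero] at hf
    simp [hf m h, coeff_X_pow, h.ne']

variable {z}

lemma A_low (hmono : ∀ k : ℕ, ∃ r ∈ degreeLT ℝ k, ∀ i, Aop α β z (fun j => z j ^ k) i
      = lam α β N k * z i ^ k + r.eval (z i)) (k : ℕ) :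
    ∀ f ∈ degreeLT ℝ k, ∃ g ∈ degreeLT ℝ k, ∀ i, Aop α β z (fun j => f.eval (z j)) i
      = g.eval (z i) := by
  induction k with
  | zero =>
    intro f hf
    have : f = 0 := by simpa [mem_degreeLT] using hf
    subst this
    exact ⟨0, Submodule.zero_mem _, fun i => by simp [Aop]⟩
  | succ k ih =>
    intro f hf
    obtain ⟨a, f', hf', rfl⟩ := split_top k f hf
    obtain ⟨r, hr, hr'⟩ := hmono k
    obtain ⟨g, hg, hg'⟩ := ih f' hf'
    refine ⟨C a * (C (lam α β N k) * X ^ k + r) + g, ?_, ?_⟩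
    · exact Submodule.add_mem _ (C_mul_mem _ (Submodule.add_mem _ (C_mul_mem _ (X_mem (by omega)))
        (degreeLT_mono (by omega) hr))) (degreeLT_mono (by omega) hg)
    · intro i
      simp only [eval_add, eval_mul, eval_C, eval_pow, eval_X]
      rw [Aop_lin, hr', hg']

lemma A_top (hmono : ∀ k : ℕ, ∃ r ∈ degreeLT ℝ k, ∀ i, Aop α β z (fun j => z j ^ k) i
      = lam α β N k * z i ^ k + r.eval (z i)) (k : ℕ) (f : ℝ[X]) (hf : f ∈ degreeLT ℝ (k + 1)) :
    ∃ g ∈ degreeLT ℝ k, ∀ i, Aop α β z (fun j => f.eval (z j)) i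
      = lam α β N k * f.eval (z i) + g.eval (z i) := by
  obtain ⟨a, f', hf', rfl⟩ := split_top k f hf
  obtain ⟨r, hr, hr'⟩ := hmono k
  obtain ⟨g, hg, hg'⟩ := A_low α β hmono k f' hf'
  refine ⟨C a * r + g - C (lam α β N k) * f', ?_, ?_⟩
  · exact Submodule.sub_mem _ (Submodule.add_mem _ (C_mul_mem _ hr) hg) (C_mul_mem _ hf')
  · intro i
    simp only [eval_add, eval_sub, eval_mul, eval_C, eval_pow, eval_X]
    rw [Aop_lin, hr', hg']
    ring

variable (z) in
/-- the discrete inner product -/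
noncomputable def ip : ℝ[X] →ₗ[ℝ] ℝ[X] →ₗ[ℝ] ℝ :=
  LinearMap.mk₂ ℝ (fun f g => ∑ i, f.eval (z i) * g.eval (z i) * (1 - z i ^ 2))
    (by intros; simp [add_mul, Finset.sum_add_distrib])
    (by intros; simp [Finset.mul_sum, mul_assoc])
    (by intros; simp [add_mul, mul_add, Finset.sum_add_distrib])
    (by intros; simp only [Finset.mul_sum, smul_eq_mul, eval_smul]
        refine Finset.sum_congr rfl fun _ _ => ?_
        ring)

lemma ip_apply (f g : ℝ[X]) :
    ip z f g = ∑ i, f.eval (z i) * g.eval (z i) * (1 - z i ^ 2) := rfl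

lemma ip_comm (f g : ℝ[X]) : ip z f g = ip z g f := by
  simp only [ip_apply]
  refine Finset.sum_congr rfl fun _ _ => ?_
  ring

lemma w_pos (hzmem : ∀ i, z i ∈ Set.Ioo (-1 : ℝ) 1) (i : Fin N) : 0 < 1 - z i ^ 2 := by
  have := (hzmem i).1
  have := (hzmem i).2
  nlinarith

lemma ip_nonneg (hzmem : ∀ i, z i ∈ Set.Ioo (-1 : ℝ) 1) (f : ℝ[X]) : 0 ≤ ip z f f := by
  rw [ip_apply]
  exact Finset.sum_nonneg fun i _ => mul_nonneg (mul_self_nonneg _) (w_pos hzmem i).le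

lemma ip_zero_eval (hzmem : ∀ i, z i ∈ Set.Ioo (-1 : ℝ) 1) (f : ℝ[X]) (h : ip z f f = 0)
    (i : Fin N) : f.eval (z i) = 0 := by
  rw [ip_apply, Finset.sum_eq_zero_iff_of_nonneg
    (fun i _ => mul_nonneg (mul_self_nonneg _) (w_pos hzmem i).le)] at h
  have := h i (Finset.mem_univ i)
  simpa [(w_pos hzmem i).ne'] using this

lemma ip_zero (hz : Function.Injective z) (hzmem : ∀ i, z i ∈ Set.Ioo (-1 : ℝ) 1) (f : ℝ[X])
    (hf : f ∈ degreeLT ℝ N) (h : ip z f f = 0) : f = 0 := by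
  rw [mem_degreeLT] at hf
  apply eq_zero_of_degree_lt_of_eval_index_eq_zero (v := z) (s := Finset.univ) hz.injOn (by simpa using hf)
  intro i _
  exact ip_zero_eval hzmem f h i

lemma gs (hz : Function.Injective z) (hzmem : ∀ i, z i ∈ Set.Ioo (-1 : ℝ) 1) (k : ℕ) (hk : k < N) :
    ∃ q : ℝ[X], q.natDegree = k ∧ (∀ p ∈ degreeLT ℝ k, ip z q p = 0) ∧ ip z q q = 1 := by
  let V := degreeLT ℝ k
  have : FiniteDimensional ℝ V := Module.Finite.equiv (degreeLTEquiv ℝ k).symm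
  let B : V →ₗ[ℝ] Module.Dual ℝ V := (ip z).domRestrict₁₂ V V
  have hB : ∀ p q : V, B p q = ip z p q := fun _ _ => rfl
  have hinj : Function.Injective B := by
    rw [injective_iff_map_eq_zero]
    intro p hp
    have : B p p = 0 := by rw [hp]; rfl
    rw [hB] at this
    exact Subtype.ext (ip_zero hz hzmem p (degreeLT_mono hk.le p.2) this)
  have hsurj : Function.Surjective B :=
    (LinearMap.injective_iff_surjective_of_finrank_eq_finrank
      (Subspace.dual_finrank_eq (K := ℝ) (V := V)).symm).1 hinj
  obtain ⟨⟨p, hpV⟩, hp⟩ := hsurj ((ip z (X ^ k)).domRestrict V)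
  set q0 : ℝ[X] := X ^ k - (p : ℝ[X]) with hq0
  have hq0d : q0.degree = k := by
    rw [hq0, degree_sub_eq_left_of_degree_lt]
    · simp
    · rw [degree_X_pow]; exact mem_degreeLT.1 hpV
  have hq0nd : q0.natDegree = k := natDegree_eq_of_degree_eq_some hq0d
  have horth : ∀ s ∈ degreeLT ℝ k, ip z q0 s = 0 := by
    intro s hs
    have := LinearMap.congr_fun hp ⟨s, hs⟩
    rw [hB] at this
    rw [hq0, map_sub, LinearMap.sub_apply, this]
    simp
  have hq00 : q0 ≠ 0 := by rintro h; rw [h] at hq0d; simp at hq0d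
  have hpos : 0 < ip z q0 q0 := by
    refine lt_of_le_of_ne (ip_nonneg hzmem q0) fun h => hq00 ?_
    refine ip_zero hz hzmem q0 ?_ h.symm
    rw [mem_degreeLT, hq0d]; exact_mod_cast hk
  have hs : (Real.sqrt (ip z q0 q0))⁻¹ ≠ 0 := (inv_pos.2 (Real.sqrt_pos.2 hpos)).ne'
  refine ⟨(Real.sqrt (ip z q0 q0))⁻¹ • q0, ?_, ?_, ?_⟩
  · rw [natDegree_smul _ hs, hq0nd]
  · intro s hs
    simp [horth s hs]
  · simp only [map_smul, LinearMap.smul_apply, smul_eq_mul]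
    rw [← mul_assoc, ← mul_inv, Real.mul_self_sqrt hpos.le, inv_mul_cancel₀ hpos.ne']

end
end TJ
theorem trig_jacobi_matrix_eigenvectors
    (N : ℕ) (hN : 1 ≤ N) (α β : ℝ) (hα : -1 < α) (hβ : -1 < β)
    (P : Polynomial ℝ) (hPdeg : P.natDegree = N)
    (hPorth : ∀ Q : Polynomial ℝ, Q.natDegree < N →
      ∫ x in Set.Ioo (-1 : ℝ) 1,
        P.eval x * Q.eval x * (1 - x) ^ α * (1 + x) ^ β = 0)
    (hPone : P.eval 1 = (∏ j ∈ Finset.range N, (α + 1 + j)) / (N.factorial : ℝ))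
    (z : Fin N → ℝ) (hzmono : StrictMono z)
    (hzroot : ∀ i, P.eval (z i) = 0)
    (hzmem : ∀ i, z i ∈ Set.Ioo (-1 : ℝ) 1)
    (S : Matrix (Fin N) (Fin N) ℝ)
    (hS : S = Matrix.of fun i j =>
      if i = j then
        4 * (∑ l ∈ Finset.univ.erase j, (1 - z j ^ 2) / (z j - z l) ^ 2) +
          2 * (α + 1) * ((1 + z j) / (1 - z j)) + 2 * (β + 1) * ((1 - z j) / (1 + z j))
      else -4 * Real.sqrt ((1 - z i ^ 2) * (1 - z j ^ 2)) / (z i - z j) ^ 2)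
    : ∃ q : Fin N → Polynomial ℝ,
      (∀ k : Fin N, (q k).natDegree = (k : ℕ)) ∧
      (∀ k l : Fin N,
        (∑ i, (q k).eval (z i) * (q l).eval (z i) * (1 - z i ^ 2)) =
          if k = l then 1 else 0) ∧
      (∀ k : Fin N,
        S.mulVec (fun i => (q k).eval (z i) * Real.sqrt (1 - z i ^ 2)) =
          (2 * ((k : ℝ) + 1) * (2 * (N : ℝ) + α + β + 1 - ((k : ℝ) + 1))) •
            fun i => (q k).eval (z i) * Real.sqrt (1 - z i ^ 2)) := by
  have hz := hzmono.injective
  obtain ⟨c, hc⟩ := TJ.ode N hN α β hα hβ P hPdeg hPorth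
  have hst := TJ.stieltjes N hN α β P hPdeg c hc z hz hzroot hzmem
  have hmono := TJ.A_mono α β z hz hzmem hst
  choose q hqd hqo hqn using fun k : Fin N => TJ.gs hz hzmem k k.2
  have hlt : ∀ k l : Fin N, k < l → q k ∈ Polynomial.degreeLT ℝ l := by
    intro k l h
    rw [Polynomial.mem_degreeLT]
    refine Polynomial.degree_le_natDegree.trans_lt ?_
    rw [hqd]; exact_mod_cast h
  refine ⟨q, hqd, ?_, ?_⟩
  · intro k l
    rw [← TJ.ip_apply]
    split_ifs with h
    · subst h; exact hqn k
    · rcases lt_or_gt_of_ne h with h | h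
      · rw [TJ.ip_comm]; exact hqo l _ (hlt k l h)
      · exact hqo k _ (hlt l k h)
  · intro k
    have hA : ∀ i, TJ.Aop α β z (fun j => (q k).eval (z j)) i = TJ.lam α β N k * (q k).eval (z i) := by
      obtain ⟨g, hg, hg'⟩ := TJ.A_top α β hmono k (q k) (by
        rw [Polynomial.mem_degreeLT]
        refine Polynomial.degree_le_natDegree.trans_lt ?_
        rw [hqd]; exact_mod_cast Nat.lt_succ_self _)
      obtain ⟨s, hs, hs'⟩ := TJ.A_low α β hmono k g hg
      have hsym := TJ.Aop_symm α β z (fun j => (q k).eval (z j)) (fun j => g.eval (z j))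
      simp only [hg', hs'] at hsym
      have h1 := hqo k s hs
      have h2 := hqo k g hg
      rw [← TJ.ip_apply, h1] at hsym
      have h3 : TJ.ip z g g = 0 := by
        rw [← hsym, ← sub_eq_zero, ← neg_zero, ← mul_zero (TJ.lam α β N k), ← h2, TJ.ip_apply, TJ.ip_apply, Finset.mul_sum, ← Finset.sum_sub_distrib, ← Finset.sum_neg_distrib]
        refine Finset.sum_congr rfl fun i _ => ?_
        ring
      intro i
      rw [hg', TJ.ip_zero_eval hzmem g h3 i, add_zero]
    ext i
    have hi := hA i
    simp only [Pi.smul_apply, smul_eq_mul]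
    have hgoal : S.mulVec (fun i => (q k).eval (z i) * Real.sqrt (1 - z i ^ 2)) i
        = Real.sqrt (1 - z i ^ 2) * TJ.Aop α β z (fun j => (q k).eval (z j)) i := by
      rw [Matrix.mulVec, dotProduct, ← Finset.add_sum_erase _ _ (Finset.mem_univ i), TJ.Aop,
        mul_sub, sub_eq_add_neg]
      congr 1
      · rw [hS]; simp only [Matrix.of_apply, if_true]; ring
      · rw [Finset.mul_sum, Finset.mul_sum, ← Finset.sum_neg_distrib]
        refine Finset.sum_congr rfl fun j hj => ?_
        rw [hS]
        simp only [Matrix.of_apply, if_neg (Finset.ne_of_mem_erase hj).symm]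
        have hw := (TJ.w_pos hzmem j).le
        rw [Real.sqrt_mul (TJ.w_pos hzmem i).le]
        have := Real.mul_self_sqrt hw
        generalize Real.sqrt (1 - z j ^ 2) = t at *
        rw [← this]
        ring
    rw [hgoal, hi, TJ.lam]
    ring
end

section
/- Let N ≥ 1, α, β > −1, and let z_1 < ... < z_N be the ordered zeros of the Jacobi polynomial P_N^{(α,β)}. Let S be the N×N matrix with entries s_{j,j} = Σ_{l≠j} 1/(z_j−z_l)² + (α+1)/2 · 1/(1−z_j)² + (β+1)/2 · 1/(1+z_j)² and s_{i,j} = −1/(z_i−z_j)² for i ≠ j. Then det(S) = (N!/2^{3N}) · ((N+α+β+1)_N)³ / ((α+1)_N (β+1)_N), where (x)_N = x(x+1)···(x+N−1) denotes the Pochhammer symbol. -/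
open MeasureTheory Filter Real Finset Topology

open Polynomial in
/-- The second-order operator `(a0 + a1 x - x²) q'' + (b0 - b1 x) q' + lam q`. -/
noncomputable def jop (a0 a1 b0 b1 lam : ℝ) : Polynomial ℝ →ₗ[ℝ] Polynomial ℝ where
  toFun q := (C a0 + C a1 * X - X ^ 2) * derivative (derivative q)
    + (C b0 - C b1 * X) * derivative q + C lam * q
  map_add' p q := by simp only [map_add]; ring
  map_smul' c q := by
    simp only [Polynomial.smul_eq_C_mul, Polynomial.derivative_C_mul, RingHom.id_apply]; ring

open Polynomial in
theorem jop_apply (a0 a1 b0 b1 lam : ℝ) (q : Polynomial ℝ) :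
    jop a0 a1 b0 b1 lam q = (C a0 + C a1 * X - X ^ 2) * derivative (derivative q)
    + (C b0 - C b1 * X) * derivative q + C lam * q := rfl

open Polynomial in
theorem jop_coeff (a0 a1 b0 b1 lam : ℝ) (q : Polynomial ℝ) (i : ℕ) :
    (jop a0 a1 b0 b1 lam q).coeff i =
      a0 * ((i + 2) * (i + 1)) * q.coeff (i + 2) + (a1 * i + b0) * (i + 1) * q.coeff (i + 1)
      + (lam - i * (i - 1 + b1)) * q.coeff i := by
  have h : jop a0 a1 b0 b1 lam q = C a0 * derivative (derivative q)
      + C a1 * (X * derivative (derivative q)) - X * (X * derivative (derivative q))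
      + C b0 * derivative q - C b1 * (X * derivative q) + C lam * q := by
    rw [jop_apply]; ring
  rw [h]
  rcases i with _ | _ | i
  · simp [coeff_derivative]; ring
  · simp [coeff_derivative, coeff_X_mul]; ring
  · simp only [coeff_add, coeff_sub, coeff_C_mul, coeff_X_mul, coeff_derivative]
    push_cast; ring

theorem jop_natDegree_le (a0 a1 b0 b1 lam : ℝ) (q : Polynomial ℝ) (n : ℕ)
    (h : q.natDegree < n) : (jop a0 a1 b0 b1 lam q).natDegree < n := by
  refine lt_of_le_of_lt (b := q.natDegree) (Polynomial.natDegree_le_iff_coeff_eq_zero.2 ?_) h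
  intro i hi
  rw [jop_coeff, Polynomial.coeff_eq_zero_of_natDegree_lt hi,
    Polynomial.coeff_eq_zero_of_natDegree_lt (by omega),
    Polynomial.coeff_eq_zero_of_natDegree_lt (by omega)]
  ring

theorem jop_natDegree_lt (a0 a1 b0 b1 lam : ℝ) (q : Polynomial ℝ) (n : ℕ) (hn : 1 ≤ n)
    (h : q.natDegree = n) (hl : lam = n * (n - 1 + b1)) :
    (jop a0 a1 b0 b1 lam q).natDegree < n := by
  have : (jop a0 a1 b0 b1 lam q).natDegree ≤ n - 1 := by
    rw [Polynomial.natDegree_le_iff_coeff_eq_zero]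
    intro i hi
    rw [jop_coeff, Polynomial.coeff_eq_zero_of_natDegree_lt (by omega : q.natDegree < i + 1),
      Polynomial.coeff_eq_zero_of_natDegree_lt (by omega : q.natDegree < i + 2)]
    rcases Nat.lt_or_ge n i with h' | h'
    · rw [Polynomial.coeff_eq_zero_of_natDegree_lt (by omega : q.natDegree < i)]; ring
    · have : i = n := by omega
      subst this
      rw [hl]; ring
  omega

/-- value at zero from recursion -/
theorem jop_coeff_zero (a0 a1 b1 lam γ : ℝ) (q : Polynomial ℝ) (N : ℕ)
    (ha : a0 = 0) (hq : jop a0 a1 (a1 * (γ + 1)) b1 lam q = 0) (hl : lam = N * (N - 1 + b1)) :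
    ∀ k ≤ N, q.coeff (N - k) * ∏ j ∈ Finset.range k, ((k - j) * (2 * N - 1 + b1 - (k - j)) : ℝ) =
      q.coeff N * ∏ j ∈ Finset.range k, (-a1 * (N - j) * (N - j + γ)) := by
  intro k
  induction k with
  | zero => simp
  | succ k ih =>
    intro hk
    have ih := ih (by omega)
    have h := congrArg (fun p => Polynomial.coeff p (N - (k + 1))) hq
    simp only [jop_coeff, ha, Polynomial.coeff_zero] at h
    have e : N - (k + 1) + 1 = N - k := by omega
    have e' : ((N - (k + 1) : ℕ) : ℝ) = N - (k + 1) := by push_cast [Nat.cast_sub hk]; ring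
    rw [e, e', hl] at h
    rw [Finset.prod_range_succ', Finset.prod_range_succ]
    have e2 : ∀ j ∈ Finset.range k, (((k + 1 : ℕ) : ℝ) - ((j + 1 : ℕ) : ℝ)) * (2 * N - 1 + b1 - (((k + 1 : ℕ) : ℝ) - ((j + 1 : ℕ) : ℝ))) = ((k - j) * (2 * N - 1 + b1 - (k - j)) : ℝ) := by
      intro j _; push_cast; ring
    rw [Finset.prod_congr rfl e2]
    push_cast
    have h2 : q.coeff (N - (k + 1)) * ((k + 1) * (2 * N - 1 + b1 - (k + 1))) = q.coeff (N - k) * (-a1 * (N - k) * (N - k + γ)) := by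
      linear_combination h
    linear_combination (∏ j ∈ Finset.range k, ((k - j) * (2 * N - 1 + b1 - (k - j)) : ℝ)) * h2 + (-a1 * (N - k) * (N - k + γ)) * ih

theorem prod_rev (N : ℕ) (f : ℝ → ℝ) :
    ∏ j ∈ Finset.range N, f (N - j) = ∏ j ∈ Finset.range N, f (j + 1) := by
  rw [← Finset.prod_range_reflect]
  refine Finset.prod_congr rfl fun j hj => ?_
  have := Finset.mem_range.1 hj
  have : ((N - 1 - j : ℕ) : ℝ) = N - 1 - j := by
    rw [Nat.sub_sub, Nat.cast_sub (by omega)]; push_cast; ring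
  rw [this]; congr 1; ring

theorem jop_value (a1 s lam γ : ℝ) (q : Polynomial ℝ) (N : ℕ)
    (hq : jop 0 a1 (a1 * (γ + 1)) (s + 2) lam q = 0) (hl : lam = N * (N - 1 + (s + 2))) 
    (h1 : q.coeff N = 1) :
    q.coeff 0 * ∏ j ∈ Finset.range N, ((N : ℝ) + s + 1 + j) =
      (-a1) ^ N * ∏ j ∈ Finset.range N, (γ + 1 + j) := by
  have h := jop_coeff_zero 0 a1 (s + 2) lam γ q N rfl hq hl N le_rfl
  rw [prod_rev N (fun x => x * (2 * N - 1 + (s + 2) - x)), prod_rev N (fun x => -a1 * x * (x + γ)), h1,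
    Nat.sub_self, one_mul] at h
  simp only [Finset.prod_mul_distrib, Finset.prod_const, Finset.card_range] at h
  have hf : (∏ j ∈ Finset.range N, ((j : ℝ) + 1)) ≠ 0 := Finset.prod_ne_zero_iff.2 fun j _ => by positivity
  have e1 : ∏ j ∈ Finset.range N, (2 * (N : ℝ) - 1 + (s + 2) - (j + 1)) = ∏ j ∈ Finset.range N, ((N : ℝ) + s + 1 + j) := by
    have := prod_rev N (fun x => (N : ℝ) + s + x)
    rw [show (∏ j ∈ Finset.range N, ((N : ℝ) + s + 1 + j)) = ∏ j ∈ Finset.range N, ((N : ℝ) + s + (j + 1)) from Finset.prod_congr rfl fun _ _ => by ring, ← this]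
    exact Finset.prod_congr rfl fun _ _ => by ring
  have e2 : ∏ j ∈ Finset.range N, ((j : ℝ) + 1 + γ) = ∏ j ∈ Finset.range N, (γ + 1 + j) :=
    Finset.prod_congr rfl fun _ _ => by ring
  rw [e1, e2] at h
  apply mul_left_cancel₀ hf
  linear_combination h

theorem prod_derivs {ι : Type*} [DecidableEq ι] (z : ι → ℝ) (x : ℝ) (s : Finset ι)
    (h : ∀ m ∈ s, x ≠ z m) :
    let q := ∏ m ∈ s, (Polynomial.X - Polynomial.C (z m))
    (Polynomial.derivative q).eval x = q.eval x * ∑ m ∈ s, 1 / (x - z m) ∧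
    (Polynomial.derivative (Polynomial.derivative q)).eval x =
      q.eval x * ((∑ m ∈ s, 1 / (x - z m)) ^ 2 - ∑ m ∈ s, 1 / (x - z m) ^ 2) := by
  induction s using Finset.induction_on with
  | empty => simp
  | insert a s ha ih =>
    obtain ⟨i1, i2⟩ := ih fun m hm => h m (Finset.mem_insert_of_mem hm)
    have hx : x - z a ≠ 0 := sub_ne_zero.2 (h a (Finset.mem_insert_self _ _))
    simp only [Finset.prod_insert ha, Finset.sum_insert ha]
    set q := ∏ m ∈ s, (Polynomial.X - Polynomial.C (z m))
    simp only [Polynomial.derivative_mul, Polynomial.derivative_sub, Polynomial.derivative_X,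
      Polynomial.derivative_C, sub_zero, one_mul, Polynomial.eval_add, Polynomial.eval_mul,
      Polynomial.eval_sub, Polynomial.eval_X, Polynomial.eval_C, Polynomial.derivative_add, i1, i2]
    constructor
    · field_simp
    · field_simp; ring

/-- integrability of the weight -/
theorem weight_int (α β : ℝ) (hα : -1 < α) (hβ : -1 < β) (Q : Polynomial ℝ) :
    IntervalIntegrable (fun x => Q.eval x * ((1 - x) ^ α * (1 + x) ^ β)) volume (-1) 1 := by
  have h1 : IntervalIntegrable (fun x : ℝ => (1 - x) ^ α * (1 + x) ^ β) volume 0 1 := by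
    have := (intervalIntegral.intervalIntegrable_rpow' (a := 1) (b := 0) hα).comp_sub_left 1
    simp only [sub_self, sub_zero] at this
    refine this.mul_continuousOn ?_
    intro x hx
    rw [Set.uIcc_of_le zero_le_one] at hx
    exact (ContinuousAt.rpow_const (by fun_prop) (Or.inl (by linarith [hx.1]))).continuousWithinAt
  have h2 : IntervalIntegrable (fun x : ℝ => (1 - x) ^ α * (1 + x) ^ β) volume (-1) 0 := by
    have := (intervalIntegral.intervalIntegrable_rpow' (a := 0) (b := 1) hβ).comp_add_left 1
    simp only [sub_self, zero_sub] at this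
    refine this.continuousOn_mul ?_
    intro x hx
    rw [Set.uIcc_of_le (by norm_num)] at hx
    exact (ContinuousAt.rpow_const (by fun_prop) (Or.inl (by linarith [hx.2]))).continuousWithinAt
  exact (h2.trans h1).continuousOn_mul Q.continuous.continuousOn

theorem jop_symm (α β lam : ℝ) (hα : -1 < α) (hβ : -1 < β) (p q : Polynomial ℝ) :
    ∫ x in (-1 : ℝ)..1, (jop 1 0 (β - α) (α + β + 2) lam p * q - p * jop 1 0 (β - α) (α + β + 2) lam q).eval x
      * ((1 - x) ^ α * (1 + x) ^ β) = 0 := by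
  have := intervalIntegral.integral_eq_sub_of_hasDerivAt_of_le (a := -1) (b := 1) (by norm_num)
    (f := fun x : ℝ => (Polynomial.derivative p * q - p * Polynomial.derivative q).eval x
      * ((1 - x) ^ (α + 1) * (1 + x) ^ (β + 1))) 
    (f' := fun x => (jop 1 0 (β - α) (α + β + 2) lam p * q - p * jop 1 0 (β - α) (α + β + 2) lam q).eval x
      * ((1 - x) ^ α * (1 + x) ^ β)) ?_ ?_ (weight_int α β hα hβ _)
  · rw [this]
    simp [Real.zero_rpow (by linarith : α + 1 ≠ 0), Real.zero_rpow (by linarith : β + 1 ≠ 0)]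
  · apply Continuous.continuousOn
    refine (Polynomial.continuous _).mul (Continuous.mul ?_ ?_)
    · exact Continuous.rpow_const (by fun_prop) fun x => Or.inr (by linarith)
    · exact Continuous.rpow_const (by fun_prop) fun x => Or.inr (by linarith)
  · intro x hx
    have hx1 : 0 < 1 - x := by linarith [hx.2]
    have hx2 : 0 < 1 + x := by linarith [hx.1]
    have d0 := (Polynomial.derivative p * q - p * Polynomial.derivative q).hasDerivAt x
    have d1 : HasDerivAt (fun x : ℝ => (1 - x) ^ (α + 1)) (-1 * (α + 1) * (1 - x) ^ (α + 1 - 1)) x :=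
      ((hasDerivAt_id x).const_sub 1).rpow_const (Or.inl hx1.ne')
    have d2 : HasDerivAt (fun x : ℝ => (1 + x) ^ (β + 1)) (1 * (β + 1) * (1 + x) ^ (β + 1 - 1)) x :=
      ((hasDerivAt_id x).const_add 1).rpow_const (Or.inl hx2.ne')
    refine (d0.fun_mul (d1.fun_mul d2)).congr_deriv ?_
    simp only [add_sub_cancel_right, Real.rpow_add_one hx1.ne', Real.rpow_add_one hx2.ne', jop_apply]

    simp
    ring

theorem jacobi_ode (N : ℕ) (hN : 1 ≤ N) (α β : ℝ) (hα : -1 < α) (hβ : -1 < β)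
    (P : Polynomial ℝ) (hPdeg : P.natDegree = N)
    (hPorth : ∀ Q : Polynomial ℝ, Q.natDegree < N →
      ∫ x in Set.Ioo (-1 : ℝ) 1,
        P.eval x * Q.eval x * (1 - x) ^ α * (1 + x) ^ β = 0) :
    jop 1 0 (β - α) (α + β + 2) (N * (N - 1 + (α + β + 2))) P = 0 := by
  set lam : ℝ := N * (N - 1 + (α + β + 2))
  set R := jop 1 0 (β - α) (α + β + 2) lam P with hR
  have hRd : R.natDegree < N := jop_natDegree_lt _ _ _ _ _ _ _ hN hPdeg rfl
  have h0 := hPorth _ (jop_natDegree_le 1 0 (β - α) (α + β + 2) lam R N hRd)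
  have h1 := jop_symm α β lam hα hβ P R
  rw [← hR] at h1
  have hi := weight_int α β hα hβ
  simp only [Polynomial.eval_sub, sub_mul] at h1
  rw [intervalIntegral.integral_sub (hi _) (hi _)] at h1
  rw [← integral_Ioc_eq_integral_Ioo, ← intervalIntegral.integral_of_le (by norm_num)] at h0
  have h2 : ∫ x in (-1 : ℝ)..1, (R * R).eval x * ((1 - x) ^ α * (1 + x) ^ β) = 0 := by
    have e : ∫ x in (-1 : ℝ)..1, (P * jop 1 0 (β - α) (α + β + 2) lam R).eval x * ((1 - x) ^ α * (1 + x) ^ β)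
        = ∫ x in (-1 : ℝ)..1, P.eval x * (jop 1 0 (β - α) (α + β + 2) lam R).eval x * (1 - x) ^ α * (1 + x) ^ β :=
      intervalIntegral.integral_congr fun x _ => by simp only [Polynomial.eval_mul]; ring
    linarith
  by_contra hne
  have hp : 0 < ∫ x in Set.Ioo (-1 : ℝ) 1, (R * R).eval x * ((1 - x) ^ α * (1 + x) ^ β) := by
    rw [setIntegral_pos_iff_support_of_nonneg_ae]
    · have hsub : Set.Ioo (-1 : ℝ) 1 \ (R.roots.toFinset : Set ℝ) ⊆
          Function.support (fun x => (R * R).eval x * ((1 - x) ^ α * (1 + x) ^ β)) ∩ Set.Ioo (-1 : ℝ) 1 := by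
        rintro x ⟨hx, hxr⟩
        refine ⟨?_, hx⟩
        have hx1 : 0 < 1 - x := by linarith [hx.2]
        have hx2 : 0 < 1 + x := by linarith [hx.1]
        have : R.eval x ≠ 0 := by
          intro h; apply hxr; simp [hne, h]
        simp only [Function.mem_support, Polynomial.eval_mul]
        have := Real.rpow_pos_of_pos hx1 α
        have := Real.rpow_pos_of_pos hx2 β
        positivity
      refine lt_of_lt_of_le ?_ (measure_mono hsub)
      rw [measure_sdiff_null (Finset.measure_zero _ _)]
      simp
    · filter_upwards [ae_restrict_mem measurableSet_Ioo] with x hx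
      have hx1 : 0 < 1 - x := by linarith [hx.2]
      have hx2 : 0 < 1 + x := by linarith [hx.1]
      have := Real.rpow_pos_of_pos hx1 α
      have := Real.rpow_pos_of_pos hx2 β
      simp only [Polynomial.eval_mul, Pi.zero_apply]
      have := mul_self_nonneg (R.eval x)
      positivity
    · exact ((intervalIntegrable_iff_integrableOn_Ioo_of_le (by norm_num)).1 (hi _))
  rw [← integral_Ioc_eq_integral_Ioo, ← intervalIntegral.integral_of_le (by norm_num), h2] at hp
  exact lt_irrefl _ hp

theorem eval_fin {N : ℕ} (q : Polynomial ℝ) (h : q.natDegree < N) (x : ℝ) :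
    q.eval x = ∑ k : Fin N, x ^ (k : ℕ) * q.coeff k := by
  rw [Polynomial.eval_eq_sum_range' h, Finset.sum_range]
  exact Finset.sum_congr rfl fun _ _ => mul_comm _ _

theorem lin_fin {N : ℕ} (M : Polynomial ℝ →ₗ[ℝ] Polynomial ℝ) (q : Polynomial ℝ)
    (h : q.natDegree < N) :
    M q = ∑ k : Fin N, q.coeff k • M (Polynomial.X ^ (k : ℕ)) := by
  conv_lhs => rw [q.as_sum_range' N h, Finset.sum_range, map_sum]
  refine Finset.sum_congr rfl fun k _ => ?_
  rw [← Polynomial.smul_X_eq_monomial, map_smul]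

open Polynomial in
/-- The determinant up to the diagonal factor. -/
theorem det_aux (N : ℕ) (α β lam : ℝ) (z : Fin N → ℝ) (hz : Function.Injective z)
    (hzmem : ∀ i, z i ∈ Set.Ioo (-1 : ℝ) 1)
    (hl : lam = N * (N - 1 + (α + β + 2)))
    (hode : jop 1 0 (β - α) (α + β + 2) lam (∏ m, (X - C (z m))) = 0)
    (S : Matrix (Fin N) (Fin N) ℝ)
    (hS : S = Matrix.of fun i j =>
      if i = j then
        (∑ l ∈ Finset.univ.erase j, 1 / (z j - z l) ^ 2) +
          (α + 1) / 2 * (1 / (1 - z j) ^ 2) + (β + 1) / 2 * (1 / (1 + z j) ^ 2)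
      else -1 / (z i - z j) ^ 2) :
    (∏ j, (2 * (1 - z j ^ 2))) * S.det =
      ∏ k ∈ Finset.range N, ((N - k) * (N + k + α + β + 1) : ℝ) := by
  set M := jop 1 0 (β - α) (α + β + 2) lam with hM
  set Q : Fin N → Polynomial ℝ := fun l => ∏ m ∈ Finset.univ.erase l, (X - C (z m)) with hQ
  set V : Matrix (Fin N) (Fin N) ℝ := Matrix.of fun j k => z j ^ (k : ℕ) with hV
  set T : Matrix (Fin N) (Fin N) ℝ := Matrix.of fun i k => (M (X ^ (k : ℕ))).coeff i with hT
  set K : Matrix (Fin N) (Fin N) ℝ := Matrix.of fun k l => (Q l).coeff k with hK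
  have hQd : ∀ l, (Q l).natDegree < N := by
    intro l
    rw [hQ]
    simp only
    rw [natDegree_prod_of_monic _ _ fun m _ => monic_X_sub_C _]
    have := l.2
    simp; omega
  have hQ0 : ∀ j l, j ≠ l → (Q l).eval (z j) = 0 := by
    intro j l h
    rw [hQ]; simp only [eval_prod]
    exact Finset.prod_eq_zero (i := j) (by simp [h]) (by simp)
  have hQ1 : ∀ l, (Q l).eval (z l) ≠ 0 := by
    intro l
    rw [hQ]; simp only [eval_prod]
    refine Finset.prod_ne_zero_iff.2 fun m hm => ?_
    simp only [eval_sub, eval_X, eval_C, sub_ne_zero]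
    exact fun h => (Finset.mem_erase.1 hm).1 (hz h).symm
  have hPQ : ∀ l, (∏ m, (X - C (z m))) = (X - C (z l)) * Q l := fun l =>
    (Finset.mul_prod_erase _ _ (Finset.mem_univ l)).symm
  have hVK : V * K = Matrix.diagonal fun l => (Q l).eval (z l) := by
    ext j l
    rw [Matrix.mul_apply]
    simp only [hV, hK, Matrix.of_apply]
    rw [← eval_fin _ (hQd l), Matrix.diagonal_apply]
    split_ifs with h
    · rw [h]
    · exact hQ0 j l h
  have hVT : ∀ j k, (V * T) j k = (M (X ^ (k : ℕ))).eval (z j) := by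
    intro j k
    rw [Matrix.mul_apply, eval_fin (N := N)]
    · simp [hV, hT]
    · exact jop_natDegree_le _ _ _ _ _ _ _ (by simp)
  have hVTK : ∀ j l, (V * T * K) j l = (M (Q l)).eval (z j) := by
    intro j l
    rw [Matrix.mul_apply, lin_fin M (Q l) (hQd l), eval_finsetSum]
    refine Finset.sum_congr rfl fun k _ => ?_
    rw [hVT, eval_smul, smul_eq_mul, mul_comm]; rfl
  -- the factored equation
  have hfac : ∀ l, (X - C (z l)) * M (Q l) +
      (2 * (1 - X ^ 2) * derivative (Q l) + (C (β - α) - C (α + β + 2) * X) * Q l) = 0 := by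
    intro l
    rw [← hode, hPQ l, hM, jop_apply, jop_apply]
    simp only [derivative_mul, derivative_add, derivative_sub, derivative_X, derivative_C, derivative_one, derivative_zero, C_1, C_0]
    ring
  have hdet1 : V * T * K = Matrix.diagonal (fun l => (Q l).eval (z l)) *
      (Matrix.diagonal (fun l => 2 * (1 - z l ^ 2)) * S) := by
    ext j l
    rw [hVTK, Matrix.diagonal_mul, Matrix.diagonal_mul, hS, Matrix.of_apply]
    have hz1 : 1 - z l ≠ 0 := by have := (hzmem l).2; intro h; linarith
    have hz2 : 1 + z l ≠ 0 := by have := (hzmem l).1; intro h; linarith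
    split_ifs with h
    · subst h
      have hA : (1 - z j ^ 2) ≠ 0 := by
        rw [show 1 - z j ^ 2 = (1 - z j) * (1 + z j) by ring]; exact mul_ne_zero hz1 hz2
      obtain ⟨e1, e2⟩ := prod_derivs z (z j) (Finset.univ.erase j)
        (fun m hm h => (Finset.mem_erase.1 hm).1 (hz h).symm)
      change (derivative (Q j)).eval (z j) = (Q j).eval (z j) * _ at e1
      change (derivative (derivative (Q j))).eval (z j) = (Q j).eval (z j) * _ at e2
      have f1 := congrArg (eval (z j)) (hfac j)
      have f2 := congrArg (fun p => eval (z j) (derivative p)) (hfac j)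
      simp only [derivative_mul, derivative_add, derivative_sub, derivative_X, derivative_C,
        eval_add, eval_mul, eval_sub, eval_X, eval_C, derivative_X_pow, derivative_one, eval_one,
        eval_pow, eval_zero, derivative_ofNat, eval_ofNat, derivative_zero, e1, e2] at f1 f2
      set s1 := ∑ m ∈ Finset.univ.erase j, 1 / (z j - z m)
      set s2 := ∑ m ∈ Finset.univ.erase j, 1 / (z j - z m) ^ 2
      set t := (Q j).eval (z j)
      set y := z j
      have g1 : 2 * (1 - y ^ 2) * s1 = -(β - α - (α + β + 2) * y) := by
        apply mul_left_cancel₀ (hQ1 j)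
        linear_combination f1
      have g1' : s1 = -(β - α - (α + β + 2) * y) / (2 * (1 - y ^ 2)) := by
        field_simp; linear_combination g1
      have g2 : (M (Q j)).eval y = - t * (2 * (1 - y ^ 2) * (s1 ^ 2 - s2) + (-4 * y + (β - α - (α + β + 2) * y)) * s1 - (α + β + 2)) := by
        simp at f2
        linear_combination f2
      rw [g2, g1']
      rw [show 1 - y ^ 2 = (1 - y) * (1 + y) by ring]
      field_simp
      ring
    · have hne : z j - z l ≠ 0 := sub_ne_zero.2 fun h' => h (hz h')
      have f1 := congrArg (eval (z j)) (hfac l)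
      have f0 := congrArg (fun p => eval (z j) (derivative p)) (hPQ l)
      have f3 := congrArg (fun p => eval (z j) (derivative p)) (hPQ j)
      simp only [derivative_mul, derivative_sub, derivative_X, derivative_C,
        eval_add, eval_mul, eval_sub, eval_X, eval_C, eval_one,
        eval_pow, eval_zero, eval_ofNat, hQ0 j l h] at f0 f1 f3
      have f4 : (derivative (Q l)).eval (z j) = (Q j).eval (z j) / (z j - z l) := by
        field_simp; linear_combination f3 - f0
      rw [f4] at f1
      have f5 : (M (Q l)).eval (z j) = - (2 * (1 - z j ^ 2) * ((Q j).eval (z j) / (z j - z l))) / (z j - z l) := by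
        rw [eq_div_iff hne]; linear_combination f1
      rw [f5]; field_simp
  have hdT : T.det = ∏ k ∈ Finset.range N, ((N - k) * (N + k + α + β + 1) : ℝ) := by
    rw [Matrix.det_of_upperTriangular, Finset.prod_range]
    · refine Finset.prod_congr rfl fun k _ => ?_
      simp only [hT, hM, Matrix.of_apply, jop_coeff, coeff_X_pow]
      simp [hl]; ring
    · intro i k hik
      have hik : (k : ℕ) < i := hik
      simp only [hT, hM, Matrix.of_apply, jop_coeff, coeff_X_pow]
      rw [if_neg (by omega), if_neg (by omega), if_neg (by omega)]; ring
  have hd1 := congrArg Matrix.det hdet1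
  have hd2 := congrArg Matrix.det hVK
  simp only [Matrix.det_mul, Matrix.det_diagonal] at hd1 hd2
  have hne : ∏ l, (Q l).eval (z l) ≠ 0 := Finset.prod_ne_zero_iff.2 fun l _ => hQ1 l
  apply mul_left_cancel₀ hne
  rw [← hd1, ← hdT, ← hd2]; ring

open Polynomial in
theorem jop_shift (α β lam a : ℝ) (p : Polynomial ℝ) (b0 : ℝ) (ha : a ^ 2 = 1)
    (hb : b0 = β - α - (α + β + 2) * a) (h : jop 1 0 (β - α) (α + β + 2) lam p = 0) :
    jop 0 (-2 * a) b0 (α + β + 2) lam (p.comp (X + C a)) = 0 := by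
  have h' := congrArg (fun p => p.comp (X + C a)) h
  rw [← (zero_comp : (0 : Polynomial ℝ).comp (X + C a) = 0), ← h]
  simp only [jop_apply, derivative_comp, derivative_mul, derivative_add, derivative_X, derivative_C, mul_comp, add_comp,
    sub_comp, C_comp, X_comp, pow_comp, derivative_one, derivative_zero, hb]
  have : (C a : Polynomial ℝ) ^ 2 = 1 := by rw [← C_pow, ha, C_1]
  simp only [C_mul, C_sub, C_neg, C_0, C_1, add_zero, derivative_zero, one_mul, zero_mul]
  have h2 : (C 2 : Polynomial ℝ) = 2 := rfl
  rw [h2]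
  linear_combination (derivative (derivative p)).comp (X + C a) * this

theorem jacobi_matrix_det
    (N : ℕ) (hN : 1 ≤ N) (α β : ℝ) (hα : -1 < α) (hβ : -1 < β)
    (P : Polynomial ℝ) (hPdeg : P.natDegree = N)
    (hPorth : ∀ Q : Polynomial ℝ, Q.natDegree < N →
      ∫ x in Set.Ioo (-1 : ℝ) 1,
        P.eval x * Q.eval x * (1 - x) ^ α * (1 + x) ^ β = 0)
    (hPone : P.eval 1 = (∏ j ∈ Finset.range N, (α + 1 + j)) / (N.factorial : ℝ))
    (z : Fin N → ℝ) (hzmono : StrictMono z)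
    (hzroot : ∀ i, P.eval (z i) = 0)
    (hzmem : ∀ i, z i ∈ Set.Ioo (-1 : ℝ) 1)
    (S : Matrix (Fin N) (Fin N) ℝ)
    (hS : S = Matrix.of fun i j =>
      if i = j then
        (∑ l ∈ Finset.univ.erase j, 1 / (z j - z l) ^ 2) +
          (α + 1) / 2 * (1 / (1 - z j) ^ 2) + (β + 1) / 2 * (1 / (1 + z j) ^ 2)
      else -1 / (z i - z j) ^ 2)
    : S.det = (N.factorial : ℝ) / 2 ^ (3 * N) *
      (∏ j ∈ Finset.range N, ((N : ℝ) + α + β + 1 + j)) ^ 3 /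
      ((∏ j ∈ Finset.range N, (α + 1 + j)) * (∏ j ∈ Finset.range N, (β + 1 + j))) := by
  have hode := jacobi_ode N hN α β hα hβ P hPdeg hPorth
  set lam : ℝ := N * (N - 1 + (α + β + 2)) with hlam
  set p : Polynomial ℝ := ∏ m, (Polynomial.X - Polynomial.C (z m)) with hp
  have hpm : p.Monic := Polynomial.monic_prod_of_monic _ _ fun m _ => Polynomial.monic_X_sub_C _
  have hpd : p.natDegree = N := by
    rw [hp, Polynomial.natDegree_prod_of_monic _ _ fun m _ => Polynomial.monic_X_sub_C _]; simp
  have hP0 : P ≠ 0 := by rintro rfl; simp at hPdeg; omega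
  have hdvd : p ∣ P := by
    refine Finset.prod_dvd_of_coprime ?_ fun i _ => Polynomial.dvd_iff_isRoot.2 (hzroot i)
    exact fun i _ j _ hij => Polynomial.pairwise_coprime_X_sub_C hzmono.injective hij
  obtain ⟨r, hr⟩ := hdvd
  have hr0 : r ≠ 0 := by rintro rfl; simp at hr; exact hP0 hr
  have hrd : r.natDegree = 0 := by
    have := Polynomial.natDegree_mul hpm.ne_zero hr0
    rw [← hr] at this; omega
  obtain ⟨c, rfl⟩ := Polynomial.natDegree_eq_zero.1 hrd
  have hc : c ≠ 0 := by rintro rfl; simp at hr0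
  have hodep : jop 1 0 (β - α) (α + β + 2) lam p = 0 := by
    have : P = c • p := by rw [hr, Polynomial.smul_eq_C_mul, mul_comm]
    rw [this, map_smul, smul_eq_zero] at hode
    exact hode.resolve_left hc
  have hd := det_aux N α β lam z hzmono.injective hzmem hlam hodep S hS
  have hval : ∀ a γ : ℝ, a ^ 2 = 1 → -2 * a * (γ + 1) = β - α - (α + β + 2) * a →
      p.eval a * ∏ j ∈ Finset.range N, ((N : ℝ) + α + β + 1 + j) =
        (2 * a) ^ N * ∏ j ∈ Finset.range N, (γ + 1 + j) := by
    intro a γ ha hb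
    have h1 : (p.comp (Polynomial.X + Polynomial.C a)).coeff N = 1 := by
      have := (hpm.comp_X_add_C a)
      have h2 : (p.comp (Polynomial.X + Polynomial.C a)).natDegree = N := by
        rw [Polynomial.natDegree_comp, hpd]; simp
      rw [Polynomial.Monic, Polynomial.leadingCoeff, h2] at this
      exact this
    have := jop_value (-2 * a) (α + β) lam γ _ N (jop_shift α β lam a p _ ha hb hodep) hlam h1
    rw [Polynomial.coeff_zero_eq_eval_zero] at this
    simp only [Polynomial.eval_comp, Polynomial.eval_add, Polynomial.eval_X, Polynomial.eval_C, zero_add] at this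
    rw [show (2 * a) = -(-2 * a) by ring, ← this]
    congr 1
    exact Finset.prod_congr rfl fun _ _ => by ring
  have v1 := hval 1 α (by norm_num) (by ring)
  have v2 := hval (-1) β (by norm_num) (by ring)
  have hdiag : ∏ j, (2 * (1 - z j ^ 2)) = 2 ^ N * (p.eval 1 * ((-1) ^ N * p.eval (-1))) := by
    have e0 : ((-1 : ℝ)) ^ N = ∏ _j : Fin N, (-1 : ℝ) := by simp
    have e1 : ((2 : ℝ)) ^ N = ∏ _j : Fin N, (2 : ℝ) := by simp
    rw [e0, e1, hp, Polynomial.eval_prod, Polynomial.eval_prod, ← Finset.prod_mul_distrib,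
      ← Finset.prod_mul_distrib, ← Finset.prod_mul_distrib]
    refine Finset.prod_congr rfl fun j _ => ?_
    simp; ring
  have hfact : ∏ k ∈ Finset.range N, ((N - k) * (N + k + α + β + 1) : ℝ) =
      N.factorial * ∏ j ∈ Finset.range N, ((N : ℝ) + α + β + 1 + j) := by
    rw [Finset.prod_mul_distrib, prod_rev N (fun x => x)]
    congr 1
    · rw [← Finset.prod_range_add_one_eq_factorial]; push_cast; rfl
    · exact Finset.prod_congr rfl fun _ _ => by ring
  rw [hdiag, hfact] at hd
  set G := ∏ j ∈ Finset.range N, ((N : ℝ) + α + β + 1 + j)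
  set a' := ∏ j ∈ Finset.range N, (α + 1 + (j : ℝ)) with ha'
  set b' := ∏ j ∈ Finset.range N, (β + 1 + (j : ℝ)) with hb'
  have hN' : (1 : ℝ) ≤ N := by exact_mod_cast hN
  have hG : G ≠ 0 := Finset.prod_ne_zero_iff.2 fun j _ => by
    have : (0 : ℝ) ≤ j := by positivity
    intro h; linarith
  have ha0 : a' ≠ 0 := Finset.prod_ne_zero_iff.2 fun j _ => by
    have : (0 : ℝ) ≤ j := by positivity
    intro h; linarith
  have hb0 : b' ≠ 0 := Finset.prod_ne_zero_iff.2 fun j _ => by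
    have : (0 : ℝ) ≤ j := by positivity
    intro h; linarith
  have v1' : p.eval 1 = 2 ^ N * a' / G := by rw [eq_div_iff hG, v1]; ring
  have v2' : (-1) ^ N * p.eval (-1) = 2 ^ N * b' / G := by
    rw [eq_div_iff hG, mul_assoc, v2, ← mul_assoc, ← mul_pow]; norm_num
  rw [v1', v2'] at hd
  have h3 : (2 : ℝ) ^ (3 * N) = 2 ^ N * 2 ^ N * 2 ^ N := by ring
  rw [h3]
  have h2 : (2 : ℝ) ^ N ≠ 0 := by positivity
  field_simp at hd ⊢
  linear_combination hd
end

section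
/- Let N ≥ 1, α, β > −1, and let z_1 < ... < z_N be the ordered zeros of the Jacobi polynomial P_N^{(α,β)}. Let S̃ be the N×N matrix with entries s̃_{j,j} = 4Σ_{l≠j}(1−z_j²)/(z_j−z_l)² + 2(α+1)(1+z_j)/(1−z_j) + 2(β+1)(1−z_j)/(1+z_j) and s̃_{i,j} = −4√((1−z_i²)(1−z_j²))/(z_i−z_j)² for i ≠ j. Then det(S̃) = 2^N · N! · (N+α+β+1)_N, where (x)_N = x(x+1)···(x+N−1) denotes the Pochhammer symbol. -/
open MeasureTheory Filter Real Finset Topology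

noncomputable def jacL (α β : ℝ) (q : Polynomial ℝ) : Polynomial ℝ :=
  (1 - Polynomial.X ^ 2) * q.derivative.derivative +
    (Polynomial.C (β - α) - Polynomial.C (α + β + 2) * Polynomial.X) * q.derivative

lemma jacL_eval (α β : ℝ) (q : Polynomial ℝ) (x : ℝ) : (jacL α β q).eval x =
    (1 - x ^ 2) * q.derivative.derivative.eval x
      + ((β - α) - (α + β + 2) * x) * q.derivative.eval x := by
  simp [jacL]

lemma jacL_coeff (α β : ℝ) (q : Polynomial ℝ) (m : ℕ) : (jacL α β q).coeff m =
    ((m : ℝ) + 2) * (m + 1) * q.coeff (m + 2) + (β - α) * (m + 1) * q.coeff (m + 1)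
      - ((m : ℝ) * (m - 1) + (α + β + 2) * m) * q.coeff m := by
  unfold jacL
  rw [sub_mul, sub_mul, one_mul, mul_assoc]
  simp only [Polynomial.coeff_add, Polynomial.coeff_sub, Polynomial.coeff_C_mul]
  rcases m with _ | _ | m
  · simp [Polynomial.coeff_derivative, Polynomial.coeff_X_pow_mul', Polynomial.coeff_X_mul]
    ring
  · simp [Polynomial.coeff_derivative, Polynomial.coeff_X_pow_mul', Polynomial.coeff_X_mul]
    ring
  · simp [Polynomial.coeff_derivative, Polynomial.coeff_X_pow_mul', Polynomial.coeff_X_mul]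
    ring

lemma jac_w_int (α β : ℝ) (hα : -1 < α) (hβ : -1 < β) :
    IntervalIntegrable (fun x : ℝ => (1 - x) ^ α * (1 + x) ^ β) volume (-1) 1 := by
  have h1 : IntervalIntegrable (fun x : ℝ => (1 + x) ^ β) volume (-1) 0 := by
    have := (intervalIntegral.intervalIntegrable_rpow' (a := 0) (b := 1) hβ).comp_add_left 1
    simpa using this
  have h2 : IntervalIntegrable (fun x : ℝ => (1 - x) ^ α) volume 0 1 := by
    have := (intervalIntegral.intervalIntegrable_rpow' (a := 1) (b := 0) hα).comp_sub_left 1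
    simpa using this
  refine IntervalIntegrable.trans (b := 0) ?_ ?_
  · refine h1.continuousOn_mul ?_
    refine ContinuousOn.rpow_const (by fun_prop) ?_
    intro x hx
    rw [Set.uIcc_of_le (by norm_num)] at hx
    left; linarith [hx.2]
  · refine h2.mul_continuousOn ?_
    refine ContinuousOn.rpow_const (by fun_prop) ?_
    intro x hx
    rw [Set.uIcc_of_le (by norm_num)] at hx
    left; linarith [hx.1]

lemma jac_int (α β : ℝ) (hα : -1 < α) (hβ : -1 < β) (A : Polynomial ℝ) :
    IntervalIntegrable (fun x : ℝ => A.eval x * ((1 - x) ^ α * (1 + x) ^ β)) volume (-1) 1 :=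
  (jac_w_int α β hα hβ).continuousOn_mul A.continuous.continuousOn

lemma jac_symm (α β : ℝ) (hα : -1 < α) (hβ : -1 < β) (p q : Polynomial ℝ) :
    ∫ x in (-1 : ℝ)..1, (jacL α β p * q - p * jacL α β q).eval x *
      ((1 - x) ^ α * (1 + x) ^ β) = 0 := by
  have := intervalIntegral.integral_eq_sub_of_hasDerivAt_of_le (a := -1) (b := 1) (by norm_num)
    (f := fun x : ℝ => (p.derivative * q - p * q.derivative).eval x *
      ((1 - x) ^ (α + 1) * (1 + x) ^ (β + 1)))
    (f' := fun x => (jacL α β p * q - p * jacL α β q).eval x *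
      ((1 - x) ^ α * (1 + x) ^ β)) ?_ ?_ (jac_int α β hα hβ _)
  · rw [this]
    simp [Real.zero_rpow (by linarith : α + 1 ≠ 0), Real.zero_rpow (by linarith : β + 1 ≠ 0)]
  · refine ContinuousOn.mul (Polynomial.continuous _).continuousOn (ContinuousOn.mul ?_ ?_)
    · exact ContinuousOn.rpow_const (by fun_prop) (fun x _ => Or.inr (by linarith))
    · exact ContinuousOn.rpow_const (by fun_prop) (fun x _ => Or.inr (by linarith))
  · intro x hx
    have h1 : 0 < 1 - x := by linarith [hx.2]
    have h2 : 0 < 1 + x := by linarith [hx.1]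
    have d1 : HasDerivAt (fun x : ℝ => (1 - x) ^ (α + 1)) (-1 * (α + 1) * (1 - x) ^ α) x := by
      have := ((hasDerivAt_id x).const_sub 1).rpow_const (p := α + 1) (Or.inl h1.ne')
      simpa using this
    have d2 : HasDerivAt (fun x : ℝ => (1 + x) ^ (β + 1)) (1 * (β + 1) * (1 + x) ^ β) x := by
      have := ((hasDerivAt_id x).const_add 1).rpow_const (p := β + 1) (Or.inl h2.ne')
      simpa using this
    refine (((p.derivative * q - p * q.derivative).hasDerivAt x).mul (d1.mul d2)).congr_deriv ?_
    simp only [Polynomial.derivative_sub, Polynomial.derivative_mul, Polynomial.eval_sub,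
      Polynomial.eval_add, Polynomial.eval_mul, jacL_eval, Pi.mul_apply]
    rw [Real.rpow_add_one h1.ne', Real.rpow_add_one h2.ne']
    ring

lemma jac_ode (N : ℕ) (hN : 1 ≤ N) (α β : ℝ) (hα : -1 < α) (hβ : -1 < β)
    (P : Polynomial ℝ) (hPdeg : P.natDegree = N)
    (hPorth : ∀ Q : Polynomial ℝ, Q.natDegree < N →
      ∫ x in Set.Ioo (-1 : ℝ) 1,
        P.eval x * Q.eval x * (1 - x) ^ α * (1 + x) ^ β = 0) :
    jacL α β P + Polynomial.C ((N : ℝ) * (N + α + β + 1)) * P = 0 := by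
  set lam : ℝ := (N : ℝ) * (N + α + β + 1) with hlam
  set R := jacL α β P + Polynomial.C lam * P with hR
  have horth : ∀ Q : Polynomial ℝ, Q.natDegree < N →
      ∫ x in (-1 : ℝ)..1, (P * Q).eval x * ((1 - x) ^ α * (1 + x) ^ β) = 0 := by
    intro Q hQ
    rw [intervalIntegral.integral_of_le (by norm_num), integral_Ioc_eq_integral_Ioo,
      ← hPorth Q hQ]
    simp [mul_assoc]
  have hz : ∀ m, N < m → P.coeff m = 0 := fun m hm =>
    Polynomial.coeff_eq_zero_of_natDegree_lt (by omega)
  have hRdeg : R.natDegree < N := by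
    have : R.natDegree ≤ N - 1 := by
      rw [Polynomial.natDegree_le_iff_coeff_eq_zero]
      intro m hm
      rw [hR, Polynomial.coeff_add, Polynomial.coeff_C_mul, jacL_coeff, hz (m+1) (by omega),
        hz (m+2) (by omega)]
      rcases (show N = m ∨ N < m by omega) with h | h
      · subst h; rw [hlam]; ring
      · rw [hz m h]; ring
    omega
  have hLRdeg : (jacL α β R).natDegree < N := by
    have : (jacL α β R).natDegree ≤ N - 1 := by
      rw [Polynomial.natDegree_le_iff_coeff_eq_zero]
      intro m hm
      have hz : ∀ m, N ≤ m → R.coeff m = 0 := fun m hm =>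
        Polynomial.coeff_eq_zero_of_natDegree_lt (by omega)
      rw [jacL_coeff, hz (m+1) (by omega), hz (m+2) (by omega), hz m (by omega)]
      ring
    omega
  have e1 := jac_symm α β hα hβ P R
  have e2 := horth _ hLRdeg
  have e3 := horth _ hRdeg
  have key : ∫ x in (-1 : ℝ)..1, (R * R).eval x * ((1 - x) ^ α * (1 + x) ^ β) = 0 := by
    have i1 := jac_int α β hα hβ (jacL α β P * R - P * jacL α β R)
    have i2 := jac_int α β hα hβ (P * jacL α β R)
    have i3 := (jac_int α β hα hβ (P * R)).const_mul lam
    have := intervalIntegral.integral_add (i1.add i2) i3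
    rw [intervalIntegral.integral_const_mul, e3] at this
    have h2 := intervalIntegral.integral_add i1 i2
    rw [e1, e2] at h2
    rw [h2] at this
    rw [add_zero, mul_zero, add_zero] at this
    refine Eq.trans (intervalIntegral.integral_congr (fun x _ => ?_)) this
    beta_reduce
    conv_lhs => rw [show R * R = jacL α β P * R + Polynomial.C lam * P * R by rw [hR]; ring]
    simp
    ring
  by_contra hne
  have hnn : ∀ x ∈ Set.Ioo (-1 : ℝ) 1, 0 ≤ (R * R).eval x * ((1 - x) ^ α * (1 + x) ^ β) := by
    intro x hx
    have h1 : 0 < 1 - x := by linarith [hx.2]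
    have h2 : 0 < 1 + x := by linarith [hx.1]
    rw [Polynomial.eval_mul]
    have := mul_self_nonneg (R.eval x)
    positivity
  have hint := jac_int α β hα hβ (R * R)
  rw [intervalIntegrable_iff_integrableOn_Ioo_of_le (by norm_num)] at hint
  rw [intervalIntegral.integral_of_le (by norm_num), integral_Ioc_eq_integral_Ioo] at key
  have hae := (setIntegral_eq_zero_iff_of_nonneg_ae
    ((ae_restrict_iff' measurableSet_Ioo).2 (Filter.Eventually.of_forall hnn)) hint).1 key
  rw [Filter.EventuallyEq, ae_restrict_iff' measurableSet_Ioo] at hae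
  have hfin : (R.roots.toFinset : Set ℝ).Finite := Finset.finite_toSet _
  have hnull : volume (R.roots.toFinset : Set ℝ) = 0 := hfin.measure_zero _
  have hae2 : ∀ᵐ x : ℝ, x ∉ (R.roots.toFinset : Set ℝ) := measure_eq_zero_iff_ae_notMem.1 hnull
  have hbad : ∀ᵐ x : ℝ, x ∉ Set.Ioo (-1 : ℝ) 1 := by
    filter_upwards [hae, hae2] with x hx hx2 hmem
    have h1 : 0 < 1 - x := by linarith [hmem.2]
    have h2 : 0 < 1 + x := by linarith [hmem.1]
    have := hx hmem
    have hp : (1 - x) ^ α * (1 + x) ^ β ≠ 0 := by positivity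
    simp only [Pi.zero_apply, Polynomial.eval_mul] at this
    have h0 : R.eval x = 0 := by
      rcases mul_eq_zero.1 this with h | h
      · exact mul_self_eq_zero.1 h
      · exact absurd h hp
    apply hx2
    simp [hne, h0]
  have := measure_eq_zero_iff_ae_notMem.2 hbad
  rw [Real.volume_Ioo] at this
  norm_num at this

lemma prod_derivs_s13 {ι : Type*} [DecidableEq ι] (s : Finset ι) (z : ι → ℝ) (x : ℝ)
    (h : ∀ l ∈ s, x ≠ z l) :
    (∏ l ∈ s, (Polynomial.X - Polynomial.C (z l))).derivative.eval x =
      (∏ l ∈ s, (Polynomial.X - Polynomial.C (z l))).eval x * ∑ l ∈ s, 1 / (x - z l) ∧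
    (∏ l ∈ s, (Polynomial.X - Polynomial.C (z l))).derivative.derivative.eval x =
      (∏ l ∈ s, (Polynomial.X - Polynomial.C (z l))).eval x *
        ((∑ l ∈ s, 1 / (x - z l)) ^ 2 - ∑ l ∈ s, 1 / (x - z l) ^ 2) := by
  induction s using Finset.induction_on with
  | empty => simp
  | insert a s ha ih =>
    obtain ⟨h1, h2⟩ := ih (fun l hl => h l (Finset.mem_insert_of_mem hl))
    have hx : x - z a ≠ 0 := sub_ne_zero.2 (h a (Finset.mem_insert_self _ _))
    rw [Finset.prod_insert ha, Finset.sum_insert ha, Finset.sum_insert ha]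
    generalize (∏ l ∈ s, (Polynomial.X - Polynomial.C (z l))) = f at *
    generalize ∑ l ∈ s, 1 / (x - z l) = A at *
    generalize ∑ l ∈ s, 1 / (x - z l) ^ 2 = B at *
    simp only [Polynomial.derivative_mul, Polynomial.derivative_add, Polynomial.derivative_sub,
      Polynomial.derivative_X, Polynomial.derivative_C, Polynomial.eval_add, Polynomial.eval_mul,
      Polynomial.eval_sub, Polynomial.eval_X, Polynomial.eval_C, sub_zero, one_mul,
      Polynomial.eval_one, h1, h2]
    constructor
    · field_simp
    · field_simp
      ring

lemma jac_nodal (N : ℕ) (hN : 1 ≤ N) (P : Polynomial ℝ) (hPdeg : P.natDegree = N)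
    (z : Fin N → ℝ) (hz : Function.Injective z) (hzroot : ∀ i, P.eval (z i) = 0) :
    P = Polynomial.C P.leadingCoeff * ∏ l, (Polynomial.X - Polynomial.C (z l)) := by
  have hP0 : P ≠ 0 := by rintro rfl; simp at hPdeg; omega
  have hm : (∏ l, (Polynomial.X - Polynomial.C (z l))).Monic :=
    Polynomial.monic_prod_of_monic _ _ (fun l _ => Polynomial.monic_X_sub_C _)
  have hd : (∏ l, (Polynomial.X - Polynomial.C (z l))).natDegree = N := by
    rw [Polynomial.natDegree_prod_of_monic _ _ (fun l _ => Polynomial.monic_X_sub_C _)]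
    simp
  have hlc : P.leadingCoeff ≠ 0 := by simpa using hP0
  refine Polynomial.eq_of_degree_sub_lt_of_eval_index_eq (s := Finset.univ) (v := z)
    hz.injOn ?_ ?_
  · have h1 : P.degree = (N : ℕ) := by rw [Polynomial.degree_eq_natDegree hP0, hPdeg]
    refine (Polynomial.degree_sub_lt ?_ hP0 ?_).trans_le ?_
    · rw [Polynomial.degree_C_mul hlc, Polynomial.degree_eq_natDegree hm.ne_zero, hd, h1]
    · simp [Polynomial.leadingCoeff_mul, hm.leadingCoeff]
    · simp [h1]
  · intro i _
    rw [hzroot, Polynomial.eval_mul, Polynomial.eval_prod,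
      Finset.prod_eq_zero (Finset.mem_univ i) (by simp), mul_zero]

lemma jac_entries (N : ℕ) (α β lam : ℝ) 
    (z : Fin N → ℝ) (hz : Function.Injective z) 
    (hzmem : ∀ i, z i ∈ Set.Ioo (-1 : ℝ) 1) (ω : Polynomial ℝ)
    (hω : ω = ∏ l, (Polynomial.X - Polynomial.C (z l)))
    (hode : jacL α β ω + Polynomial.C lam * ω = 0)
    (g : Fin N → Polynomial ℝ)
    (hg : ∀ j, g j = ∏ l ∈ Finset.univ.erase j, (Polynomial.X - Polynomial.C (z l))) (i j : Fin N) :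
    (jacL α β (g j) + Polynomial.C lam * g j).eval (z i) =
      if i = j then (g j).eval (z j) * 
        (2 * (∑ l ∈ Finset.univ.erase j, (1 - z j ^ 2) / (z j - z l) ^ 2) +
          (α + 1) * ((1 + z j) / (1 - z j)) + (β + 1) * ((1 - z j) / (1 + z j)))
      else -2 * (1 - z i ^ 2) / (z i - z j) ^ 2 * (g i).eval (z i) := by
  have hfac : ∀ j, ω = (Polynomial.X - Polynomial.C (z j)) * g j := by
    intro j
    rw [hω, hg]
    exact (Finset.mul_prod_erase Finset.univ
      (fun l => Polynomial.X - Polynomial.C (z l)) (Finset.mem_univ j)).symm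
  have d1 : ∀ j, ω.derivative = g j + (Polynomial.X - Polynomial.C (z j)) * (g j).derivative := by
    intro j
    rw [hfac j]; simp
  have d2 : ∀ j, ω.derivative.derivative = 2 * (g j).derivative +
      (Polynomial.X - Polynomial.C (z j)) * (g j).derivative.derivative := by
    intro j
    rw [d1 j]; simp; ring
  have d3 : ∀ j, ω.derivative.derivative.derivative = 3 * (g j).derivative.derivative +
      (Polynomial.X - Polynomial.C (z j)) * (g j).derivative.derivative.derivative := by
    intro j
    rw [d2 j]; simp; ring
  have o0 : ∀ x : ℝ, (1 - x ^ 2) * ω.derivative.derivative.eval x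
      + ((β - α) - (α + β + 2) * x) * ω.derivative.eval x + lam * ω.eval x = 0 := by
    intro x
    have := congrArg (Polynomial.eval x) hode
    simpa [jacL_eval] using this
  have o1 : ∀ x : ℝ, (1 - x ^ 2) * ω.derivative.derivative.derivative.eval x
      - 2 * x * ω.derivative.derivative.eval x
      + ((β - α) - (α + β + 2) * x) * ω.derivative.derivative.eval x
      - (α + β + 2) * ω.derivative.eval x + lam * ω.derivative.eval x = 0 := by
    intro x
    have := congrArg (fun p => (Polynomial.derivative p).eval x) hode
    simp [jacL] at this
    linarith
  have ob : ∀ i, 0 < 1 - z i ∧ 0 < 1 + z i := fun i =>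
    ⟨by linarith [(hzmem i).2], by linarith [(hzmem i).1]⟩
  rw [Polynomial.eval_add, jacL_eval, Polynomial.eval_mul, Polynomial.eval_C]
  split_ifs with hij
  · subst hij
    obtain ⟨p1, p2⟩ := prod_derivs_s13 (Finset.univ.erase i) z (z i) (fun l hl h =>
      (Finset.ne_of_mem_erase hl) (hz h).symm)
    rw [← hg] at p1 p2
    have hg0 : (g i).eval (z i) ≠ 0 := by
      rw [hg, Polynomial.eval_prod, Finset.prod_ne_zero_iff]
      intro l hl
      simpa [sub_ne_zero] using fun h => (Finset.ne_of_mem_erase hl) (hz h).symm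
    have q0 := o0 (z i)
    have q1 := o1 (z i)
    rw [d3 i, d2 i, d1 i] at q1
    rw [d2 i, d1 i, hfac i] at q0
    simp only [Polynomial.eval_add, Polynomial.eval_mul, Polynomial.eval_sub, Polynomial.eval_X,
      Polynomial.eval_C, Polynomial.eval_ofNat, sub_self, zero_mul, add_zero, p1, p2,
      mul_zero] at q0 q1
    rw [p1, p2]
    have hσ : (∑ l ∈ Finset.univ.erase i, (1 - z i ^ 2) / (z i - z l) ^ 2) =
        (1 - z i ^ 2) * ∑ l ∈ Finset.univ.erase i, 1 / (z i - z l) ^ 2 := by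
      rw [Finset.mul_sum]
      exact Finset.sum_congr rfl (fun l _ => by ring)
    rw [hσ]
    generalize ∑ l ∈ Finset.univ.erase i, 1 / (z i - z l) ^ 2 = B at *
    generalize ∑ l ∈ Finset.univ.erase i, 1 / (z i - z l) = A at *
    generalize (g i).eval (z i) = G at *
    obtain ⟨b1, b2⟩ := ob i
    generalize z i = x at *
    have r0 : 2 * (1 - x ^ 2) * A + (β - α - (α + β + 2) * x) = 0 := by
      apply mul_left_cancel₀ hg0; linarith
    have r1 : 3 * (1 - x ^ 2) * (A ^ 2 - B) - 4 * x * A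
        + (β - α - (α + β + 2) * x) * (2 * A) - (α + β + 2) + lam = 0 := by
      apply mul_left_cancel₀ hg0; linarith
    have r2 : (α + 1) * ((1 + x) / (1 - x)) + (β + 1) * ((1 - x) / (1 + x)) =
        α + β + 2 + 4 * x * A := by
      have hA : A = -(β - α - (α + β + 2) * x) / (2 * ((1 - x) * (1 + x))) := by
        field_simp; linarith
      rw [hA]; field_simp; ring
    linear_combination G * r1 - G * A * r0 - G * r2
  · have hne : z i - z j ≠ 0 := sub_ne_zero.2 (fun h => hij (hz h))
    have hz0 : (g j).eval (z i) = 0 := by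
      rw [hg, Polynomial.eval_prod]
      exact Finset.prod_eq_zero (i := i) (by simp [hij]) (by simp)
    have q0 := o0 (z i)
    have e1 : (g i).eval (z i) = (z i - z j) * (g j).derivative.eval (z i) := by
      have h1 := congrArg (Polynomial.eval (z i)) (d1 i)
      rw [d1 j] at h1
      simp [hz0] at h1
      exact h1.symm
    rw [d2 j, d1 j, hfac j] at q0
    simp [hz0] at q0
    rw [hz0, e1]
    field_simp
    linear_combination q0

lemma jac_lin (α β lam : ℝ) {ι : Type*} (s : Finset ι) (c : ι → ℝ) (g : ι → Polynomial ℝ) (x : ℝ) :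
    (jacL α β (∑ j ∈ s, Polynomial.C (c j) * g j) +
      Polynomial.C lam * (∑ j ∈ s, Polynomial.C (c j) * g j)).eval x =
    ∑ j ∈ s, c j * (jacL α β (g j) + Polynomial.C lam * g j).eval x := by
  simp only [Polynomial.eval_add, jacL_eval, Polynomial.derivative_sum, Polynomial.derivative_C_mul,
    Polynomial.eval_finset_sum, Polynomial.eval_mul, Polynomial.eval_C, Finset.mul_sum,
    ← Finset.sum_add_distrib]
  exact Finset.sum_congr rfl (fun j _ => by ring)

theorem trig_jacobi_matrix_det
    (N : ℕ) (hN : 1 ≤ N) (α β : ℝ) (hα : -1 < α) (hβ : -1 < β)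
    (P : Polynomial ℝ) (hPdeg : P.natDegree = N)
    (hPorth : ∀ Q : Polynomial ℝ, Q.natDegree < N →
      ∫ x in Set.Ioo (-1 : ℝ) 1,
        P.eval x * Q.eval x * (1 - x) ^ α * (1 + x) ^ β = 0)
    (hPone : P.eval 1 = (∏ j ∈ Finset.range N, (α + 1 + j)) / (N.factorial : ℝ))
    (z : Fin N → ℝ) (hzmono : StrictMono z)
    (hzroot : ∀ i, P.eval (z i) = 0)
    (hzmem : ∀ i, z i ∈ Set.Ioo (-1 : ℝ) 1)
    (S : Matrix (Fin N) (Fin N) ℝ)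
    (hS : S = Matrix.of fun i j =>
      if i = j then
        4 * (∑ l ∈ Finset.univ.erase j, (1 - z j ^ 2) / (z j - z l) ^ 2) +
          2 * (α + 1) * ((1 + z j) / (1 - z j)) + 2 * (β + 1) * ((1 - z j) / (1 + z j))
      else -4 * Real.sqrt ((1 - z i ^ 2) * (1 - z j ^ 2)) / (z i - z j) ^ 2)
    : S.det = 2 ^ N * (N.factorial : ℝ) * ∏ j ∈ Finset.range N, ((N : ℝ) + α + β + 1 + j) := by
  have hz := hzmono.injective
  set lam : ℝ := (N : ℝ) * (N + α + β + 1) with hlam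
  have hodeP := jac_ode N hN α β hα hβ P hPdeg hPorth
  have hnod := jac_nodal N hN P hPdeg z hz hzroot
  obtain ⟨ω, hω⟩ : ∃ ω, ω = ∏ l, (Polynomial.X - Polynomial.C (z l)) := ⟨_, rfl⟩
  obtain ⟨g, hg⟩ : ∃ g : Fin N → Polynomial ℝ, ∀ j, g j =
    ∏ l ∈ Finset.univ.erase j, (Polynomial.X - Polynomial.C (z l)) := ⟨_, fun _ => rfl⟩
  have hP0 : P ≠ 0 := by rintro rfl; simp at hPdeg; omega
  have hode : jacL α β ω + Polynomial.C lam * ω = 0 := by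
    have hc : Polynomial.C P.leadingCoeff ≠ 0 := by simpa using hP0
    rw [← hω] at hnod
    apply mul_left_cancel₀ hc
    rw [mul_zero]
    generalize P.leadingCoeff = c at *
    rw [← hodeP, hnod, ← hlam]
    simp only [jacL, Polynomial.derivative_C_mul]
    ring
  have hent := jac_entries N α β lam z hz hzmem ω hω hode g hg
  have hg0 : ∀ i, (g i).eval (z i) ≠ 0 := by
    intro i
    rw [hg, Polynomial.eval_prod, Finset.prod_ne_zero_iff]
    intro l hl
    simpa [sub_ne_zero] using fun h => (Finset.ne_of_mem_erase hl) (hz h).symm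
  have hgij : ∀ i j, i ≠ j → (g j).eval (z i) = 0 := by
    intro i j hij
    rw [hg, Polynomial.eval_prod]
    exact Finset.prod_eq_zero (i := i) (by simp [hij]) (by simp)
  have hgdeg : ∀ j, (g j).degree < N := by
    intro j
    have : (g j).natDegree = N - 1 := by
      rw [hg, Polynomial.natDegree_prod_of_monic _ _ (fun l _ => Polynomial.monic_X_sub_C _)]
      simp
    refine Polynomial.degree_le_natDegree.trans_lt ?_
    rw [this]
    exact_mod_cast (by omega : N - 1 < N)
  -- interpolation
  have hinterp : ∀ q : Polynomial ℝ, q.degree < N →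
      q = ∑ j, Polynomial.C (q.eval (z j) / (g j).eval (z j)) * g j := by
    intro q hq
    refine Polynomial.eq_of_degrees_lt_of_eval_index_eq (s := Finset.univ) (v := z)
      hz.injOn (by simpa using hq) ?_ ?_
    · refine (Polynomial.degree_sum_le _ _).trans_lt ?_
      rw [Finset.sup_lt_iff (by simp)]
      intro j _
      rw [← Polynomial.smul_eq_C_mul]
      refine (Polynomial.degree_smul_le _ _).trans_lt ?_
      simpa using hgdeg j
    · intro i _
      rw [Polynomial.eval_finset_sum, Finset.sum_eq_single i]
      · simp [hg0 i]
      · intro j _ hj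
        simp [hgij i j (Ne.symm hj)]
      · simp
  let M : Matrix (Fin N) (Fin N) ℝ := Matrix.of fun i j =>
    (jacL α β (g j) + Polynomial.C lam * g j).eval (z i) / (g j).eval (z j)
  let U : Matrix (Fin N) (Fin N) ℝ := Matrix.of fun m n =>
    (jacL α β (Polynomial.X ^ (n : ℕ)) + Polynomial.C lam * Polynomial.X ^ (n : ℕ)).coeff m
  have hcoef : ∀ m n : ℕ, n ≤ m →
      (jacL α β (Polynomial.X ^ n) + Polynomial.C lam * Polynomial.X ^ n).coeff m =
      if m = n then ((N : ℝ) - n) * (N + α + β + 1 + n) else 0 := by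
    intro m n hmn
    rw [Polynomial.coeff_add, jacL_coeff, Polynomial.coeff_C_mul, Polynomial.coeff_X_pow,
      Polynomial.coeff_X_pow, Polynomial.coeff_X_pow, if_neg (by omega), if_neg (by omega)]
    split_ifs with h
    · subst h; rw [hlam]; ring
    · ring
  have hMV : M * Matrix.vandermonde z = Matrix.vandermonde z * U := by
    ext i n
    rw [Matrix.mul_apply, Matrix.mul_apply]
    have hq : (Polynomial.X ^ (n : ℕ) : Polynomial ℝ).degree < N := by
      rw [Polynomial.degree_X_pow]; exact_mod_cast n.2
    have h1 := hinterp _ hq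
    have h2 := jac_lin α β lam Finset.univ
      (fun j => (Polynomial.X ^ (n : ℕ) : Polynomial ℝ).eval (z j) / (g j).eval (z j)) g (z i)
    rw [← h1] at h2
    have h3 : (jacL α β (Polynomial.X ^ (n : ℕ)) + Polynomial.C lam * Polynomial.X ^ (n : ℕ)).natDegree
        < N := by
      refine lt_of_le_of_lt (b := (n : ℕ)) ?_ n.2
      rw [Polynomial.natDegree_le_iff_coeff_eq_zero]
      intro m hm
      rw [hcoef m n (by omega), if_neg (by omega)]
    rw [Polynomial.eval_eq_sum_range' h3, Finset.sum_range] at h2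
    simp only [M, U, Matrix.of_apply, Matrix.vandermonde_apply]
    calc _ = _ := ?_
      _ = _ := h2.symm
      _ = _ := ?_
    · refine Finset.sum_congr rfl fun j _ => ?_
      simp; ring
    · exact Finset.sum_congr rfl fun j _ => mul_comm _ _
  have hVdet : (Matrix.vandermonde z).det ≠ 0 := Matrix.det_vandermonde_ne_zero_iff.2 hz
  have hMdet : M.det = U.det := by
    have := congrArg Matrix.det hMV
    rw [Matrix.det_mul, Matrix.det_mul, mul_comm] at this
    exact mul_left_cancel₀ hVdet this
  have hUdet : U.det = ∏ n : Fin N, (((N : ℝ) - (n : ℕ)) * (N + α + β + 1 + (n : ℕ))) := by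
    rw [Matrix.det_of_upperTriangular]
    · refine Finset.prod_congr rfl fun n _ => ?_
      simp only [U, Matrix.of_apply]
      rw [hcoef n n le_rfl, if_pos rfl]
    · intro m n hmn
      have hmn' : (n : ℕ) < m := hmn
      simp only [U, Matrix.of_apply]
      rw [hcoef m n (by omega), if_neg (by omega)]
  have hpos : ∀ i, 0 < 1 - z i ^ 2 := by
    intro i
    nlinarith [(hzmem i).1, (hzmem i).2]
  let d : Fin N → ℝ := fun i => (g i).eval (z i) * Real.sqrt (1 - z i ^ 2)
  have hd : ∀ i, d i ≠ 0 := fun i =>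
    mul_ne_zero (hg0 i) (Real.sqrt_pos.2 (hpos i)).ne'
  have hSM : Matrix.diagonal d * S = ((2 : ℝ) • M) * Matrix.diagonal d := by
    ext i j
    rw [Matrix.diagonal_mul, Matrix.mul_diagonal, hS]
    simp only [M, d, Matrix.of_apply, Matrix.smul_apply, smul_eq_mul, hent]
    have hgi := hg0 i
    have hgj := hg0 j
    split_ifs with hij
    · subst hij
      field_simp
      ring
    · have hne : z i - z j ≠ 0 := sub_ne_zero.2 (fun h => hij (hz h))
      rw [Real.sqrt_mul (hpos i).le]
      have hsq := Real.mul_self_sqrt (hpos i).le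
      conv_rhs => rw [← hsq]
      field_simp
      ring
  have hSdet : S.det = 2 ^ N * M.det := by
    have := congrArg Matrix.det hSM
    rw [Matrix.det_mul, Matrix.det_mul, Matrix.det_smul, Matrix.det_diagonal, mul_comm] at this
    have hpd : ∏ i, d i ≠ 0 := Finset.prod_ne_zero_iff.2 fun i _ => hd i
    have := mul_right_cancel₀ hpd this
    simpa using this
  have hfact : ∏ n ∈ Finset.range N, ((N : ℝ) - n) = (N.factorial : ℝ) := by
    rw [← Finset.prod_range_reflect, ← Finset.prod_range_add_one_eq_factorial]
    push_cast
    refine Finset.prod_congr rfl fun n hn => ?_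
    rw [Finset.mem_range] at hn
    rw [Nat.cast_sub (by omega), Nat.cast_sub (by omega)]
    push_cast; ring
  rw [hSdet, hMdet, hUdet, ← Finset.prod_range
    (fun n : ℕ => ((N : ℝ) - n) * (N + α + β + 1 + n)), Finset.prod_mul_distrib, hfact, mul_assoc]
end
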